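/- arXiv:1710.00298 — 2 statements merged into one kernel-verified Lean document; each statement's English description precedes it below -/
import Mathlib

section
/- If G is a graph on n vertices with no isolated vertices in which every edge belongs to a triangle, then γ_g(G) ≤ (5/9)·n. -/
attribute [local instance 10] Classical.propDecidable

variable {V : Type}

private lemma card_sdiff_union_lt [Fintype V] {S T : Finset V} (h : ¬ T ⊆ S) :
    (Finset.univ \ (S ∪ T)).card < (Finset.univ \ S).card := by
  classical
  obtain ⟨u, huT, huS⟩ := Finset.not_subset.mp h
  apply Finset.card_lt_card
  rw [Finset.ssubset_def]
  constructor
  · exact Finset.sdiff_subset_sdiff (Finset.Subset.refl _) Finset.subset_union_left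
  · intro hc
    have hu : u ∈ Finset.univ \ S := by simp [huS]
    have := hc hu
    simp [huT] at this

/-- The closed neighborhood of a vertex in a simple graph, as a finset. -/
noncomputable def gClosedNbhd [Fintype V] (G : SimpleGraph V) (v : V) : Finset V :=
  Finset.univ.filter (fun u => u = v ∨ G.Adj u v)

/-- Value of the domination game on a simple graph: `S` is the set of vertices already
dominated, `dom = true` iff Dominator is the next player to move.  A legal move is a vertex
dominating at least one new vertex; Dominator minimizes, Staller maximizes the total
number of moves, and both play optimally. -/
noncomputable def gDomGameVal [Fintype V] (G : SimpleGraph V) (dom : Bool) (S : Finset V) :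
    ℕ :=
  if h : (Finset.univ.filter fun v => ¬ gClosedNbhd G v ⊆ S).Nonempty then
    1 + (if dom then
        (Finset.univ.filter fun v => ¬ gClosedNbhd G v ⊆ S).attach.inf'
          (Finset.attach_nonempty_iff.mpr h)
          (fun v => gDomGameVal G false (S ∪ gClosedNbhd G v.1))
      else
        (Finset.univ.filter fun v => ¬ gClosedNbhd G v ⊆ S).attach.sup'
          (Finset.attach_nonempty_iff.mpr h)
          (fun v => gDomGameVal G true (S ∪ gClosedNbhd G v.1)))
  else 0
termination_by (Finset.univ \ S).card
decreasing_by
  · exact card_sdiff_union_lt (Finset.mem_filter.mp v.2).2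
  · exact card_sdiff_union_lt (Finset.mem_filter.mp v.2).2

/-- The game domination number of a simple graph (Dominator starts). -/
noncomputable def gGammaGame [Fintype V] (G : SimpleGraph V) : ℕ :=
  gDomGameVal G true ∅

/-- The Staller-start game domination number of a simple graph. -/
noncomputable def gGammaGame' [Fintype V] (G : SimpleGraph V) : ℕ :=
  gDomGameVal G false ∅

section helpers
variable [Fintype V] (G : SimpleGraph V)

noncomputable def wn (S : Finset V) (v : V) : Finset V :=
  Finset.univ.filter (fun u => u ∉ S ∧ G.Adj v u)

def mk (S : Finset V) (q : V) : Prop := ∃ r ∈ S, G.Adj q r ∧ (wn G S r).card = 1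

def fn (S : Finset V) (q : V) : Prop := ∀ r, G.Adj q r → (wn G S r).card = 1

noncomputable def hb (S : Finset V) (q : V) : ℤ :=
  if mk G S q then
    (if (wn G S q).card = 0 then (if fn G S q then 12 else 5)
     else if (wn G S q).card = 1 then 4 else 3)
  else 0

noncomputable def ph (S : Finset V) (v : V) : ℤ :=
  if v ∈ S then (if 2 ≤ (wn G S v).card then 7 else 0) else 15 + hb G S v

noncomputable def Ph (S : Finset V) : ℤ := ∑ v, ph G S v

noncomputable def np (S A : Finset V) (q : V) : ℕ :=
  (S.filter (fun r => G.Adj q r ∧ 2 ≤ (wn G S r).card ∧ (wn G (S ∪ A) r).card = 1)).card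

noncomputable def dl (S A : Finset V) (q : V) : ℤ :=
  hb G S q - hb G (S ∪ A) q + 7 * (np G S A q : ℤ)

variable {G}

lemma mem_wn {S : Finset V} {v u : V} : u ∈ wn G S v ↔ u ∉ S ∧ G.Adj v u := by
  simp [wn]

lemma wn_union (S A : Finset V) (v : V) : wn G (S ∪ A) v = wn G S v \ A := by
  ext u; simp only [mem_wn, Finset.mem_union, Finset.mem_sdiff]; tauto

lemma wn_card_le (S A : Finset V) (v : V) : (wn G (S ∪ A) v).card ≤ (wn G S v).card := by
  rw [wn_union]; exact Finset.card_le_card Finset.sdiff_subset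

lemma hb_nonneg (S : Finset V) (q : V) : 0 ≤ hb G S q := by
  unfold hb; split_ifs <;> norm_num

lemma hb_le (S : Finset V) (q : V) : hb G S q ≤ 12 := by
  unfold hb; split_ifs <;> norm_num

lemma hb_le4 {S : Finset V} {q : V} (h : 1 ≤ (wn G S q).card) : hb G S q ≤ 4 := by
  unfold hb; split_ifs <;> first | omega | norm_num

lemma hb_le3 {S : Finset V} {q : V} (h : 2 ≤ (wn G S q).card) : hb G S q ≤ 3 := by
  unfold hb; split_ifs <;> first | omega | norm_num

lemma hb_le5 {S : Finset V} {q : V} (h : ¬ fn G S q) : hb G S q ≤ 5 := by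
  unfold hb; split_ifs <;> first | contradiction | norm_num

lemma hb_nmk {S : Finset V} {q : V} (h : ¬ mk G S q) : hb G S q = 0 := by
  unfold hb; rw [if_neg h]

lemma hb_mk {S : Finset V} {q : V} (h : mk G S q) : 3 ≤ hb G S q := by
  unfold hb; rw [if_pos h]; split_ifs <;> norm_num

lemma hb_mk1 {S : Finset V} {q : V} (h : mk G S q) (h1 : (wn G S q).card = 1) :
    hb G S q = 4 := by
  unfold hb; rw [if_pos h, if_neg (by omega), if_pos h1]

lemma hb_mk0 {S : Finset V} {q : V} (h : mk G S q) (h1 : (wn G S q).card = 0) :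
    5 ≤ hb G S q := by
  unfold hb; rw [if_pos h, if_pos h1]; split_ifs <;> norm_num

lemma ph_nonneg (S : Finset V) (q : V) : 0 ≤ ph G S q := by
  have := hb_nonneg (G := G) S q
  unfold ph; split_ifs <;> omega

lemma Ph_nonneg (S : Finset V) : 0 ≤ Ph G S :=
  Finset.sum_nonneg fun v _ => ph_nonneg S v

lemma mk_mono {S A : Finset V} {q : V} (hq : q ∉ S ∪ A) (h : mk G S q) :
    mk G (S ∪ A) q := by
  obtain ⟨r, hr, ha, hc⟩ := h
  refine ⟨r, Finset.mem_union_left _ hr, ha, ?_⟩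
  have h1 := wn_card_le (G := G) S A r
  have h2 : q ∈ wn G (S ∪ A) r := mem_wn.2 ⟨hq, ha.symm⟩
  have := Finset.card_pos.2 ⟨q, h2⟩
  omega

lemma np_pos {S A : Finset V} {q r : V} (hr : r ∈ S) (ha : G.Adj q r)
    (h2 : 2 ≤ (wn G S r).card) (h1 : (wn G (S ∪ A) r).card = 1) : 1 ≤ np G S A q := by
  apply Finset.card_pos.2
  exact ⟨r, by simp [hr, ha, h2, h1]⟩

lemma wn_pos {S : Finset V} {q r : V} (hq : q ∉ S) (ha : G.Adj q r) : 1 ≤ (wn G S r).card :=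
  Finset.card_pos.2 ⟨q, mem_wn.2 ⟨hq, ha.symm⟩⟩

/-- main accounting inequality -/
lemma gain_ge {S A : Finset V} (hA : Disjoint A S) (R Q : Finset V)
    (hR : ∀ r ∈ R, r ∈ S ∧ 2 ≤ (wn G S r).card ∧ (wn G (S ∪ A) r).card = 0)
    (hQ : ∀ q ∈ Q, q ∉ S ∪ A)
    (hQ' : ∀ q, q ∉ S ∪ A → q ∉ Q → 0 ≤ dl G S A q) :
    (∑ a ∈ A, (15 + hb G S a - (if 2 ≤ (wn G (S ∪ A) a).card then 7 else 0))) + 7 * (R.card : ℤ)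
      + ∑ q ∈ Q, dl G S A q ≤ Ph G S - Ph G (S ∪ A) := by
  classical
  have hsplit : ∀ f : V → ℤ, ∑ v, f v = ∑ v ∈ S, f v + ∑ v ∈ A, f v
      + ∑ v ∈ (S ∪ A)ᶜ, f v := by
    intro f
    rw [← Finset.sum_union hA.symm, Finset.sum_add_sum_compl]
  have e : Ph G S - Ph G (S ∪ A) = ∑ v, (ph G S v - ph G (S ∪ A) v) := by
    unfold Ph; rw [Finset.sum_sub_distrib]
  rw [e, hsplit]
  have eA : ∑ v ∈ A, (ph G S v - ph G (S ∪ A) v) =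
      ∑ a ∈ A, (15 + hb G S a - (if 2 ≤ (wn G (S ∪ A) a).card then 7 else 0)) := by
    apply Finset.sum_congr rfl
    intro a ha
    have : a ∉ S := Finset.disjoint_left.1 hA ha
    simp [ph, this, ha]
  set D1 := S.filter (fun r => 2 ≤ (wn G S r).card ∧ (wn G (S ∪ A) r).card = 1) with hD1
  have eS : 7 * (R.card : ℤ) + 7 * (D1.card : ℤ) ≤ ∑ v ∈ S, (ph G S v - ph G (S ∪ A) v) := by
    have hdis : Disjoint R D1 := by
      rw [Finset.disjoint_left]; intro r h1 h2
      have := (hR r h1).2.2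
      simp [hD1] at h2; omega
    have hsub : R ∪ D1 ⊆ S := by
      intro r hr
      rcases Finset.mem_union.1 hr with h | h
      · exact (hR r h).1
      · exact (Finset.mem_filter.1 h).1
    have h1 : ∑ v ∈ R ∪ D1, (7 : ℤ) ≤ ∑ v ∈ R ∪ D1, (ph G S v - ph G (S ∪ A) v) := by
      apply Finset.sum_le_sum
      intro r hr
      rcases Finset.mem_union.1 hr with h | h
      · obtain ⟨a1, a2, a3⟩ := hR r h
        simp [ph, a1, a2, a3]
      · obtain ⟨a1, a2, a3⟩ := Finset.mem_filter.1 h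
        simp [ph, a1, a2, a3]
    have h2 : ∑ v ∈ R ∪ D1, (ph G S v - ph G (S ∪ A) v) ≤
        ∑ v ∈ S, (ph G S v - ph G (S ∪ A) v) := by
      apply Finset.sum_le_sum_of_subset_of_nonneg hsub
      intro r hr _
      have := wn_card_le (G := G) S A r
      simp only [ph, hr, Finset.mem_union, true_or, if_true]
      split_ifs <;> omega
    rw [Finset.sum_const, Finset.card_union_of_disjoint hdis] at h1
    simp only [nsmul_eq_mul, Nat.cast_add] at h1
    linarith
  have eD : D1.card = ∑ q ∈ (S ∪ A)ᶜ, np G S A q := by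
    have hb1 : (D1 : Finset V) = ((S ∪ A)ᶜ).biUnion (fun q => S.filter (fun r => G.Adj q r ∧
        2 ≤ (wn G S r).card ∧ (wn G (S ∪ A) r).card = 1)) := by
      ext r
      simp only [hD1, Finset.mem_filter, Finset.mem_biUnion, Finset.mem_compl]
      constructor
      · rintro ⟨h1, h2, h3⟩
        obtain ⟨q, hq⟩ := Finset.card_pos.1 (by omega : 0 < (wn G (S ∪ A) r).card)
        rw [mem_wn] at hq
        exact ⟨q, hq.1, h1, hq.2.symm, h2, h3⟩
      · rintro ⟨q, _, h1, _, h2, h3⟩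
        exact ⟨h1, h2, h3⟩
    rw [hb1, Finset.card_biUnion]
    · rfl
    · intro x hx y hy hxy
      change Disjoint _ _
      rw [Finset.disjoint_left]
      intro r h1 h2
      simp only [Finset.mem_filter] at h1 h2
      obtain ⟨z, hz⟩ := Finset.card_eq_one.1 h1.2.2.2
      have hx' : x ∈ wn G (S ∪ A) r := mem_wn.2 ⟨by simpa using hx, h1.2.1.symm⟩
      have hy' : y ∈ wn G (S ∪ A) r := mem_wn.2 ⟨by simpa using hy, h2.2.1.symm⟩
      rw [hz, Finset.mem_singleton] at hx' hy'
      exact hxy (hx'.trans hy'.symm)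
  have eC : ∑ v ∈ (S ∪ A)ᶜ, (ph G S v - ph G (S ∪ A) v) + 7 * (D1.card : ℤ) =
      ∑ q ∈ (S ∪ A)ᶜ, dl G S A q := by
    rw [eD]; push_cast; rw [Finset.mul_sum, ← Finset.sum_add_distrib]
    apply Finset.sum_congr rfl
    intro q hq
    rw [Finset.mem_compl] at hq
    have : q ∉ S := fun h => hq (Finset.mem_union_left _ h)
    unfold ph dl
    rw [if_neg this, if_neg hq]; ring
  have eQ : ∑ q ∈ Q, dl G S A q ≤ ∑ q ∈ (S ∪ A)ᶜ, dl G S A q := by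
    apply Finset.sum_le_sum_of_subset_of_nonneg
    · intro q hq; rw [Finset.mem_compl]; exact hQ q hq
    · intro q hq h; exact hQ' q (Finset.mem_compl.1 hq) h
  linarith

def H3 (G : SimpleGraph V) (S : Finset V) : Prop :=
  (∀ v, v ∉ S → (wn G S v).card ≤ 2) ∧ (∀ v, v ∈ S → (wn G S v).card ≤ 3)

def TR (G : SimpleGraph V) : Prop := ∀ u v : V, G.Adj u v → ∃ w : V, G.Adj u w ∧ G.Adj v w

lemma H3_union {S : Finset V} (h : H3 G S) (A : Finset V) : H3 G (S ∪ A) := by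
  constructor
  · intro v hv
    rw [Finset.mem_union, not_or] at hv
    exact (wn_card_le S A v).trans (h.1 v hv.1)
  · intro v hv
    have h1 := wn_card_le (G := G) S A v
    by_cases hs : v ∈ S
    · exact h1.trans (h.2 v hs)
    · have := h.1 v hs; omega

lemma hb_mono_new {S A : Finset V} {q : V} (hm : mk G (S ∪ A) q) (hn : ¬ mk G S q) :
    1 ≤ np G S A q ∨ ∃ a ∈ A, G.Adj q a ∧ (wn G (S ∪ A) a).card = 1 := by
  obtain ⟨r, hr, ha, hc⟩ := hm
  by_cases hrA : r ∈ A
  · exact Or.inr ⟨r, hrA, ha, hc⟩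
  · have hrS : r ∈ S := by
      rcases Finset.mem_union.1 hr with h | h
      · exact h
      · exact absurd h hrA
    left
    have h1 := wn_card_le (G := G) S A r
    have h2 : (wn G S r).card ≠ 1 := fun h => hn ⟨r, hrS, ha, h⟩
    exact np_pos hrS ha (by omega) hc

lemma dl4 {S A : Finset V} {q : V} (h : 1 ≤ (wn G (S ∪ A) q).card) :
    hb G S q - 4 + 7 * (np G S A q : ℤ) ≤ dl G S A q := by
  have := hb_le4 h; unfold dl; linarith

lemma dl3 {S A : Finset V} {q : V} (h : 2 ≤ (wn G (S ∪ A) q).card) :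
    hb G S q - 3 + 7 * (np G S A q : ℤ) ≤ dl G S A q := by
  have := hb_le3 h; unfold dl; linarith

lemma dl12 (S A : Finset V) (q : V) :
    hb G S q - 12 + 7 * (np G S A q : ℤ) ≤ dl G S A q := by
  have := hb_le (G := G) (S ∪ A) q; unfold dl; linarith

lemma dl5' {S A : Finset V} {q : V} (h : ¬ fn G (S ∪ A) q) :
    hb G S q - 5 + 7 * (np G S A q : ℤ) ≤ dl G S A q := by
  have := hb_le5 h; unfold dl; linarith

lemma dl5 {S A : Finset V} {q w : V} (hw : w ∈ S) (ha : G.Adj q w)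
    (h2 : 2 ≤ (wn G S w).card) : hb G S q - 5 ≤ dl G S A q := by
  by_cases h : fn G (S ∪ A) q
  · have h1 := np_pos (A := A) hw ha h2 (h w ha)
    have := dl12 (G := G) S A q
    have h1' : (1 : ℤ) ≤ np G S A q := by exact_mod_cast h1
    linarith
  · have := dl5' h
    have h1' : (0 : ℤ) ≤ np G S A q := by positivity
    linarith

lemma deg2 (ht : TR G) {q r : V} (h : G.Adj q r) : ∃ w, w ≠ r ∧ G.Adj q w := by
  obtain ⟨w, h1, h2⟩ := ht q r h
  exact ⟨w, h2.ne', h1⟩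

lemma exists_blue (ht : TR G) {S : Finset V} {q a : V} (hqa : G.Adj q a)
    (hq : q ∉ S) (ha : a ∉ S)
    (hno : ∀ w, w ∉ S → G.Adj q w → G.Adj a w → False) :
    ∃ w ∈ S, G.Adj q w ∧ G.Adj a w ∧ 2 ≤ (wn G S w).card := by
  obtain ⟨w, h1, h2⟩ := ht q a hqa
  have hw : w ∈ S := by
    by_contra h; exact hno w h h1 h2
  refine ⟨w, hw, h1, h2, ?_⟩
  have : ({q, a} : Finset V) ⊆ wn G S w := by
    intro x hx
    rcases Finset.mem_insert.1 hx with rfl | hx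
    · exact mem_wn.2 ⟨hq, h1.symm⟩
    · rw [Finset.mem_singleton] at hx; subst hx; exact mem_wn.2 ⟨ha, h2.symm⟩
  have h3 := Finset.card_le_card this
  rwa [Finset.card_pair hqa.ne] at h3

lemma wn_same {S A : Finset V} {q : V} (h : ∀ a ∈ A, ¬ G.Adj q a) :
    wn G (S ∪ A) q = wn G S q := by
  rw [wn_union]
  ext x; simp only [Finset.mem_sdiff, mem_wn]
  constructor
  · exact fun h => h.1
  · exact fun h' => ⟨h', fun hx => h x hx h'.2⟩

lemma np_zero_hb {S A : Finset V} {q : V} (hq : q ∉ S ∪ A) (h : ∀ a ∈ A, ¬ G.Adj q a)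
    (h0 : np G S A q = 0) : hb G (S ∪ A) q = hb G S q := by
  have e := wn_same (S := S) h
  have em : mk G (S ∪ A) q ↔ mk G S q := by
    constructor
    · intro hm
      by_contra hn
      rcases hb_mono_new hm hn with h1 | ⟨a, h1, h2, _⟩
      · omega
      · exact h a h1 h2
    · exact mk_mono hq
  have hqS : q ∉ S := fun hh => hq (Finset.mem_union_left _ hh)
  have ef : (wn G S q).card = 0 → (fn G (S ∪ A) q ↔ fn G S q) := by
    intro hc
    have hin : ∀ r, G.Adj q r → r ∈ S := by
      intro r hr
      by_contra hrS
      have := Finset.card_pos.2 ⟨r, mem_wn.2 ⟨hrS, hr⟩⟩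
      omega
    constructor
    · intro hf r hr
      by_contra hne
      have h1 := wn_pos hqS hr
      have := np_pos (A := A) (hin r hr) hr (by omega) (hf r hr)
      omega
    · intro hf r hr
      have h1 := wn_pos hq hr
      have h2 := wn_card_le (G := G) S A r
      have h3 := hf r hr
      omega
  unfold hb
  by_cases hm : mk G S q
  · rw [if_pos hm, if_pos (em.2 hm), e]
    by_cases hc : (wn G S q).card = 0
    · rw [if_pos hc, if_pos hc]
      by_cases hf : fn G S q
      · rw [if_pos hf, if_pos ((ef hc).2 hf)]
      · rw [if_neg hf, if_neg (fun h => hf ((ef hc).1 h))]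
    · rw [if_neg hc, if_neg hc]
  · rw [if_neg hm, if_neg (fun h => hm (em.1 h))]

/-- unmarked isolated white with something becoming pendant -/
lemma dl_g1_iso (ht : TR G) {S A : Finset V} {q : V} (hq : q ∉ S ∪ A)
    (hc : (wn G S q).card = 0)
    (hm : ¬ mk G S q) (hn : 1 ≤ np G S A q) : 2 ≤ dl G S A q := by
  have hqS : q ∉ S := fun hh => hq (Finset.mem_union_left _ hh)
  have hin : ∀ r, G.Adj q r → r ∈ S := by
    intro r hr
    by_contra hrS
    have := Finset.card_pos.2 ⟨r, mem_wn.2 ⟨hrS, hr⟩⟩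
    omega
  have h0 := hb_nonneg (G := G) S q
  by_cases hf : fn G (S ∪ A) q
  · have h2 : 2 ≤ np G S A q := by
      obtain ⟨r, hr⟩ := Finset.card_pos.1 hn
      simp only [Finset.mem_filter] at hr
      obtain ⟨w, hw1, hw2⟩ := deg2 ht hr.2.1
      have hp := wn_pos hqS hw2
      have hne : (wn G S w).card ≠ 1 := fun h => hm ⟨w, hin w hw2, hw2, h⟩
      have hsub : ({r, w} : Finset V) ⊆ S.filter (fun r => G.Adj q r ∧ 2 ≤ (wn G S r).card ∧
          (wn G (S ∪ A) r).card = 1) := by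
        intro x hx
        rcases Finset.mem_insert.1 hx with rfl | hx
        · simp [hr]
        · rw [Finset.mem_singleton] at hx; subst hx
          simp only [Finset.mem_filter]
          exact ⟨hin x hw2, hw2, by omega, hf x hw2⟩
      have := Finset.card_le_card hsub
      rwa [Finset.card_pair hw1.symm] at this
    have := dl12 (G := G) S A q
    have : (2 : ℤ) ≤ np G S A q := by exact_mod_cast h2
    linarith
  · have := dl5' hf
    have : (1 : ℤ) ≤ np G S A q := by exact_mod_cast hn
    linarith

lemma dl_g1 (ht : TR G) {S A : Finset V} {q : V} (hq : q ∉ S ∪ A)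
    (h : ∀ a ∈ A, ¬ G.Adj q a) : 0 ≤ dl G S A q := by
  by_cases h0 : np G S A q = 0
  · unfold dl; rw [np_zero_hb hq h h0, h0]; simp
  · have hn : 1 ≤ np G S A q := by omega
    have hn' : (1 : ℤ) ≤ np G S A q := by exact_mod_cast hn
    have hs := hb_nonneg (G := G) S q
    by_cases hc : (wn G S q).card = 0
    · by_cases hm : mk G S q
      · have := hb_mk0 hm hc
        have := dl12 (G := G) S A q
        linarith
      · have := dl_g1_iso ht hq hc hm hn
        linarith
    · have := dl4 (S := S) (A := A) (q := q) (by rw [wn_same h]; omega)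
      linarith

lemma dl_g5 (ht : TR G) {S A : Finset V} {q : V} (hq : q ∉ S ∪ A)
    (h : ∀ a ∈ A, G.Adj q a → 2 ≤ (wn G (S ∪ A) a).card) (hm : ¬ mk G S q) :
    0 ≤ dl G S A q := by
  by_cases hA : ∀ a ∈ A, ¬ G.Adj q a
  · exact dl_g1 ht hq hA
  push Not at hA
  obtain ⟨a, ha, hqa⟩ := hA
  have hs := hb_nonneg (G := G) S q
  by_cases hm' : mk G (S ∪ A) q
  · rcases hb_mono_new hm' hm with h1 | ⟨b, hb1, hb2, hb3⟩
    · have hf : ¬ fn G (S ∪ A) q := by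
        intro hf
        have h2 := hf a hqa
        have h3 := h a ha hqa
        omega
      have := dl5' hf
      have : (1 : ℤ) ≤ np G S A q := by exact_mod_cast h1
      linarith
    · have := h b hb1 hb2
      omega
  · unfold dl
    rw [hb_nmk hm']
    have : (0 : ℤ) ≤ np G S A q := by positivity
    linarith

lemma dl_g5m {S A : Finset V} {q a : V} (ha : a ∈ A) (hqa : G.Adj q a) (haS : a ∉ S)
    (h2 : 2 ≤ (wn G (S ∪ A) a).card) (hm : mk G S q)
    (hle : (wn G S q).card ≤ (wn G (S ∪ A) q).card + 1) (hle2 : (wn G S q).card ≤ 2) :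
    -1 ≤ dl G S A q := by
  have h1 : 1 ≤ (wn G S q).card := Finset.card_pos.2 ⟨a, mem_wn.2 ⟨haS, hqa⟩⟩
  have hn : (0 : ℤ) ≤ np G S A q := by positivity
  by_cases hc : (wn G S q).card = 1
  · have := hb_mk1 hm hc
    have hf : ¬ fn G (S ∪ A) q := by
      intro hf
      have h2 := hf a hqa
      omega
    have := dl5' hf
    linarith
  · have := hb_mk hm
    have := dl4 (G := G) (S := S) (A := A) (q := q) (by omega)
    linarith

lemma gain_single (ht : TR G) {S : Finset V} {u : V} (hu : u ∉ S) :
    15 + hb G S u - (if 2 ≤ (wn G S u).card then 7 else 0) + ∑ q ∈ wn G S u, dl G S {u} q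
      ≤ Ph G S - Ph G (S ∪ {u}) := by
  have h := gain_ge (G := G) (S := S) (A := {u}) (by simpa using hu) ∅ (wn G S u)
    (by simp) (by
      intro q hq
      rw [mem_wn] at hq
      simp only [Finset.mem_union, Finset.mem_singleton, not_or]
      exact ⟨hq.1, hq.2.ne'⟩) (by
      intro q hq hq'
      apply dl_g1 ht hq
      intro a ha hqa
      rw [Finset.mem_singleton] at ha; subst ha
      apply hq'
      rw [mem_wn]
      exact ⟨fun h => hq (Finset.mem_union_left _ h), hqa.symm⟩)
  have e : wn G (S ∪ {u}) u = wn G S u := wn_same (by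
    intro a ha; rw [Finset.mem_singleton] at ha; subst ha; exact G.irrefl)
  rw [Finset.sum_singleton, e] at h
  simp only [Finset.card_empty] at h
  push_cast at h
  linarith

lemma single_drop (S : Finset V) (u q : V) :
    (wn G S q).card ≤ (wn G (S ∪ {u}) q).card + 1 := by
  rw [wn_union]
  have := Finset.card_le_card_sdiff_add_card (t := {u}) (s := wn G S q)
  simpa using this

lemma single0 (ht : TR G) {S : Finset V} {u : V} (hu : u ∉ S) (h0 : (wn G S u).card = 0) :
    15 + hb G S u ≤ Ph G S - Ph G (S ∪ {u}) := by
  have h := gain_single ht hu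
  rw [Finset.card_eq_zero.1 h0] at h
  simpa using h

/-- neighbour of degree-1 vertex -/
lemma dl_nb1 (ht : TR G) {S A : Finset V} {q a : V} (hq : q ∉ S) (ha : a ∉ S) (hqa : G.Adj q a)
    (h1 : (wn G S q).card = 1) : hb G S q - 5 ≤ dl G S A q := by
  obtain ⟨w, hw, h2, h3, h4⟩ := exists_blue ht hqa hq ha (by
    intro w hw h2 h3
    obtain ⟨z, hz⟩ := Finset.card_eq_one.1 h1
    have e1 : w ∈ wn G S q := mem_wn.2 ⟨hw, h2⟩
    have e2 : a ∈ wn G S q := mem_wn.2 ⟨ha, hqa⟩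
    rw [hz, Finset.mem_singleton] at e1 e2
    subst e1; subst e2; exact G.irrefl h3)
  exact dl5 hw h2 h4

lemma single1 (ht : TR G) {S : Finset V} {u : V} (hu : u ∉ S)
    (h1 : (wn G S u).card = 1) :
    10 + hb G S u ≤ Ph G S - Ph G (S ∪ {u}) := by
  have h := gain_single ht hu
  obtain ⟨q, hq⟩ := Finset.card_eq_one.1 h1
  rw [h1, hq, Finset.sum_singleton, if_neg (by norm_num)] at h
  have hqm : q ∈ wn G S u := by rw [hq]; simp
  rw [mem_wn] at hqm
  have hb0 := hb_nonneg (G := G) S q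
  have hu' := wn_pos hu hqm.2
  have : -5 ≤ dl G S {u} q := by
    by_cases hc : (wn G S q).card = 1
    · have := dl_nb1 (A := {u}) ht hqm.1 hu hqm.2.symm hc
      linarith
    · have := dl4 (G := G) (S := S) (A := {u}) (q := q) (by
        have := single_drop (G := G) S u q
        omega)
      have hn : (0 : ℤ) ≤ np G S {u} q := by positivity
      linarith
  linarith

lemma single2 (ht : TR G) {S : Finset V} (h3 : H3 G S) {u : V} (hu : u ∉ S)
    (h1 : (wn G S u).card = 2) :
    8 + hb G S u - (((wn G S u).filter (fun q => mk G S q)).card : ℤ)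
      ≤ Ph G S - Ph G (S ∪ {u}) := by
  have h := gain_single ht hu
  have e : wn G (S ∪ {u}) u = wn G S u := wn_same (by
    intro a ha; rw [Finset.mem_singleton] at ha; subst ha; exact G.irrefl)
  have hs : -(((wn G S u).filter (fun q => mk G S q)).card : ℤ) ≤
      ∑ q ∈ wn G S u, dl G S {u} q := by
    have : -(((wn G S u).filter (fun q => mk G S q)).card : ℤ) =
        ∑ q ∈ wn G S u, (if mk G S q then (-1 : ℤ) else 0) := by
      rw [Finset.sum_ite, Finset.sum_const, Finset.sum_const]; simp
    rw [this]
    apply Finset.sum_le_sum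
    intro q hq
    rw [mem_wn] at hq
    have hq' : q ∉ S ∪ {u} := by
      simp only [Finset.mem_union, Finset.mem_singleton, not_or]
      exact ⟨hq.1, hq.2.ne'⟩
    split_ifs with hm
    · exact dl_g5m (a := u) (by simp) hq.2.symm hu (by rw [e, h1]) hm (single_drop S u q)
        (h3.1 q hq.1)
    · apply dl_g5 ht hq' _ hm
      intro a ha _
      rw [Finset.mem_singleton] at ha; subst ha
      rw [e, h1]
  rw [h1, if_pos le_rfl] at h
  linarith

lemma single6 (ht : TR G) {S : Finset V} (h3 : H3 G S) {u : V} (hu : u ∉ S) :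
    6 ≤ Ph G S - Ph G (S ∪ {u}) ∧ (mk G S u → 9 ≤ Ph G S - Ph G (S ∪ {u})) := by
  have h := h3.1 u hu
  have h0 := hb_nonneg (G := G) S u
  have hk := hb_mk (G := G) (S := S) (q := u)
  interval_cases hc : (wn G S u).card
  · have := single0 ht hu hc
    exact ⟨by linarith, fun _ => by linarith⟩
  · have := single1 ht hu hc
    exact ⟨by linarith, fun _ => by linarith⟩
  · have := single2 ht h3 hu hc
    have h4 := Finset.card_filter_le (wn G S u) (fun q => mk G S q)
    have h5 : (((wn G S u).filter (fun q => mk G S q)).card : ℤ) ≤ 2 := by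
      rw [hc] at h4; exact_mod_cast h4
    exact ⟨by linarith, fun h => by linarith [hk h]⟩

lemma Ph_mono (ht : TR G) {S : Finset V} (h3 : H3 G S) (B : Finset V) :
    Ph G (S ∪ B) ≤ Ph G S := by
  induction B using Finset.induction_on with
  | empty => simp
  | insert a B ha ih =>
    have e : S ∪ insert a B = (S ∪ B) ∪ {a} := by
      ext x; simp only [Finset.mem_union, Finset.mem_insert, Finset.mem_singleton]; tauto
    rw [e]
    by_cases h : a ∈ S ∪ B
    · rw [Finset.union_eq_left.2 (by simpa using h)]; exact ih
    · have := (single6 ht (H3_union h3 B) h).1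
      linarith

lemma union_split {S A : Finset V} {a : V} (ha : a ∈ A) :
    S ∪ A = (S ∪ A.erase a) ∪ {a} := by
  ext x; simp only [Finset.mem_union, Finset.mem_erase, Finset.mem_singleton]
  by_cases h : x = a
  · subst h; simp [ha]
  · simp [h]

lemma union_split' {S A : Finset V} {a : V} (ha : a ∈ A) :
    S ∪ A = (S ∪ {a}) ∪ A.erase a := by
  ext x; simp only [Finset.mem_union, Finset.mem_erase, Finset.mem_singleton]
  by_cases h : x = a
  · subst h; simp [ha]
  · simp [h]

lemma gain_first (ht : TR G) {S A : Finset V} (h3 : H3 G S) {a : V} (ha : a ∈ A) :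
    Ph G S - Ph G (S ∪ {a}) ≤ Ph G S - Ph G (S ∪ A) := by
  rw [union_split' (S := S) ha]
  have := Ph_mono ht (H3_union h3 {a}) (A.erase a)
  linarith

/-- the newly dominated set for a move -/
noncomputable def nw (G : SimpleGraph V) (S : Finset V) (v : V) : Finset V :=
  gClosedNbhd G v \ S

lemma mem_nw {S : Finset V} {v x : V} : x ∈ nw G S v ↔ x ∉ S ∧ (x = v ∨ G.Adj v x) := by
  unfold nw gClosedNbhd
  simp only [Finset.mem_sdiff, Finset.mem_filter, Finset.mem_univ, true_and]
  rw [G.adj_comm]; tauto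

lemma nw_blue {S : Finset V} {v : V} (hv : v ∈ S) : nw G S v = wn G S v := by
  ext x; rw [mem_nw, mem_wn]
  constructor
  · rintro ⟨h1, rfl | h2⟩
    · exact absurd hv h1
    · exact ⟨h1, h2⟩
  · rintro ⟨h1, h2⟩; exact ⟨h1, Or.inr h2⟩

lemma nw_white {S : Finset V} {v : V} (hv : v ∉ S) : nw G S v = insert v (wn G S v) := by
  ext x; rw [mem_nw, Finset.mem_insert, mem_wn]
  constructor
  · rintro ⟨h1, rfl | h2⟩
    · left; rfl
    · right; exact ⟨h1, h2⟩
  · rintro (rfl | ⟨h1, h2⟩)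
    · exact ⟨hv, Or.inl rfl⟩
    · exact ⟨h1, Or.inr h2⟩

lemma wn_self_notin {S : Finset V} {v : V} : v ∉ wn G S v := by
  rw [mem_wn]; exact fun h => G.irrefl h.2

/-- white move: the last vertex is isolated -/
lemma last_white (ht : TR G) {S : Finset V} {v : V} (hv : v ∉ S) :
    15 ≤ Ph G (S ∪ wn G S v) - Ph G (S ∪ nw G S v) := by
  have e : S ∪ nw G S v = (S ∪ wn G S v) ∪ {v} := by
    rw [nw_white hv]
    ext x; simp only [Finset.mem_union, Finset.mem_insert, Finset.mem_singleton]; tauto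
  rw [e]
  have h0 : (wn G (S ∪ wn G S v) v).card = 0 := by
    rw [wn_union, Finset.sdiff_self]; simp
  have := single0 ht (by
    rw [Finset.mem_union, not_or]; exact ⟨hv, wn_self_notin⟩) h0
  have := hb_nonneg (G := G) (S ∪ wn G S v) v
  linarith

lemma last_blue {S : Finset V} {v a : V} (hv : v ∈ S) (ha : a ∈ wn G S v) :
    mk G (S ∪ (wn G S v).erase a) a := by
  refine ⟨v, Finset.mem_union_left _ hv, (mem_wn.1 ha).2.symm, ?_⟩
  rw [wn_union]
  have : wn G S v \ (wn G S v).erase a = {a} := by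
    ext x; simp only [Finset.mem_sdiff, Finset.mem_erase, Finset.mem_singleton]
    constructor
    · rintro ⟨h1, h2⟩; by_contra h; exact h2 ⟨h, h1⟩
    · rintro rfl; exact ⟨ha, fun h => h.1 rfl⟩
  rw [this]; simp

lemma S_lemma (ht : TR G) {S : Finset V} (h3 : H3 G S) {v : V} (hv : (nw G S v).Nonempty) :
    15 ≤ Ph G S - Ph G (S ∪ nw G S v) ∨ ∃ u, nw G S v = {u} ∧ u ∉ S ∧ mk G S u ∧
      (((wn G S u).card = 1 ∧ 14 ≤ Ph G S - Ph G (S ∪ nw G S v)) ∨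
       ((wn G S u).card = 2 ∧ 11 - (((wn G S u).filter (fun q => mk G S q)).card : ℤ)
          ≤ Ph G S - Ph G (S ∪ nw G S v))) := by
  by_cases hvS : v ∈ S
  · obtain ⟨u, hu⟩ := hv
    by_cases hc : (nw G S v).card = 1
    · obtain ⟨z, hz⟩ := Finset.card_eq_one.1 hc
      rw [hz, Finset.mem_singleton] at hu; subst hu
      have hum : u ∈ nw G S v := by rw [hz]; simp
      rw [nw_blue hvS, mem_wn] at hum
      have hmk : mk G S u := ⟨v, hvS, hum.2.symm, by rw [← nw_blue hvS]; exact hc⟩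
      have hk := hb_mk hmk
      have h := h3.1 u hum.1
      rw [hz]
      interval_cases hc' : (wn G S u).card
      · left
        have := single0 ht hum.1 hc'
        linarith
      · right
        have := single1 ht hum.1 hc'
        have := hb_mk1 hmk hc'
        exact ⟨u, rfl, hum.1, hmk, Or.inl ⟨hc', by linarith⟩⟩
      · right
        have := single2 ht h3 hum.1 hc'
        exact ⟨u, rfl, hum.1, hmk, Or.inr ⟨hc', by linarith⟩⟩
    · left
      have hc2 : 1 < (nw G S v).card := by
        have := Finset.card_pos.2 ⟨u, hu⟩; omega
      rw [nw_blue hvS] at hu hc2 ⊢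
      obtain ⟨b, hb1, hb2⟩ := Finset.exists_mem_ne hc2 u
      have e := union_split (S := S) hu
      have h1 : 6 ≤ Ph G S - Ph G (S ∪ (wn G S v).erase u) := by
        have g1 := gain_first ht h3 (a := b) (A := (wn G S v).erase u)
          (by rw [Finset.mem_erase]; exact ⟨hb2, hb1⟩)
        have g2 := (single6 ht h3 (mem_wn.1 hb1).1).1
        linarith
      have h2 := (single6 ht (H3_union h3 ((wn G S v).erase u)) (u := u) (by
        rw [Finset.mem_union, Finset.mem_erase]
        rintro (h | h)
        · exact (mem_wn.1 hu).1 h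
        · exact h.1 rfl)).2 (last_blue hvS hu)
      rw [e]; linarith
  · left
    have h1 := last_white ht hvS
    have h2 := Ph_mono ht h3 (wn G S v)
    linarith

def Win (G : SimpleGraph V) (S : Finset V) : Prop :=
  ∃ v, (nw G S v).Nonempty ∧ 27 ≤ Ph G S - Ph G (S ∪ nw G S v) ∧
    ∀ v2, (nw G (S ∪ nw G S v) v2).Nonempty →
      54 ≤ Ph G S - Ph G (S ∪ nw G S v ∪ nw G (S ∪ nw G S v) v2)

lemma win_of (ht : TR G) {S : Finset V} (h3 : H3 G S) {v : V} (hv : (nw G S v).Nonempty)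
    (h40 : 40 ≤ Ph G S - Ph G (S ∪ nw G S v))
    (h2 : ∀ u, u ∉ S ∪ nw G S v → mk G (S ∪ nw G S v) u → (wn G (S ∪ nw G S v) u).card = 2 →
      43 + (((wn G (S ∪ nw G S v) u).filter (fun q => mk G (S ∪ nw G S v) q)).card : ℤ) ≤
        Ph G S - Ph G (S ∪ nw G S v)) : Win G S := by
  refine ⟨v, hv, by linarith, fun v2 hv2 => ?_⟩
  rcases S_lemma ht (H3_union h3 (nw G S v)) hv2 with h | ⟨u, hu, huS, hm, h | h⟩
  · linarith
  · linarith [h.2]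
  · have := h2 u huS hm h.1
    linarith [h.2]

lemma win45 (ht : TR G) {S : Finset V} (h3 : H3 G S) {v : V} (hv : (nw G S v).Nonempty)
    (h45 : 45 ≤ Ph G S - Ph G (S ∪ nw G S v)) : Win G S := by
  refine win_of ht h3 hv (by linarith) fun u hu hm hc => ?_
  have h4 := Finset.card_filter_le (wn G (S ∪ nw G S v) u) (fun q => mk G (S ∪ nw G S v) q)
  rw [hc] at h4
  have : ((((wn G (S ∪ nw G S v) u).filter (fun q => mk G (S ∪ nw G S v) q)).card : ℕ) : ℤ) ≤ 2 := by
    exact_mod_cast h4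
  linarith

lemma list_sum_ite (T : Finset V) (L : List (V × ℤ)) :
    ∑ q ∈ T, (L.map (fun p => if q = p.1 then p.2 else 0)).sum =
      (L.map (fun p => if p.1 ∈ T then p.2 else 0)).sum := by
  induction L with
  | nil => simp
  | cons p L ih =>
    simp only [List.map_cons, List.sum_cons]
    rw [Finset.sum_add_distrib, ih, Finset.sum_ite_eq']

/-- weighted accounting -/
lemma gain_w {S A : Finset V} (hA : Disjoint A S)
    (h1 : ∀ a ∈ A, (wn G (S ∪ A) a).card ≤ 1) (R : Finset V)
    (hR : ∀ r ∈ R, r ∈ S ∧ 2 ≤ (wn G S r).card ∧ (wn G (S ∪ A) r).card = 0)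
    (L : List (V × ℤ)) (hL : ∀ p ∈ L, p.1 ∉ S ∪ A ∨ p.2 ≤ 0)
    (U : Finset V) (e : ℤ) (hU : ∀ u ∈ U, u ∉ S ∪ A)
    (hf : ∀ q, q ∉ S ∪ A → (L.map (fun p => if q = p.1 then p.2 else 0)).sum +
      (if q ∈ U then e else 0) ≤ dl G S A q) :
    (∑ a ∈ A, (15 + hb G S a)) + 7 * (R.card : ℤ) + (L.map (fun p => p.2)).sum + e * U.card
      ≤ Ph G S - Ph G (S ∪ A) := by
  have h := gain_ge hA R (S ∪ A)ᶜ hR (by simp) (by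
    intro q h1 h2; exact absurd (Finset.mem_compl.2 h1) h2)
  have ee : ∑ a ∈ A, (15 + hb G S a - (if 2 ≤ (wn G (S ∪ A) a).card then 7 else 0)) =
      ∑ a ∈ A, (15 + hb G S a) := by
    apply Finset.sum_congr rfl
    intro a ha
    have := h1 a ha
    rw [if_neg (by omega)]; ring
  rw [ee] at h
  have h2 : ∑ q ∈ (S ∪ A)ᶜ, ((L.map (fun p => if q = p.1 then p.2 else 0)).sum +
      (if q ∈ U then e else 0)) ≤
      ∑ q ∈ (S ∪ A)ᶜ, dl G S A q :=
    Finset.sum_le_sum fun q hq => hf q (Finset.mem_compl.1 hq)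
  rw [Finset.sum_add_distrib, list_sum_ite] at h2
  have h5 : ∑ q ∈ (S ∪ A)ᶜ, (if q ∈ U then e else 0) = e * U.card := by
    rw [← Finset.sum_filter]
    have : (S ∪ A)ᶜ.filter (fun q => q ∈ U) = U := by
      ext q; rw [Finset.mem_filter, Finset.mem_compl]
      exact ⟨fun h => h.2, fun h => ⟨hU q h, h⟩⟩
    rw [this, Finset.sum_const, nsmul_eq_mul, mul_comm]
  have h4 : (L.map (fun p => p.2)).sum ≤ (L.map (fun p => if p.1 ∈ (S ∪ A)ᶜ then p.2 else 0)).sum := by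
    apply List.sum_le_sum
    intro p hp
    split_ifs with hh
    · exact le_rfl
    · rcases hL p hp with h | h
      · exact absurd (Finset.mem_compl.2 h) hh
      · exact h
  linarith

lemma gain_w3 {S : Finset V} {a b c : V} (hab : a ≠ b) (hac : a ≠ c) (hbc : b ≠ c)
    (ha : a ∉ S) (hb' : b ∉ S) (hc : c ∉ S)
    (ha1 : (wn G (S ∪ {a, b, c}) a).card ≤ 1)
    (hb1 : (wn G (S ∪ {a, b, c}) b).card ≤ 1)
    (hc1 : (wn G (S ∪ {a, b, c}) c).card ≤ 1) (R : Finset V)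
    (hR : ∀ r ∈ R, r ∈ S ∧ 2 ≤ (wn G S r).card ∧ (wn G (S ∪ {a, b, c}) r).card = 0)
    (L : List (V × ℤ)) (hL : ∀ p ∈ L, p.1 ∉ S ∪ {a, b, c} ∨ p.2 ≤ 0)
    (U : Finset V) (e : ℤ) (hU : ∀ u ∈ U, u ∉ S ∪ {a, b, c})
    (hf : ∀ q, q ∉ S ∪ {a, b, c} →
      (L.map (fun p => if q = p.1 then p.2 else 0)).sum +
      (if q ∈ U then e else 0) ≤ dl G S {a, b, c} q) :
    45 + hb G S a + hb G S b + hb G S c + 7 * (R.card : ℤ) + (L.map (fun p => p.2)).sum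
      + e * U.card
      ≤ Ph G S - Ph G (S ∪ {a, b, c}) := by
  have h := gain_w (G := G) (S := S) (A := {a, b, c}) (by
      rw [Finset.disjoint_left]; intro x hx
      simp only [Finset.mem_insert, Finset.mem_singleton] at hx
      rcases hx with rfl | rfl | rfl <;> assumption) (by
      intro x hx
      simp only [Finset.mem_insert, Finset.mem_singleton] at hx
      rcases hx with rfl | rfl | rfl <;> assumption) R hR L hL U e hU hf
  rw [Finset.sum_insert (by simp [hab, hac]), Finset.sum_insert (by simp [hbc]),
    Finset.sum_singleton] at h
  linarith

lemma wd1_of {S A : Finset V} {a b : V} (h : (wn G S a).card ≤ 2) (hb1 : b ∈ A) (hb2 : b ∉ S)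
    (hab : G.Adj a b) : (wn G (S ∪ A) a).card ≤ 1 := by
  rw [wn_union]
  have : wn G S a \ A ⊆ (wn G S a).erase b := by
    intro x hx
    rw [Finset.mem_sdiff] at hx
    rw [Finset.mem_erase]
    exact ⟨fun h => hx.2 (h ▸ hb1), hx.1⟩
  have h1 := Finset.card_le_card this
  rw [Finset.card_erase_of_mem (mem_wn.2 ⟨hb2, hab⟩)] at h1
  omega

lemma wd0_of {S A : Finset V} {a : V} (h : ∀ q, q ∉ S → G.Adj a q → q ∈ A) :
    (wn G (S ∪ A) a).card = 0 := by
  rw [wn_union, Finset.card_eq_zero, Finset.sdiff_eq_empty_iff_subset]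
  intro x hx; rw [mem_wn] at hx; exact h x hx.1 hx.2

lemma wd_pos_of {S A : Finset V} {a q : V} (h : q ∉ S ∪ A) (ha : G.Adj a q) :
    1 ≤ (wn G (S ∪ A) a).card := Finset.card_pos.2 ⟨q, mem_wn.2 ⟨h, ha⟩⟩

/-- other neighbour of a vertex of degree at most two -/
lemma other {S : Finset V} {x y : V} (h : (wn G S x).card ≤ 2) (hy : y ∉ S) (hxy : G.Adj x y) :
    (∀ q, q ∉ S → G.Adj x q → q = y) ∨
    ∃ p, p ≠ y ∧ p ∉ S ∧ G.Adj x p ∧ ∀ q, q ∉ S → G.Adj x q → q = y ∨ q = p := by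
  by_cases h0 : ∀ q, q ∉ S → G.Adj x q → q = y
  · exact Or.inl h0
  · right
    push Not at h0
    obtain ⟨p, hp, hxp, hne⟩ := h0
    refine ⟨p, hne, hp, hxp, fun q hq hxq => ?_⟩
    by_contra hcon
    push Not at hcon
    have hs : ({y, p, q} : Finset V) ⊆ wn G S x := by
      intro t htt
      simp only [Finset.mem_insert, Finset.mem_singleton] at htt
      rcases htt with rfl | rfl | rfl <;> exact mem_wn.2 ⟨by assumption, by assumption⟩
    have := Finset.card_le_card hs
    rw [Finset.card_insert_of_notMem (by simp [hne.symm, hcon.1.symm]),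
      Finset.card_pair (Ne.symm hcon.2)] at this
    omega

/-- the third white of a blue vertex adjacent to x and y -/
lemma third {S : Finset V} (h3 : H3 G S) {w x y : V} (hw : w ∈ S) (hxy : x ≠ y)
    (hx : x ∉ S) (hy : y ∉ S) (hwx : G.Adj x w) (hwy : G.Adj y w) :
    (∀ q, q ∉ S → G.Adj w q → q = x ∨ q = y) ∨
    ∃ s, s ≠ x ∧ s ≠ y ∧ s ∉ S ∧ G.Adj s w ∧
      ∀ q, q ∉ S → G.Adj w q → q = x ∨ q = y ∨ q = s := by
  by_cases h0 : ∀ q, q ∉ S → G.Adj w q → q = x ∨ q = y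
  · exact Or.inl h0
  · right
    push Not at h0
    obtain ⟨p, hp, hxp, hne, hne2⟩ := h0
    refine ⟨p, hne, hne2, hp, hxp.symm, fun q hq hxq => ?_⟩
    by_contra hcon
    push Not at hcon
    have hs : ({x, y, p, q} : Finset V) ⊆ wn G S w := by
      intro t htt
      simp only [Finset.mem_insert, Finset.mem_singleton] at htt
      rcases htt with rfl | rfl | rfl | rfl
      · exact mem_wn.2 ⟨hx, hwx.symm⟩
      · exact mem_wn.2 ⟨hy, hwy.symm⟩
      · exact mem_wn.2 ⟨hp, hxp⟩
      · exact mem_wn.2 ⟨hq, hxq⟩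
    have := Finset.card_le_card hs
    rw [Finset.card_insert_of_notMem (by simp [hxy, hne.symm, hcon.1.symm]),
      Finset.card_insert_of_notMem (by simp [hne2.symm, hcon.2.1.symm]),
      Finset.card_pair (Ne.symm hcon.2.2)] at this
    have := h3.2 w hw
    omega

lemma wn_ge2 {S : Finset V} {w x y : V} (hxy : x ≠ y) (hx : x ∉ S) (hy : y ∉ S)
    (hwx : G.Adj x w) (hwy : G.Adj y w) : 2 ≤ (wn G S w).card := by
  rw [← Finset.card_pair hxy]
  apply Finset.card_le_card
  intro t htt
  simp only [Finset.mem_insert, Finset.mem_singleton] at htt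
  rcases htt with rfl | rfl
  · exact mem_wn.2 ⟨hx, hwx.symm⟩
  · exact mem_wn.2 ⟨hy, hwy.symm⟩

/-- becomes pendant -/
lemma wd_pend {S A : Finset V} {w s : V} (hs : s ∉ S ∪ A) (hws : G.Adj s w)
    (h : ∀ q, q ∉ S → G.Adj w q → q ∈ A ∨ q = s) : (wn G (S ∪ A) w).card = 1 := by
  rw [Finset.card_eq_one]
  refine ⟨s, ?_⟩
  ext q; rw [mem_wn, Finset.mem_singleton]
  constructor
  · rintro ⟨h1, h2⟩
    rw [Finset.mem_union, not_or] at h1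
    rcases h q h1.1 h2 with h3 | h3
    · exact absurd h3 h1.2
    · exact h3
  · rintro rfl; exact ⟨hs, hws.symm⟩

lemma np_two {S A : Finset V} {q r r' : V} (hne : r ≠ r') (hr : r ∈ S) (ha : G.Adj q r)
    (h2 : 2 ≤ (wn G S r).card) (h1 : (wn G (S ∪ A) r).card = 1)
    (hr' : r' ∈ S) (ha' : G.Adj q r')
    (h2' : 2 ≤ (wn G S r').card) (h1' : (wn G (S ∪ A) r').card = 1) : 2 ≤ np G S A q := by
  rw [← Finset.card_pair hne]
  apply Finset.card_le_card
  intro t htt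
  simp only [Finset.mem_insert, Finset.mem_singleton] at htt
  rcases htt with rfl | rfl
  · simp only [Finset.mem_filter]; exact ⟨hr, ha, h2, h1⟩
  · simp only [Finset.mem_filter]; exact ⟨hr', ha', h2', h1'⟩

lemma dl_out (ht : TR G) {S : Finset V} (h3 : H3 G S) {q a b : V} (hq : q ∉ S) (ha : a ∉ S)
    (hb1 : b ∉ S) (hqa : G.Adj q a) (hab : G.Adj a b) (hbq : q ≠ b) (hn : ¬ G.Adj q b)
    (A : Finset V) : hb G S q - 5 ≤ dl G S A q := by
  obtain ⟨w, hw, h2, h4, h5⟩ := exists_blue ht hqa hq ha (by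
    intro w hw h2 h4
    rcases other (h3.1 a ha) hb1 hab with h | ⟨p, hp1, hp2, hp3, hp4⟩
    · exact hbq (h q hq hqa.symm)
    · rcases hp4 q hq hqa.symm with rfl | rfl
      · exact hbq rfl
      · rcases hp4 w hw h4 with rfl | rfl
        · exact hn h2
        · exact G.irrefl h2)
  exact dl5 hw h2 h5

/-- newly marked vertex of degree two away from the move -/
lemma np_new {S A : Finset V} {q : V} (h : ∀ a ∈ A, ¬ G.Adj q a) (h1 : ¬ mk G S q)
    (h2 : mk G (S ∪ A) q) : 1 ≤ np G S A q := by
  rcases hb_mono_new h2 h1 with h3 | ⟨a, ha, hqa, _⟩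
  · exact h3
  · exact absurd hqa (h a ha)

lemma dl_new {S A : Finset V} {q : V} (h : ∀ a ∈ A, ¬ G.Adj q a) (h1 : ¬ mk G S q)
    (h2 : mk G (S ∪ A) q) (h3 : 2 ≤ (wn G (S ∪ A) q).card) : 4 ≤ dl G S A q := by
  have := np_new h h1 h2
  have h4 : (1 : ℤ) ≤ np G S A q := by exact_mod_cast this
  have := dl3 h3
  have := hb_nonneg (G := G) S q
  linarith

lemma gain_out2 (ht : TR G) {S : Finset V} {a b c : V} (hab : a ≠ b) (hac : a ≠ c) (hbc : b ≠ c)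
    (ha : a ∉ S) (hb' : b ∉ S) (hc : c ∉ S)
    (ha1 : (wn G (S ∪ {a, b, c}) a).card ≤ 1)
    (hb1 : (wn G (S ∪ {a, b, c}) b).card ≤ 1)
    (hc1 : (wn G (S ∪ {a, b, c}) c).card ≤ 1) (R : Finset V)
    (hR : ∀ r ∈ R, r ∈ S ∧ 2 ≤ (wn G S r).card ∧ (wn G (S ∪ {a, b, c}) r).card = 0)
    (z p : V) (k : ℤ) (hk : 0 ≤ k) (U : Finset V)
    (hU : ∀ u ∈ U, u ∉ S ∪ {a, b, c} ∧ ¬ mk G S u ∧ mk G (S ∪ {a, b, c}) u ∧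
      2 ≤ (wn G (S ∪ {a, b, c}) u).card ∧ ¬ G.Adj u a ∧ ¬ G.Adj u b ∧ ¬ G.Adj u c)
    (hf : ∀ q, q ∉ S ∪ {a, b, c} → (G.Adj q a ∨ G.Adj q b ∨ G.Adj q c) →
      (q = z ∨ q = p) ∧ -k ≤ dl G S {a, b, c} q) :
    45 + hb G S a + hb G S b + hb G S c + 7 * (R.card : ℤ) - 2 * k + 4 * U.card
      ≤ Ph G S - Ph G (S ∪ {a, b, c}) := by
  have h := gain_w3 hab hac hbc ha hb' hc ha1 hb1 hc1 R hR [(z, -k), (p, -k)] (by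
    intro p hp
    simp only [List.mem_cons, List.not_mem_nil, or_false] at hp
    rcases hp with rfl | rfl <;> right <;> simpa using hk) U 4 (fun u hu => (hU u hu).1) (by
    intro q hq
    simp only [List.map_cons, List.map_nil, List.sum_cons, List.sum_nil, add_zero]
    by_cases ho : G.Adj q a ∨ G.Adj q b ∨ G.Adj q c
    · obtain ⟨h1, h2⟩ := hf q hq ho
      rw [if_neg (c := q ∈ U) (by
        intro hqU
        obtain ⟨_, _, _, _, g1, g2, g3⟩ := hU q hqU
        rcases ho with ho | ho | ho <;> contradiction)]
      rcases h1 with rfl | rfl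
      · rw [if_pos rfl]; split_ifs <;> linarith
      · rw [if_pos rfl]; split_ifs <;> linarith
    · push Not at ho
      have hno : ∀ t ∈ ({a, b, c} : Finset V), ¬ G.Adj q t := by
        intro t htt
        simp only [Finset.mem_insert, Finset.mem_singleton] at htt
        rcases htt with rfl | rfl | rfl
        · exact ho.1
        · exact ho.2.1
        · exact ho.2.2
      have := dl_g1 ht hq hno
      by_cases hqU : q ∈ U
      · obtain ⟨_, g1, g2, g3, _⟩ := hU q hqU
        have := dl_new hno g1 g2 g3
        split_ifs <;> linarith
      · rw [if_neg hqU]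
        split_ifs <;> linarith)
  simp only [List.map_cons, List.map_nil, List.sum_cons, List.sum_nil, add_zero] at h
  linarith

/-- y has exactly the two white neighbours x, z -/
def P3 (G : SimpleGraph V) (S : Finset V) (x y z : V) : Prop :=
  x ∉ S ∧ y ∉ S ∧ z ∉ S ∧ x ≠ z ∧ G.Adj x y ∧ G.Adj y z ∧
    ∀ q, q ∉ S → G.Adj y q → q = x ∨ q = z

lemma P3.symm {S : Finset V} {x y z : V} (h : P3 G S x y z) : P3 G S z y x :=
  ⟨h.2.2.1, h.2.1, h.1, h.2.2.2.1.symm, h.2.2.2.2.2.1.symm, h.2.2.2.2.1.symm,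
    fun q h1 h2 => (h.2.2.2.2.2.2 q h1 h2).symm⟩

lemma exists_P3 {S : Finset V} {y : V} (hy : y ∉ S) (h : (wn G S y).card = 2) :
    ∃ x z, P3 G S x y z := by
  obtain ⟨x, z, hxz, e⟩ := Finset.card_eq_two.1 h
  have hx : x ∈ wn G S y := by rw [e]; simp
  have hz : z ∈ wn G S y := by rw [e]; simp
  rw [mem_wn] at hx hz
  refine ⟨x, z, hx.1, hy, hz.1, hxz, hx.2.symm, hz.2, fun q h1 h2 => ?_⟩
  have : q ∈ wn G S y := mem_wn.2 ⟨h1, h2⟩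
  rw [e] at this; simpa using this

lemma P3.nw_eq {S : Finset V} {x y z : V} (h : P3 G S x y z) : nw G S y = {x, y, z} := by
  obtain ⟨hx, hy, hz, hxz, hxy, hyz, hn⟩ := h
  ext q; rw [mem_nw]
  simp only [Finset.mem_insert, Finset.mem_singleton]
  constructor
  · rintro ⟨h1, rfl | h2⟩
    · simp
    · rcases hn q h1 h2 with h | h <;> simp [h]
  · rintro (rfl | rfl | rfl)
    · exact ⟨hx, Or.inr hxy.symm⟩
    · exact ⟨hy, Or.inl rfl⟩
    · exact ⟨hz, Or.inr hyz⟩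

lemma P3.wd {S : Finset V} {x y z : V} (h : P3 G S x y z) (h3 : H3 G S) :
    (wn G (S ∪ {x, y, z}) x).card ≤ 1 ∧ (wn G (S ∪ {x, y, z}) y).card ≤ 1 ∧
    (wn G (S ∪ {x, y, z}) z).card ≤ 1 := by
  obtain ⟨hx, hy, hz, hxz, hxy, hyz, hn⟩ := h
  exact ⟨wd1_of (h3.1 x hx) (b := y) (by simp) hy hxy,
    wd1_of (h3.1 y hy) (b := x) (by simp) hx hxy.symm,
    wd1_of (h3.1 z hz) (b := y) (by simp) hy hyz.symm⟩

lemma nmem3 {S : Finset V} {q a b c : V} :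
    q ∉ S ∪ {a, b, c} ↔ q ∉ S ∧ q ≠ a ∧ q ≠ b ∧ q ≠ c := by
  simp only [Finset.mem_union, Finset.mem_insert, Finset.mem_singleton, not_or]

/-- triangle component -/
lemma K3_win (ht : TR G) {S : Finset V} (h3 : H3 G S) {x y z : V} (h : P3 G S x y z)
    (hxz' : G.Adj x z) : Win G S := by
  have hw := h.wd h3
  have hnw := h.nw_eq
  obtain ⟨hx, hy, hz, hxz, hxy, hyz, hn⟩ := h
  apply win45 ht h3 (v := y) ⟨y, by rw [hnw]; simp⟩
  rw [hnw]
  have := gain_out2 ht hxy.ne hxz hyz.ne hx hy hz hw.1 hw.2.1 hw.2.2 ∅ (by simp) x x 0 le_rfl ∅ (by simp) (by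
    intro q hq ho
    rw [nmem3] at hq
    exfalso
    rcases ho with ho | ho | ho
    · rcases other (h3.1 x hx) hy hxy with h | ⟨p, _, _, _, hp⟩
      · exact hq.2.2.1 (h q hq.1 ho.symm)
      · rcases hp z hz hxz' with e | e
        · exact hyz.ne e.symm
        · rcases hp q hq.1 ho.symm with e' | e'
          · exact hq.2.2.1 e'
          · exact hq.2.2.2 (e'.trans e.symm)
    · rcases hn q hq.1 ho.symm with e | e
      · exact hq.2.1 e
      · exact hq.2.2.2 e
    · rcases other (h3.1 z hz) hy hyz.symm with h | ⟨p, _, _, _, hp⟩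
      · exact hq.2.2.1 (h q hq.1 ho.symm)
      · rcases hp x hx hxz'.symm with e | e
        · exact hxy.ne e
        · rcases hp q hq.1 ho.symm with e' | e'
          · exact hq.2.2.1 e'
          · exact hq.2.1 (e'.trans e.symm))
  have := hb_nonneg (G := G) S x
  have := hb_nonneg (G := G) S y
  have := hb_nonneg (G := G) S z
  simp only [Finset.card_empty] at *
  push_cast at *
  linarith

lemma P3.blue (ht : TR G) {S : Finset V} {x y z : V} (h : P3 G S x y z) (hxz' : ¬ G.Adj x z) :
    ∃ w ∈ S, G.Adj x w ∧ G.Adj y w := by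
  obtain ⟨hx, hy, hz, hxz, hxy, hyz, hn⟩ := h
  obtain ⟨w, hw, h1, h2, _⟩ := exists_blue ht hxy hx hy (by
    intro w hw h1 h2
    rcases hn w hw h2 with rfl | rfl
    · exact G.irrefl h1
    · exact hxz' h1)
  exact ⟨w, hw, h1, h2⟩

/-- other neighbour with default -/
lemma other' {S : Finset V} {x y : V} (h : (wn G S x).card ≤ 2) (hy : y ∉ S) (hxy : G.Adj x y) :
    ∃ p, ∀ q, q ∉ S → G.Adj x q → q = y ∨ q = p := by
  rcases other h hy hxy with h | ⟨p, _, _, _, hp⟩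
  · exact ⟨y, fun q h1 h2 => Or.inl (h q h1 h2)⟩
  · exact ⟨p, hp⟩

/-- playing the blue vertex w = {x, y, s} -/
lemma play_blue_gain (ht : TR G) {S : Finset V} (h3 : H3 G S) {x y z w s : V} (h : P3 G S x y z)
    (hxz' : ¬ G.Adj x z) (hw : w ∈ S) (hwx : G.Adj x w) (hwy : G.Adj y w)
    (hsx : s ≠ x) (hsy : s ≠ y) (hsz : s ≠ z) (hs : s ∉ S) (hsw : G.Adj s w)
    (hwn : ∀ q, q ∉ S → G.Adj w q → q = x ∨ q = y ∨ q = s)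
    (hc : (wn G S s).card = 0 ∨ G.Adj s x) (k : ℤ) (hk : 0 ≤ k)
    (hcost : ∀ q, q ∉ S ∪ {x, y, s} → (G.Adj q x ∨ G.Adj q y ∨ G.Adj q s) →
      -k ≤ dl G S {x, y, s} q) (U : Finset V)
    (hU : ∀ u ∈ U, u ∉ S ∪ {x, y, s} ∧ ¬ mk G S u ∧ mk G (S ∪ {x, y, s}) u ∧
      2 ≤ (wn G (S ∪ {x, y, s}) u).card ∧ ¬ G.Adj u x ∧ ¬ G.Adj u y ∧ ¬ G.Adj u s) :
    nw G S w = {x, y, s} ∧ 52 + hb G S y - 2 * k + 4 * U.card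
      ≤ Ph G S - Ph G (S ∪ {x, y, s}) := by
  obtain ⟨hx, hy, hz, hxz, hxy, hyz, hn⟩ := h
  have hnw : nw G S w = {x, y, s} := by
    rw [nw_blue hw]; ext q; rw [mem_wn]
    simp only [Finset.mem_insert, Finset.mem_singleton]
    constructor
    · rintro ⟨h1, h2⟩; exact hwn q h1 h2
    · rintro (rfl | rfl | rfl)
      · exact ⟨hx, hwx.symm⟩
      · exact ⟨hy, hwy.symm⟩
      · exact ⟨hs, hsw.symm⟩
  refine ⟨hnw, ?_⟩
  have hsiso : (wn G S s).card = 0 → ∀ q, q ∉ S → ¬ G.Adj s q := by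
    intro h0 q h1 h2
    have := Finset.card_pos.2 ⟨q, mem_wn.2 ⟨h1, h2⟩⟩; omega
  obtain ⟨p, hp⟩ : ∃ p, ∀ q, q ∉ S ∪ {x, y, s} → (G.Adj q x ∨ G.Adj q y ∨ G.Adj q s) →
      (q = z ∨ q = p) := by
    rcases hc with hc | hc
    · obtain ⟨p, hp⟩ := other' (h3.1 x hx) hy hxy
      refine ⟨p, fun q hq ho => ?_⟩
      rw [nmem3] at hq
      rcases ho with ho | ho | ho
      · rcases hp q hq.1 ho.symm with e | e
        · exact absurd e hq.2.2.1
        · exact Or.inr e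
      · rcases hn q hq.1 ho.symm with e | e
        · exact absurd e hq.2.1
        · exact Or.inl e
      · exact absurd ho.symm (hsiso hc q hq.1)
    · obtain ⟨p, hp⟩ := other' (h3.1 s hs) hx hc
      obtain ⟨p', hp'⟩ := other' (h3.1 x hx) hy hxy
      refine ⟨p, fun q hq ho => ?_⟩
      rw [nmem3] at hq
      rcases ho with ho | ho | ho
      · rcases hp' q hq.1 ho.symm with e | e
        · exact absurd e hq.2.2.1
        · rcases hp' s hs hc.symm with e' | e'
          · exact absurd e' hsy
          · exact absurd (e.trans e'.symm) hq.2.2.2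
      · rcases hn q hq.1 ho.symm with e | e
        · exact absurd e hq.2.1
        · exact Or.inl e
      · rcases hp q hq.1 ho.symm with e | e
        · exact absurd e hq.2.1
        · exact Or.inr e
  have := gain_out2 ht hxy.ne hsx.symm hsy.symm hx hy hs
    (wd1_of (h3.1 x hx) (b := y) (by simp) hy hxy)
    (wd1_of (h3.1 y hy) (b := x) (by simp) hx hxy.symm)
    (by
      rcases hc with hc | hc
      · have := wn_card_le (G := G) S {x, y, s} s; omega
      · exact wd1_of (h3.1 s hs) (b := x) (by simp) hx hc)
    {w} (by
      intro r hr
      rw [Finset.mem_singleton] at hr; subst hr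
      refine ⟨hw, wn_ge2 hxy.ne hx hy hwx hwy, wd0_of ?_⟩
      intro q h1 h2
      simpa using hwn q h1 h2) z p k hk U hU (fun q hq ho => ⟨hp q hq ho, hcost q hq ho⟩)
  have := hb_nonneg (G := G) S x
  have := hb_nonneg (G := G) S s
  simp only [Finset.card_singleton] at *
  push_cast at *
  linarith

lemma play_blue (ht : TR G) {S : Finset V} (h3 : H3 G S) {x y z w s : V} (h : P3 G S x y z)
    (hxz' : ¬ G.Adj x z) (hw : w ∈ S) (hwx : G.Adj x w) (hwy : G.Adj y w)
    (hsx : s ≠ x) (hsy : s ≠ y) (hsz : s ≠ z) (hs : s ∉ S) (hsw : G.Adj s w)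
    (hwn : ∀ q, q ∉ S → G.Adj w q → q = x ∨ q = y ∨ q = s)
    (hc : (wn G S s).card = 0 ∨ G.Adj s x) (hm : mk G S y) : Win G S := by
  have hsiso : (wn G S s).card = 0 → ∀ q, q ∉ S → ¬ G.Adj s q := by
    intro h0 q h1 h2
    have := Finset.card_pos.2 ⟨q, mem_wn.2 ⟨h1, h2⟩⟩; omega
  have hg := play_blue_gain ht h3 h hxz' hw hwx hwy hsx hsy hsz hs hsw hwn hc 5 (by norm_num) (by
      obtain ⟨hx, hy, hz, hxz, hxy, hyz, hn⟩ := h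
      intro q hq ho
      have hb0 := hb_nonneg (G := G) S q
      rw [nmem3] at hq
      suffices hb G S q - 5 ≤ dl G S {x, y, s} q by linarith
      by_cases hqx : G.Adj q x
      · refine dl_out ht h3 hq.1 hx hy hqx hxy hq.2.2.1 ?_ _
        intro hh
        rcases hn q hq.1 hh.symm with e | e
        · exact hq.2.1 e
        · subst e; exact hxz' hqx.symm
      rcases ho with ho | ho | ho
      · exact absurd ho hqx
      · exact dl_out ht h3 hq.1 hy hx ho hxy.symm hq.2.1 hqx _
      · rcases hc with hc | hc
        · exact absurd ho.symm (hsiso hc q hq.1)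
        · exact dl_out ht h3 hq.1 hs hx ho hc hq.2.1 hqx _) ∅ (by simp)
  apply win45 ht h3 (v := w) ⟨y, by rw [hg.1]; simp⟩
  rw [hg.1]
  have := hb_mk hm
  have := hg.2
  simp only [Finset.card_empty] at *
  push_cast at *
  linarith

/-- playing the middle vertex -/
lemma play_mid_gain (ht : TR G) {S : Finset V} (h3 : H3 G S) {x y z : V} (h : P3 G S x y z)
    (R : Finset V)
    (hR : ∀ r ∈ R, r ∈ S ∧ 2 ≤ (wn G S r).card ∧ (wn G (S ∪ {x, y, z}) r).card = 0)
    (k : ℤ) (hk : 0 ≤ k)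
    (hcost : ∀ q, q ∉ S ∪ {x, y, z} → (G.Adj q x ∨ G.Adj q z) →
      -k ≤ dl G S {x, y, z} q) (U : Finset V)
    (hU : ∀ u ∈ U, u ∉ S ∪ {x, y, z} ∧ ¬ mk G S u ∧ mk G (S ∪ {x, y, z}) u ∧
      2 ≤ (wn G (S ∪ {x, y, z}) u).card ∧ ¬ G.Adj u x ∧ ¬ G.Adj u y ∧ ¬ G.Adj u z) :
    45 + hb G S x + hb G S y + hb G S z + 7 * (R.card : ℤ) - 2 * k + 4 * U.card
      ≤ Ph G S - Ph G (S ∪ {x, y, z}) := by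
  have hw := h.wd h3
  obtain ⟨hx, hy, hz, hxz, hxy, hyz, hn⟩ := h
  obtain ⟨p, hp⟩ := other' (h3.1 x hx) hy hxy
  obtain ⟨p', hp'⟩ := other' (h3.1 z hz) hy hyz.symm
  refine gain_out2 ht hxy.ne hxz hyz.ne hx hy hz hw.1 hw.2.1 hw.2.2 R hR p p' k hk U hU ?_
  intro q hq ho
  have hq' := hq
  rw [nmem3] at hq
  rcases ho with ho | ho | ho
  · refine ⟨?_, hcost q hq' (Or.inl ho)⟩
    rcases hp q hq.1 ho.symm with e | e
    · exact absurd e hq.2.2.1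
    · exact Or.inl e
  · rcases hn q hq.1 ho.symm with e | e
    · exact absurd e hq.2.1
    · exact absurd e hq.2.2.2
  · refine ⟨?_, hcost q hq' (Or.inr ho)⟩
    rcases hp' q hq.1 ho.symm with e | e
    · exact absurd e hq.2.2.1
    · exact Or.inr e

lemma P3.out (ht : TR G) {S : Finset V} (h3 : H3 G S) {x y z : V} (h : P3 G S x y z)
    (A : Finset V) {q : V} (hq : q ∉ S ∪ {x, y, z}) (ho : G.Adj q x ∨ G.Adj q z) :
    hb G S q - 5 ≤ dl G S A q := by
  obtain ⟨hx, hy, hz, hxz, hxy, hyz, hn⟩ := h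
  rw [nmem3] at hq
  have hqy : ¬ G.Adj q y := by
    intro hh
    rcases hn q hq.1 hh.symm with e | e
    · exact hq.2.1 e
    · exact hq.2.2.2 e
  rcases ho with ho | ho
  · exact dl_out ht h3 hq.1 hx hy ho hxy hq.2.2.1 hqy _
  · exact dl_out ht h3 hq.1 hz hy ho hyz.symm hq.2.2.1 hqy _

/-- a blue vertex inside the triple -/
lemma play_mid (ht : TR G) {S : Finset V} (h3 : H3 G S) {x y z w : V} (h : P3 G S x y z)
    (hw : w ∈ S) (h2 : 2 ≤ (wn G S w).card)
    (hwn : ∀ q, q ∉ S → G.Adj w q → q = x ∨ q = y ∨ q = z) (hm : mk G S y) : Win G S := by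
  have hg := play_mid_gain ht h3 h {w} (by
    intro r hr
    rw [Finset.mem_singleton] at hr; subst hr
    refine ⟨hw, h2, wd0_of ?_⟩
    intro q h1 h2
    simpa using hwn q h1 h2) 5 (by norm_num) (by
      intro q hq ho
      have hb0 := hb_nonneg (G := G) S q
      have := h.out ht h3 {x, y, z} hq ho
      linarith) ∅ (by simp)
  apply win45 ht h3 (v := y) ⟨y, by rw [h.nw_eq]; simp⟩
  rw [h.nw_eq]
  have := hb_mk hm
  have := hb_nonneg (G := G) S x
  have := hb_nonneg (G := G) S z
  simp only [Finset.card_empty, Finset.card_singleton] at *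
  push_cast at *
  linarith

lemma dl_out2 (ht : TR G) {S A : Finset V} (h3 : H3 G S) {q a b w : V} (hq : q ∉ S) (ha : a ∉ S)
    (hb1 : b ∉ S) (hqa : G.Adj q a) (hab : G.Adj a b) (hbq : q ≠ b) (hn : ¬ G.Adj q b)
    (hw : w ∈ S) (hqw : G.Adj q w) (hw2 : 2 ≤ (wn G S w).card)
    (hw1 : (wn G (S ∪ A) w).card = 1) (hwa : ¬ G.Adj a w) : 2 ≤ dl G S A q := by
  obtain ⟨w', hw', h2, h4, h5⟩ := exists_blue ht hqa hq ha (by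
    intro w hw h2 h4
    rcases other (h3.1 a ha) hb1 hab with h | ⟨p, hp1, hp2, hp3, hp4⟩
    · exact hbq (h q hq hqa.symm)
    · rcases hp4 q hq hqa.symm with rfl | rfl
      · exact hbq rfl
      · rcases hp4 w hw h4 with rfl | rfl
        · exact hn h2
        · exact G.irrefl h2)
  have h0 := hb_nonneg (G := G) S q
  by_cases hf : fn G (S ∪ A) q
  · have : 2 ≤ np G S A q := np_two (r := w) (r' := w') (by rintro rfl; exact hwa h4) hw hqw hw2 hw1
      hw' h2 h5 (hf w' h2)
    have : (2 : ℤ) ≤ np G S A q := by exact_mod_cast this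
    have := dl12 (G := G) S A q
    linarith
  · have : 1 ≤ np G S A q := np_pos hw hqw hw2 hw1
    have : (1 : ℤ) ≤ np G S A q := by exact_mod_cast this
    have := dl5' hf
    linarith

def BT (G : SimpleGraph V) (S : Finset V) (w a b s : V) : Prop :=
  w ∈ S ∧ G.Adj a w ∧ G.Adj b w ∧ s ∉ S ∧ G.Adj s w ∧ s ≠ a ∧ s ≠ b ∧
    ∀ q, q ∉ S → G.Adj w q → q = a ∨ q = b ∨ q = s

set_option maxHeartbeats 1600000 in
lemma b3_gain (ht : TR G) {S : Finset V} (h3 : H3 G S) {x y z w1 w2 s1 s2 : V}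
    (h : P3 G S x y z) (b1 : BT G S w1 x y s1) (b2 : BT G S w2 z y s2)
    (hs1z : s1 ≠ z) (hs2x : s2 ≠ x) (hs1x : ¬ G.Adj s1 x) (hs2z : ¬ G.Adj s2 z)
    (hs1 : 1 ≤ (wn G S s1).card) (hs2 : 1 ≤ (wn G S s2).card)
    (p1 pm : V) (k1 k2 : ℤ) (hk1 : 0 ≤ k1) (hk2 : 0 ≤ k2)
    (hcost : ∀ q, q ∉ S ∪ {x, y, z} → (G.Adj q x ∨ G.Adj q z) →
      (q = p1 ∧ (5 ≤ k1 ∨ (4 ≤ k1 ∧ (1 ≤ (wn G (S ∪ {x, y, z}) q).card ∨ mk G S q)) ∨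
        ((q = s1 ∨ q = s2) ∧ 1 ≤ (wn G (S ∪ {x, y, z}) q).card))) ∨
      (q = pm ∧ (5 ≤ k2 ∨ (4 ≤ k2 ∧ (1 ≤ (wn G (S ∪ {x, y, z}) q).card ∨ mk G S q)) ∨
        ((q = s1 ∨ q = s2) ∧ 1 ≤ (wn G (S ∪ {x, y, z}) q).card))))
    (U : Finset V) (e : ℤ) (he0 : 0 ≤ e) (he : e ≤ 1 ∨ (e ≤ 4 ∧ s1 ∉ U ∧ s2 ∉ U))
    (hU : ∀ u ∈ U, u ∉ S ∪ {x, y, z} ∧ ¬ mk G S u ∧ mk G (S ∪ {x, y, z}) u ∧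
      2 ≤ (wn G (S ∪ {x, y, z}) u).card ∧ ¬ G.Adj u x ∧ ¬ G.Adj u y ∧ ¬ G.Adj u z) :
    51 + hb G S x + hb G S y + hb G S z - k1 - k2 + e * U.card
      ≤ Ph G S - Ph G (S ∪ {x, y, z}) := by
  have hwd := h.wd h3
  have hout := fun q => h.out ht h3 {x, y, z} (q := q)
  obtain ⟨hx, hy, hz, hxz, hxy, hyz, hn⟩ := h
  obtain ⟨c1, c2, c3, c4, c5, c6, c7, c8⟩ := b1
  obtain ⟨d1, d2, d3, d4, d5, d6, d7, d8⟩ := b2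
  have w12 : w1 ≠ w2 := by
    rintro rfl
    rcases c8 z hz d2.symm with e | e | e
    · exact hxz e.symm
    · exact hyz.ne e.symm
    · exact hs1z e.symm
  have hs1' : s1 ∉ S ∪ {x, y, z} := nmem3.2 ⟨c4, c6, c7, hs1z⟩
  have hs2' : s2 ∉ S ∪ {x, y, z} := nmem3.2 ⟨d4, hs2x, d7, d6⟩
  have hw1g := wn_ge2 hxy.ne hx hy c2 c3
  have hw2g := wn_ge2 hyz.ne' hz hy d2 d3
  have hw1p : (wn G (S ∪ {x, y, z}) w1).card = 1 := wd_pend hs1' c5 (by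
    intro q h1 h2
    rcases c8 q h1 h2 with e | e | e <;> simp [e])
  have hw2p : (wn G (S ∪ {x, y, z}) w2).card = 1 := wd_pend hs2' d5 (by
    intro q h1 h2
    rcases d8 q h1 h2 with e | e | e <;> simp [e])
  have hw1z : ¬ G.Adj z w1 := by
    intro hh
    rcases c8 z hz hh.symm with e | e | e
    · exact hxz e.symm
    · exact hyz.ne e.symm
    · exact hs1z e.symm
  have hw2x : ¬ G.Adj x w2 := by
    intro hh
    rcases d8 x hx hh.symm with e | e | e
    · exact hxz e
    · exact hxy.ne e
    · exact hs2x e.symm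
  have hng := gain_w3 hxy.ne hxz hyz.ne hx hy hz hwd.1 hwd.2.1 hwd.2.2 ∅ (by simp)
    [(p1, -k1), (pm, -k2), (s1, 3), (s2, 3)] (by
      intro p hp
      simp only [List.mem_cons, List.not_mem_nil, or_false] at hp
      rcases hp with rfl | rfl | rfl | rfl
      · right; simpa using hk1
      · right; simpa using hk2
      · left; exact hs1'
      · left; exact hs2') U e (fun u hu => (hU u hu).1) (by
    intro q hq
    simp only [List.map_cons, List.map_nil, List.sum_cons, List.sum_nil, add_zero]
    have hq' := nmem3.1 hq
    have hqy : ¬ G.Adj q y := by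
      intro hh
      rcases hn q hq'.1 hh.symm with e | e
      · exact hq'.2.1 e
      · exact hq'.2.2.2 e
    have hb0 := hb_nonneg (G := G) S q
    have hnp0 : (0 : ℤ) ≤ np G S {x, y, z} q := by positivity
    by_cases ho : G.Adj q x ∨ G.Adj q z
    · rw [if_neg (c := q ∈ U) (by
        intro hqU
        obtain ⟨_, _, _, _, g1, g2, g3⟩ := hU q hqU
        rcases ho with ho | ho <;> contradiction)]
      have key : (if q = s1 then 3 else 0) + (if q = s2 then 3 else 0) - 5 ≤ dl G S {x, y, z} q ∧
          ((1 ≤ (wn G (S ∪ {x, y, z}) q).card ∨ mk G S q) →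
            (if q = s1 then 3 else 0) + (if q = s2 then 3 else 0) - 4 ≤ dl G S {x, y, z} q) ∧
          (((q = s1 ∨ q = s2) ∧ 1 ≤ (wn G (S ∪ {x, y, z}) q).card) →
            (if q = s1 then 3 else 0) + (if q = s2 then 3 else 0) ≤ dl G S {x, y, z} q) := by
        by_cases e1 : q = s1
        · subst e1
          have hqz : G.Adj q z := by tauto
          have : q ≠ s2 := by rintro rfl; exact hs2z hqz
          have := dl_out2 ht h3 (A := {x, y, z}) hq'.1 hz hy hqz hyz.symm hq'.2.2.1 hqy c1 c5 hw1g hw1p hw1z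
          rw [if_pos rfl, if_neg (by assumption)]
          have h2 : 1 ≤ np G S {x, y, z} q := np_pos c1 c5 hw1g hw1p
          have h2' : (1 : ℤ) ≤ np G S {x, y, z} q := by exact_mod_cast h2
          exact ⟨by linarith, fun _ => by linarith, fun hh => by have := dl4 hh.2; linarith⟩
        · by_cases e2 : q = s2
          · subst e2
            have hqx : G.Adj q x := by tauto
            have := dl_out2 ht h3 (A := {x, y, z}) hq'.1 hx hy hqx hxy hq'.2.2.1 hqy d1 d5 hw2g hw2p hw2x
            rw [if_pos rfl, if_neg (by assumption)]
            have h2 : 1 ≤ np G S {x, y, z} q := np_pos d1 d5 hw2g hw2p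
            have h2' : (1 : ℤ) ≤ np G S {x, y, z} q := by exact_mod_cast h2
            exact ⟨by linarith, fun _ => by linarith, fun hh => by have := dl4 hh.2; linarith⟩
          · rw [if_neg e1, if_neg e2]
            have := hout q hq ho
            refine ⟨by linarith, ?_, fun hh => by tauto⟩
            rintro (hh | hh)
            · have := dl4 hh; linarith
            · have := hb_mk hh; linarith
      rcases hcost q hq ho with ⟨rfl, hh | hh | hh⟩ | ⟨rfl, hh | hh | hh⟩
      · have := key.1
        rw [if_pos (rfl : q = q)]
        split_ifs at * <;> linarith
      · have := key.2.1 hh.2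
        rw [if_pos (rfl : q = q)]
        split_ifs at * <;> linarith
      · have := key.2.2 hh
        rw [if_pos (rfl : q = q)]
        split_ifs at * <;> linarith
      · have := key.1
        rw [if_pos (rfl : q = q)]
        split_ifs at * <;> linarith
      · have := key.2.1 hh.2
        rw [if_pos (rfl : q = q)]
        split_ifs at * <;> linarith
      · have := key.2.2 hh
        rw [if_pos (rfl : q = q)]
        split_ifs at * <;> linarith
    · push Not at ho
      have hno : ∀ t ∈ ({x, y, z} : Finset V), ¬ G.Adj q t := by
        intro t htt
        simp only [Finset.mem_insert, Finset.mem_singleton] at htt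
        rcases htt with rfl | rfl | rfl
        · exact ho.1
        · exact hqy
        · exact ho.2
      have hsame := wn_same (S := S) hno
      have key : (if q = s1 then 3 else 0) + (if q = s2 then 3 else 0) + (if q ∈ U then e else 0)
          ≤ dl G S {x, y, z} q := by
        have hUd : q ∈ U → 7 * (np G S {x, y, z} q : ℤ) - 3 ≤ dl G S {x, y, z} q := by
          intro hqU
          have := dl3 (hU q hqU).2.2.2.1
          linarith
        have hcd : 1 ≤ (wn G S q).card → 7 * (np G S {x, y, z} q : ℤ) - 4 ≤ dl G S {x, y, z} q := by
          intro hc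
          have := dl4 (G := G) (S := S) (A := {x, y, z}) (q := q) (by rw [hsame]; exact hc)
          linarith
        by_cases e1 : q = s1
        · subst e1
          rw [if_pos rfl]
          by_cases e2 : q = s2
          · subst e2
            rw [if_pos rfl]
            have h2 : 2 ≤ np G S {x, y, z} q := np_two w12 c1 c5 hw1g hw1p d1 d5 hw2g hw2p
            have h2' : (2 : ℤ) ≤ np G S {x, y, z} q := by exact_mod_cast h2
            have := hcd hs1
            have he4 : e ≤ 4 := by rcases he with he | he <;> linarith
            split_ifs <;> linarith
          · rw [if_neg e2]
            have h2 : 1 ≤ np G S {x, y, z} q := np_pos c1 c5 hw1g hw1p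
            have h2' : (1 : ℤ) ≤ np G S {x, y, z} q := by exact_mod_cast h2
            have := hcd hs1
            split_ifs with hqU
            · have := hUd hqU
              have he1 : e ≤ 1 := by
                rcases he with he | he
                · exact he
                · exact absurd hqU (by tauto)
              linarith
            · linarith
        · rw [if_neg e1]
          by_cases e2 : q = s2
          · subst e2
            rw [if_pos rfl]
            have h2 : 1 ≤ np G S {x, y, z} q := np_pos d1 d5 hw2g hw2p
            have h2' : (1 : ℤ) ≤ np G S {x, y, z} q := by exact_mod_cast h2
            have := hcd hs2
            split_ifs with hqU
            · have := hUd hqU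
              have he1 : e ≤ 1 := by
                rcases he with he | he
                · exact he
                · exact absurd hqU (by tauto)
              linarith
            · linarith
          · rw [if_neg e2]
            split_ifs with hqU
            · obtain ⟨_, g1, g2, g3, _⟩ := hU q hqU
              have := dl_new hno g1 g2 g3
              have he4 : e ≤ 4 := by rcases he with he | he <;> linarith
              linarith
            · have := dl_g1 ht hq hno
              linarith
      split_ifs at * <;> linarith)
  simp only [List.map_cons, List.map_nil, List.sum_cons, List.sum_nil, add_zero,
    Finset.card_empty] at hng
  push_cast at hng
  linarith

set_option maxHeartbeats 1600000 in
lemma b3_win (ht : TR G) {S : Finset V} (h3 : H3 G S) {x y z w1 w2 s1 s2 : V}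
    (h : P3 G S x y z) (hxz' : ¬ G.Adj x z) (b1 : BT G S w1 x y s1) (b2 : BT G S w2 z y s2)
    (hs1z : s1 ≠ z) (hs2x : s2 ≠ x) (hs1x : ¬ G.Adj s1 x) (hs2z : ¬ G.Adj s2 z)
    (hs1 : 1 ≤ (wn G S s1).card) (hs2 : 1 ≤ (wn G S s2).card) (hm : mk G S y) : Win G S := by
  have hP := h
  have bb := b3_gain ht h3 h b1 b2 hs1z hs2x hs1x hs2z hs1 hs2
  have hx0 := hb_nonneg (G := G) S x
  have hz0 := hb_nonneg (G := G) S z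
  have hy0 := hb_mk hm
  obtain ⟨hx, hy, hz, hxz, hxy, hyz, hn⟩ := h
  -- single outer neighbour
  have one : (∃ p, ∀ q, q ∉ S ∪ {x, y, z} → (G.Adj q x ∨ G.Adj q z) → q = p) → Win G S := by
    rintro ⟨p, hp⟩
    have := bb p p 5 0 (by norm_num) (by norm_num)
      (fun q h1 h2 => Or.inl ⟨hp q h1 h2, Or.inl le_rfl⟩) ∅ 0 le_rfl (by norm_num) (by simp)
    apply win45 ht h3 (v := y) ⟨y, by rw [hP.nw_eq]; simp⟩
    rw [hP.nw_eq]
    simp only [Finset.card_empty] at this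
    push_cast at this
    linarith
  rcases other (h3.1 x hx) hy hxy with h1 | ⟨p1, hp1y, hp1S, hp1x, hp1⟩
  · obtain ⟨p, hp⟩ := other' (h3.1 z hz) hy hyz.symm
    apply one
    refine ⟨p, fun q hq ho => ?_⟩
    rw [nmem3] at hq
    rcases ho with ho | ho
    · exact absurd (h1 q hq.1 ho.symm) hq.2.2.1
    · rcases hp q hq.1 ho.symm with e | e
      · exact absurd e hq.2.2.1
      · exact e
  rcases other (h3.1 z hz) hy hyz.symm with h1 | ⟨pm, hpmy, hpmS, hpmz, hpm⟩
  · apply one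
    refine ⟨p1, fun q hq ho => ?_⟩
    rw [nmem3] at hq
    rcases ho with ho | ho
    · rcases hp1 q hq.1 ho.symm with e | e
      · exact absurd e hq.2.2.1
      · exact e
    · exact absurd (h1 q hq.1 ho.symm) hq.2.2.1
  have hout : ∀ q, q ∉ S ∪ {x, y, z} → (G.Adj q x ∨ G.Adj q z) → q = p1 ∨ q = pm := by
    intro q hq ho
    rw [nmem3] at hq
    rcases ho with ho | ho
    · rcases hp1 q hq.1 ho.symm with e | e
      · exact absurd e hq.2.2.1
      · exact Or.inl e
    · rcases hpm q hq.1 ho.symm with e | e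
      · exact absurd e hq.2.2.1
      · exact Or.inr e
  by_cases hpp : p1 = pm
  · apply one
    refine ⟨p1, fun q hq ho => ?_⟩
    rcases hout q hq ho with e | e
    · exact e
    · exact e.trans hpp.symm
  have play : ∀ k1 k2 : ℤ, k1 + k2 ≤ 9 → 0 ≤ k1 → 0 ≤ k2 →
      (5 ≤ k1 ∨ (4 ≤ k1 ∧ (1 ≤ (wn G (S ∪ {x, y, z}) p1).card ∨ mk G S p1))) →
      (5 ≤ k2 ∨ (4 ≤ k2 ∧ (1 ≤ (wn G (S ∪ {x, y, z}) pm).card ∨ mk G S pm))) → Win G S := by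
    intro k1 k2 hk hk1 hk2 h1 h2
    have := bb p1 pm k1 k2 hk1 hk2 (by
      intro q hq ho
      rcases hout q hq ho with rfl | rfl
      · exact Or.inl ⟨rfl, by tauto⟩
      · exact Or.inr ⟨rfl, by tauto⟩) ∅ 0 le_rfl (by norm_num) (by simp)
    apply win45 ht h3 (v := y) ⟨y, by rw [hP.nw_eq]; simp⟩
    rw [hP.nw_eq]
    simp only [Finset.card_empty] at this
    push_cast at this
    linarith
  by_cases g1 : 1 ≤ (wn G (S ∪ {x, y, z}) p1).card ∨ mk G S p1
  · exact play 4 5 (by norm_num) (by norm_num) (by norm_num) (Or.inr ⟨le_rfl, g1⟩) (Or.inl le_rfl)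
  by_cases g2 : 1 ≤ (wn G (S ∪ {x, y, z}) pm).card ∨ mk G S pm
  · exact play 5 4 (by norm_num) (by norm_num) (by norm_num) (Or.inl le_rfl) (Or.inr ⟨le_rfl, g2⟩)
  -- both outer neighbours are leaves: play x
  push Not at g1 g2
  obtain ⟨c1, c2, c3, c4, c5, c6, c7, c8⟩ := b1
  have hp1xne : p1 ≠ x := hp1x.ne'
  have hp1z : p1 ≠ z := by rintro rfl; exact hxz' hp1x
  have hzp1 : ¬ G.Adj z p1 := by
    intro hh
    rcases hpm p1 hp1S hh with e | e
    · exact hp1y e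
    · exact hpp e
  have hp1only : ∀ q, q ∉ S → G.Adj p1 q → q = x := by
    intro q hq hh
    by_contra hqx
    have : q ∉ S ∪ {x, y, z} := nmem3.2 ⟨hq, hqx, by
      rintro rfl
      rcases hn p1 hp1S hh.symm with e | e
      · exact hp1xne e
      · exact hp1z e, by rintro rfl; exact hzp1 hh.symm⟩
    have := wd_pos_of this hh
    omega
  have hP' : P3 G S p1 x y := ⟨hp1S, hx, hy, hp1y, hp1x.symm, hxy, fun q a b => (hp1 q a b).symm⟩
  have hwd := hP'.wd h3
  have hs1' : s1 ∉ S ∪ {p1, x, y} := nmem3.2 ⟨c4, by rintro rfl; exact hs1x hp1x.symm, c6, c7⟩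
  have hpmx : pm ≠ x := by rintro rfl; exact hxz' hpmz.symm
  have hng := gain_w3 hp1xne hp1y hxy.ne hp1S hx hy hwd.1 hwd.2.1 hwd.2.2 ∅ (by simp)
    [(z, -4), (s1, 3)] (by
      intro p hp
      simp only [List.mem_cons, List.not_mem_nil, or_false] at hp
      rcases hp with rfl | rfl
      · right; norm_num
      · left; exact hs1') ∅ 0 (by simp) (by
    intro q hq
    simp only [List.map_cons, List.map_nil, List.sum_cons, List.sum_nil, add_zero,
      Finset.notMem_empty, if_false]
    have hq' := nmem3.1 hq
    by_cases hqz : q = z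
    · subst hqz
      rw [if_pos rfl, if_neg (Ne.symm hs1z)]
      have := dl4 (G := G) (S := S) (A := {p1, x, y}) (q := q)
        (wd_pos_of (q := pm) (nmem3.2 ⟨hpmS, Ne.symm hpp, hpmx, hpmy⟩) hpmz)
      have hnp0 : (0 : ℤ) ≤ np G S {p1, x, y} q := by positivity
      linarith
    · have hno : ∀ t ∈ ({p1, x, y} : Finset V), ¬ G.Adj q t := by
        intro t htt hh
        simp only [Finset.mem_insert, Finset.mem_singleton] at htt
        rcases htt with rfl | rfl | rfl
        · exact hq'.2.2.1 (hp1only q hq'.1 hh.symm)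
        · rcases hp1 q hq'.1 hh.symm with e | e
          · exact hq'.2.2.2 e
          · exact hq'.2.1 e
        · rcases hn q hq'.1 hh.symm with e | e
          · exact hq'.2.2.1 e
          · exact hqz e
      rw [if_neg hqz]
      split_ifs with e
      · subst e
        have hnp : 1 ≤ np G S {p1, x, y} q := np_pos c1 c5 (wn_ge2 hxy.ne hx hy c2 c3)
          (wd_pend hq c5 (by
            intro r h1 h2
            rcases c8 r h1 h2 with e | e | e <;> simp [e]))
        have hnp' : (1 : ℤ) ≤ np G S {p1, x, y} q := by exact_mod_cast hnp
        have := dl4 (G := G) (S := S) (A := {p1, x, y}) (q := q) (by rw [wn_same hno]; exact hs1)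
        have := hb_nonneg (G := G) S q
        linarith
      · have := dl_g1 ht hq hno
        linarith)
  apply win45 ht h3 (v := x) ⟨x, by rw [hP'.nw_eq]; simp⟩
  rw [hP'.nw_eq]
  simp only [List.map_cons, List.map_nil, List.sum_cons, List.sum_nil, add_zero,
    Finset.card_empty] at hng
  push_cast at hng
  have := hb_nonneg (G := G) S p1
  linarith

/-- Case L1: a marked white vertex of degree two -/
lemma L1 (ht : TR G) {S : Finset V} (h3 : H3 G S) {y : V} (hy : y ∉ S)
    (hm : mk G S y) (hc : (wn G S y).card = 2) : Win G S := by
  obtain ⟨x, z, h⟩ := exists_P3 hy hc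
  by_cases hxz' : G.Adj x z
  · exact K3_win ht h3 h hxz'
  have hzx' : ¬ G.Adj z x := fun h => hxz' h.symm
  obtain ⟨w1, hw1, hw1x, hw1y⟩ := h.blue ht hxz'
  obtain ⟨w2, hw2, hw2z, hw2y⟩ := h.symm.blue ht hzx'
  have hP := h
  obtain ⟨hx, hy, hz, hxz, hxy, hyz, hn⟩ := h
  have g1 := wn_ge2 hxy.ne hx hy hw1x hw1y
  have g2 := wn_ge2 hyz.ne' hz hy hw2z hw2y
  rcases third h3 hw1 hxy.ne hx hy hw1x hw1y with t1 | ⟨s1, a1, a2, a3, a4, a5⟩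
  · exact play_mid ht h3 hP hw1 g1 (fun q h1 h2 => by rcases t1 q h1 h2 with e | e <;> tauto) hm
  rcases third h3 hw2 hyz.ne' hz hy hw2z hw2y with t2 | ⟨s2, b1, b2, b3, b4, b5⟩
  · exact play_mid ht h3 hP hw2 g2 (fun q h1 h2 => by rcases t2 q h1 h2 with e | e <;> tauto) hm
  by_cases e1 : s1 = z
  · subst e1
    exact play_mid ht h3 hP hw1 g1 a5 hm
  by_cases e2 : s2 = x
  · subst e2
    exact play_mid ht h3 hP hw2 g2 (fun q h1 h2 => by rcases b5 q h1 h2 with e | e | e <;> tauto) hm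
  by_cases f1 : (wn G S s1).card = 0 ∨ G.Adj s1 x
  · exact play_blue ht h3 hP hxz' hw1 hw1x hw1y a1 a2 e1 a3 a4 a5 f1 hm
  by_cases f2 : (wn G S s2).card = 0 ∨ G.Adj s2 z
  · exact play_blue ht h3 hP.symm hzx' hw2 hw2z hw2y b1 b2 e2 b3 b4 b5 f2 hm
  push Not at f1 f2
  exact b3_win ht h3 hP hxz' ⟨hw1, hw1x, hw1y, a3, a4, a1, a2, a5⟩
    ⟨hw2, hw2z, hw2y, b3, b4, b1, b2, b5⟩ e1 e2 f1.2 f2.2 (by omega) (by omega) hm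

lemma dl_new1 {S A : Finset V} {q : V} (h : ∀ a ∈ A, ¬ G.Adj q a) (h1 : ¬ mk G S q)
    (h2 : mk G (S ∪ A) q) (h3 : 1 ≤ (wn G (S ∪ A) q).card) : 3 ≤ dl G S A q := by
  have := np_new h h1 h2
  have h4 : (1 : ℤ) ≤ np G S A q := by exact_mod_cast this
  have := dl4 h3
  have := hb_nonneg (G := G) S q
  linarith

/-- newly marked, nonisolated, away from A -/
def NewM (G : SimpleGraph V) (S A : Finset V) (u : V) : Prop :=
  u ∉ S ∪ A ∧ ¬ mk G S u ∧ mk G (S ∪ A) u ∧ 1 ≤ (wn G (S ∪ A) u).card ∧ ∀ a ∈ A, ¬ G.Adj u a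

lemma no_adj3 {q a b c : V} (h : ¬ (G.Adj q a ∨ G.Adj q b ∨ G.Adj q c)) :
    ∀ t ∈ ({a, b, c} : Finset V), ¬ G.Adj q t := by
  push Not at h
  intro t htt
  simp only [Finset.mem_insert, Finset.mem_singleton] at htt
  rcases htt with rfl | rfl | rfl
  · exact h.1
  · exact h.2.1
  · exact h.2.2

/-- newly marked vertices of degree two are new -/
lemma new2 {S A : Finset V} (h3 : H3 G S)
    (nm : ∀ y, y ∉ S → (wn G S y).card = 2 → ¬ mk G S y)
    {u : V} (hu : u ∉ S ∪ A) (hA : ∀ a ∈ A, a ∉ S) (hm : mk G (S ∪ A) u)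
    (hc : (wn G (S ∪ A) u).card = 2) : NewM G S A u ∧ (wn G S u).card = 2 := by
  have huS : u ∉ S := fun h => hu (Finset.mem_union_left _ h)
  have h1 := wn_card_le (G := G) S A u
  have h2 := h3.1 u huS
  have h4 : (wn G S u).card = 2 := by omega
  refine ⟨⟨hu, nm u huS h4, hm, by omega, fun a ha hua => ?_⟩, h4⟩
  have := wd1_of h2 ha (hA a ha) hua
  omega

lemma gain_out1 (ht : TR G) {S : Finset V} {a b c : V} (hab : a ≠ b) (hac : a ≠ c) (hbc : b ≠ c)
    (ha : a ∉ S) (hb' : b ∉ S) (hc : c ∉ S)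
    (ha1 : (wn G (S ∪ {a, b, c}) a).card ≤ 1)
    (hb1 : (wn G (S ∪ {a, b, c}) b).card ≤ 1)
    (hc1 : (wn G (S ∪ {a, b, c}) c).card ≤ 1) (R : Finset V)
    (hR : ∀ r ∈ R, r ∈ S ∧ 2 ≤ (wn G S r).card ∧ (wn G (S ∪ {a, b, c}) r).card = 0)
    (p : V) (k : ℤ) (hk : 0 ≤ k) (U : Finset V)
    (hU : ∀ u ∈ U, NewM G S {a, b, c} u)
    (hf : ∀ q, q ∉ S ∪ {a, b, c} → (G.Adj q a ∨ G.Adj q b ∨ G.Adj q c) →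
      q = p ∧ -k ≤ dl G S {a, b, c} q) :
    45 + hb G S a + hb G S b + hb G S c + 7 * (R.card : ℤ) - k + 3 * U.card
      ≤ Ph G S - Ph G (S ∪ {a, b, c}) := by
  have h := gain_w3 hab hac hbc ha hb' hc ha1 hb1 hc1 R hR [(p, -k)] (by
    intro p hp
    simp only [List.mem_cons, List.not_mem_nil, or_false] at hp
    subst hp; right; simpa using hk) U 3 (fun u hu => (hU u hu).1) (by
    intro q hq
    simp only [List.map_cons, List.map_nil, List.sum_cons, List.sum_nil, add_zero]
    by_cases ho : G.Adj q a ∨ G.Adj q b ∨ G.Adj q c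
    · obtain ⟨h1, h2⟩ := hf q hq ho
      rw [if_neg (c := q ∈ U) (by
        intro hqU
        obtain ⟨_, _, _, _, g1⟩ := hU q hqU
        rcases ho with ho | ho | ho
        · exact g1 a (by simp) ho
        · exact g1 b (by simp) ho
        · exact g1 c (by simp) ho)]
      subst h1
      rw [if_pos rfl]; linarith
    · have hno := no_adj3 ho
      have := dl_g1 ht hq hno
      by_cases hqU : q ∈ U
      · obtain ⟨_, g1, g2, g3, _⟩ := hU q hqU
        have := dl_new1 hno g1 g2 g3
        split_ifs <;> linarith
      · rw [if_neg hqU]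
        split_ifs <;> linarith)
  simp only [List.map_cons, List.map_nil, List.sum_cons, List.sum_nil, add_zero,
    Finset.card_empty] at h
  push_cast at h
  linarith

/-- gain for playing next to a leaf -/
lemma leaf_gain (ht : TR G) {S : Finset V} (h3 : H3 G S) {x y z : V} (h : P3 G S x y z)
    (hx1 : (wn G S x).card = 1) :
    ∃ p, (∀ q, q ∉ S ∪ {x, y, z} → (∃ a ∈ ({x, y, z} : Finset V), G.Adj q a) → q = p) ∧
      ∀ U : Finset V, (∀ u ∈ U, NewM G S {x, y, z} u) →
      (40 + hb G S x + 3 * U.card ≤ Ph G S - Ph G (S ∪ {x, y, z}) ∧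
       (1 ≤ (wn G (S ∪ {x, y, z}) p).card →
        41 + hb G S x + 3 * U.card ≤ Ph G S - Ph G (S ∪ {x, y, z}))) := by
  have hP := h
  have hwd := h.wd h3
  obtain ⟨hx, hy, hz, hxz, hxy, hyz, hn⟩ := h
  have hx' : ∀ q, q ∉ S → G.Adj x q → q = y := by
    intro q h1 h2
    obtain ⟨t, htt⟩ := Finset.card_eq_one.1 hx1
    have e1 : q ∈ wn G S x := mem_wn.2 ⟨h1, h2⟩
    have e2 : y ∈ wn G S x := mem_wn.2 ⟨hy, hxy⟩
    rw [htt, Finset.mem_singleton] at e1 e2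
    exact e1.trans e2.symm
  obtain ⟨p, hp⟩ := other' (h3.1 z hz) hy hyz.symm
  have hout : ∀ q, q ∉ S ∪ {x, y, z} → (G.Adj q x ∨ G.Adj q y ∨ G.Adj q z) → q = p ∧ G.Adj q z := by
    intro q hq ho
    rw [nmem3] at hq
    rcases ho with ho | ho | ho
    · exact absurd (hx' q hq.1 ho.symm) hq.2.2.1
    · rcases hn q hq.1 ho.symm with e | e
      · exact absurd e hq.2.1
      · exact absurd e hq.2.2.2
    · rcases hp q hq.1 ho.symm with e | e
      · exact absurd e hq.2.2.1
      · exact ⟨e, ho⟩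
  have h0 := hb_nonneg (G := G) S y
  have h0' := hb_nonneg (G := G) S z
  refine ⟨p, ?_, fun U hU => ⟨?_, fun hpc => ?_⟩⟩
  · rintro q hq ⟨a, ha, hqa⟩
    simp only [Finset.mem_insert, Finset.mem_singleton] at ha
    rcases ha with rfl | rfl | rfl
    · exact (hout q hq (Or.inl hqa)).1
    · exact (hout q hq (Or.inr (Or.inl hqa))).1
    · exact (hout q hq (Or.inr (Or.inr hqa))).1
  · have := gain_out1 ht hxy.ne hxz hyz.ne hx hy hz hwd.1 hwd.2.1 hwd.2.2 ∅ (by simp) p 5 (by norm_num) U hU (by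
      intro q hq ho
      have h1 := hout q hq ho
      have := hP.out ht h3 {x, y, z} hq (Or.inr h1.2)
      have := hb_nonneg (G := G) S q
      exact ⟨h1.1, by linarith⟩)
    simp only [Finset.card_empty] at this
    push_cast at this
    linarith
  · have := gain_out1 ht hxy.ne hxz hyz.ne hx hy hz hwd.1 hwd.2.1 hwd.2.2 ∅ (by simp) p 4 (by norm_num) U hU (by
      intro q hq ho
      have h1 := hout q hq ho
      have := dl4 (G := G) (S := S) (A := {x, y, z}) (q := q) (by rw [h1.1]; exact hpc)
      have hnp0 : (0 : ℤ) ≤ np G S {x, y, z} q := by positivity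
      have := hb_nonneg (G := G) S q
      exact ⟨h1.1, by linarith⟩)
    simp only [Finset.card_empty] at this
    push_cast at this
    linarith

lemma not_mem_S3 {S : Finset V} {x y z : V} (h : P3 G S x y z) :
    ∀ a ∈ ({x, y, z} : Finset V), a ∉ S := by
  intro a ha
  simp only [Finset.mem_insert, Finset.mem_singleton] at ha
  rcases ha with rfl | rfl | rfl
  · exact h.1
  · exact h.2.1
  · exact h.2.2.1

lemma L2 (ht : TR G) {S : Finset V} (h3 : H3 G S)
    (nm : ∀ y, y ∉ S → (wn G S y).card = 2 → ¬ mk G S y) {x y z : V} (h : P3 G S x y z)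
    (hx1 : (wn G S x).card = 1)
    (hpr : mk G S x ∨ ∀ a b, a ∉ S → b ∉ S → G.Adj a b → (wn G S a).card = 1 →
      (wn G S b).card = 2 → ¬ mk G S a) : Win G S := by
  obtain ⟨p, hp, hg⟩ := leaf_gain ht h3 h hx1
  have hA := not_mem_S3 h
  have hx0 := hb_nonneg (G := G) S x
  rcases hpr with hpr | hpr
  · refine win_of ht h3 (v := y) ⟨y, by rw [h.nw_eq]; simp⟩ ?_ ?_
    · rw [h.nw_eq]
      have := (hg ∅ (by simp)).1
      simp only [Finset.card_empty] at this
      push_cast at this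
      linarith
    · intro u hu hm hc
      rw [h.nw_eq] at hu hm hc ⊢
      have hn := new2 h3 nm hu hA hm hc
      have := (hg {u} (by
        intro t htt
        rw [Finset.mem_singleton] at htt; subst htt; exact hn.1)).1
      have hb4 := hb_mk1 hpr hx1
      have h4 := Finset.card_filter_le (wn G (S ∪ {x, y, z}) u) (fun q => mk G (S ∪ {x, y, z}) q)
      rw [hc] at h4
      have h5 : ((((wn G (S ∪ {x, y, z}) u).filter (fun q => mk G (S ∪ {x, y, z}) q)).card : ℕ) : ℤ)
        ≤ 2 := by exact_mod_cast h4
      simp only [Finset.card_singleton] at this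
      push_cast at this
      linarith
  · refine win_of ht h3 (v := y) ⟨y, by rw [h.nw_eq]; simp⟩ ?_ ?_
    · rw [h.nw_eq]
      have := (hg ∅ (by simp)).1
      simp only [Finset.card_empty] at this
      push_cast at this
      linarith
    · intro u hu hm hc
      rw [h.nw_eq] at hu hm hc ⊢
      have hn := new2 h3 nm hu hA hm hc
      set K := (wn G (S ∪ {x, y, z}) u).filter (fun q => mk G (S ∪ {x, y, z}) q) with hK
      have hKn : ∀ q ∈ K, q ≠ p → NewM G S {x, y, z} q := by
        intro q hq hqp
        rw [hK, Finset.mem_filter, mem_wn] at hq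
        obtain ⟨⟨hq1, hq2⟩, hq3⟩ := hq
        have hno : ∀ a ∈ ({x, y, z} : Finset V), ¬ G.Adj q a :=
          fun a ha hqa => hqp (hp q hq1 ⟨a, ha, hqa⟩)
        have huS : u ∉ S := fun h => hu (Finset.mem_union_left _ h)
        have hqS : q ∉ S := fun h => hq1 (Finset.mem_union_left _ h)
        have h1 : 1 ≤ (wn G S q).card := wn_pos huS hq2
        refine ⟨hq1, ?_, hq3, wn_pos hu hq2, hno⟩
        intro hmq
        have h2 := h3.1 q hqS
        by_cases hc1 : (wn G S q).card = 1
        · exact hpr q u hqS huS hq2.symm hc1 hn.2 hmq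
        · exact nm q hqS (by omega) hmq
      have huK : u ∉ K.erase p := by
        intro hh
        have := (Finset.mem_filter.1 (Finset.mem_of_mem_erase hh)).1
        exact wn_self_notin this
      have hgg := hg (insert u (K.erase p)) (by
        intro t htt
        rcases Finset.mem_insert.1 htt with rfl | htt
        · exact hn.1
        · rw [Finset.mem_erase] at htt
          exact hKn t htt.2 htt.1)
      rw [Finset.card_insert_of_notMem huK] at hgg
      by_cases hpK : p ∈ K
      · have e := Finset.card_erase_add_one hpK
        have e' : ((K.erase p).card : ℤ) + 1 = K.card := by exact_mod_cast e
        have := hgg.2 (by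
          have := Finset.mem_filter.1 hpK
          exact wn_pos hu (mem_wn.1 this.1).2)
        have hpos : (1 : ℤ) ≤ K.card := by exact_mod_cast Finset.card_pos.2 ⟨p, hpK⟩
        push_cast at this
        linarith
      · rw [Finset.erase_eq_of_notMem hpK] at hgg
        have := hgg.1
        push_cast at this
        have hpos : (0 : ℤ) ≤ K.card := by positivity
        linarith

lemma drop_one {S A : Finset V} {q : V} (a : V) (h : ∀ b ∈ A, G.Adj q b → b = a)
    (h2 : 2 ≤ (wn G S q).card) : 1 ≤ (wn G (S ∪ A) q).card := by
  have hs : (wn G S q).erase a ⊆ wn G (S ∪ A) q := by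
    intro t htt
    rw [Finset.mem_erase, mem_wn] at htt
    rw [mem_wn, Finset.mem_union, not_or]
    exact ⟨⟨htt.2.1, fun hA => htt.1 (h t hA htt.2.2)⟩, htt.2.2⟩
  have h1 := Finset.card_le_card hs
  have h3 := Finset.pred_card_le_card_erase (s := wn G S q) (a := a)
  omega

lemma dl_m4 {S A : Finset V} {q : V} (h : 1 ≤ (wn G (S ∪ A) q).card) : -4 ≤ dl G S A q := by
  have h1 := dl4 (S := S) (A := A) (q := q) h
  have h2 := hb_nonneg (G := G) S q
  have hnp0 : (0 : ℤ) ≤ np G S A q := by positivity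
  linarith

lemma win_new (ht : TR G) {S : Finset V} (h3 : H3 G S)
    (nm : ∀ y, y ∉ S → (wn G S y).card = 2 → ¬ mk G S y) {v : V} {A : Finset V}
    (hA : nw G S v = A) (hne : A.Nonempty) (h40 : 40 ≤ Ph G S - Ph G (S ∪ A))
    (h : ∀ u, NewM G S A u → (wn G S u).card = 2 → (wn G (S ∪ A) u).card = 2 →
      45 ≤ Ph G S - Ph G (S ∪ A)) : Win G S := by
  subst hA
  refine win_of ht h3 hne h40 fun u hu hm hc => ?_
  have hn := new2 h3 nm hu (fun a ha => (mem_nw.1 ha).1) hm hc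
  have := h u hn.1 hn.2 hc
  have h4 := Finset.card_filter_le (wn G (S ∪ nw G S v) u) (fun q => mk G (S ∪ nw G S v) q)
  rw [hc] at h4
  have h5 : ((((wn G (S ∪ nw G S v) u).filter (fun q => mk G (S ∪ nw G S v) q)).card : ℕ) : ℤ)
    ≤ 2 := by exact_mod_cast h4
  linarith

lemma NewM.u3 {S : Finset V} {a b c u : V} (h : NewM G S {a, b, c} u)
    (h2 : (wn G (S ∪ {a, b, c}) u).card = 2) :
    u ∉ S ∪ {a, b, c} ∧ ¬ mk G S u ∧ mk G (S ∪ {a, b, c}) u ∧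
      2 ≤ (wn G (S ∪ {a, b, c}) u).card ∧ ¬ G.Adj u a ∧ ¬ G.Adj u b ∧ ¬ G.Adj u c := by
  obtain ⟨h1, h3, h4, h5, h6⟩ := h
  exact ⟨h1, h3, h4, h2.ge, h6 a (by simp), h6 b (by simp), h6 c (by simp)⟩

lemma P3.deg {S : Finset V} (h3 : H3 G S) {x y z : V} (h : P3 G S x y z)
    (e2 : ∀ a b, a ∉ S → b ∉ S → G.Adj a b → (wn G S b).card = 2 → (wn G S a).card = 2) :
    (wn G S x).card = 2 ∧ (wn G S y).card = 2 ∧ (wn G S z).card = 2 := by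
  obtain ⟨hx, hy, hz, hxz, hxy, hyz, hn⟩ := h
  have h1 := wn_ge2 hxz hx hz hxy hyz.symm
  have h2 := h3.1 y hy
  have h4 : (wn G S y).card = 2 := by omega
  exact ⟨e2 x y hx hy hxy h4, h4, e2 z y hz hy hyz.symm h4⟩

lemma L3_1 (ht : TR G) {S : Finset V} (h3 : H3 G S)
    (nm : ∀ y, y ∉ S → (wn G S y).card = 2 → ¬ mk G S y)
    (e2 : ∀ a b, a ∉ S → b ∉ S → G.Adj a b → (wn G S b).card = 2 → (wn G S a).card = 2)
    {x y z w s : V} (h : P3 G S x y z) (hxz' : ¬ G.Adj x z) (b1 : BT G S w x y s) (hsz : s ≠ z)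
    (hs0 : (wn G S s).card = 0) : Win G S := by
  have hd := h.deg h3 e2
  have hP := h
  obtain ⟨c1, c2, c3, c4, c5, c6, c7, c8⟩ := b1
  obtain ⟨hx, hy, hz, hxz, hxy, hyz, hn⟩ := h
  have hsn : ∀ q, q ∉ S → ¬ G.Adj q s := fun q hq ha => by
    have := wn_pos hq ha
    omega
  have hy0 := hb_nonneg (G := G) S y
  have hg := play_blue_gain ht h3 hP hxz' c1 c2 c3 c6 c7 hsz c4 c5 c8 (Or.inl hs0) 4 (by norm_num) (by
    intro q hq ho
    rw [nmem3] at hq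
    obtain ⟨q0, q1, q2, q3⟩ := hq
    apply dl_m4
    have hq2 : (wn G S q).card = 2 := by
      rcases ho with ho | ho | ho
      · exact e2 q x q0 hx ho hd.1
      · exact e2 q y q0 hy ho hd.2.1
      · exact absurd ho (hsn q q0)
    have hyq : G.Adj q y → q = z := fun hh => by
      rcases hn q q0 hh.symm with e | e
      · exact absurd e q1
      · exact e
    by_cases hqx : G.Adj q x
    · refine drop_one x (fun b hbA hqb => ?_) hq2.ge
      simp only [Finset.mem_insert, Finset.mem_singleton] at hbA
      rcases hbA with rfl | rfl | rfl
      · rfl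
      · have := hyq hqb; subst this; exact absurd hqx.symm hxz'
      · exact absurd hqb (hsn q q0)
    · refine drop_one y (fun b hbA hqb => ?_) hq2.ge
      simp only [Finset.mem_insert, Finset.mem_singleton] at hbA
      rcases hbA with rfl | rfl | rfl
      · exact absurd hqb hqx
      · rfl
      · exact absurd hqb (hsn q q0))
  refine win_new ht h3 nm (hg ∅ (by simp)).1 ⟨x, by simp⟩ ?_ ?_
  · have := (hg ∅ (by simp)).2
    simp only [Finset.card_empty] at this
    push_cast at this
    linarith
  · intro u hu _ hc
    have := (hg {u} (by
      intro t htt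
      rw [Finset.mem_singleton] at htt; subst htt; exact hu.u3 hc)).2
    simp only [Finset.card_singleton] at this
    push_cast at this
    linarith

lemma L3_2 (ht : TR G) {S : Finset V} (h3 : H3 G S)
    (nm : ∀ y, y ∉ S → (wn G S y).card = 2 → ¬ mk G S y)
    (e2 : ∀ a b, a ∉ S → b ∉ S → G.Adj a b → (wn G S b).card = 2 → (wn G S a).card = 2)
    {x y z w : V} (h : P3 G S x y z) (hw : w ∈ S)
    (hw2 : 2 ≤ (wn G S w).card) (hwn : ∀ q, q ∉ S → G.Adj w q → q = x ∨ q = y ∨ q = z) :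
    Win G S := by
  have hd := h.deg h3 e2
  have hP := h
  have hwd := h.wd h3
  obtain ⟨hx, hy, hz, hxz, hxy, hyz, hn⟩ := h
  have hR : ∀ r ∈ ({w} : Finset V), r ∈ S ∧ 2 ≤ (wn G S r).card ∧
      (wn G (S ∪ {x, y, z}) r).card = 0 := by
    intro r hr
    rw [Finset.mem_singleton] at hr; subst hr
    refine ⟨hw, hw2, wd0_of fun q h1 h2 => ?_⟩
    simpa using hwn q h1 h2
  have h0x := hb_nonneg (G := G) S x
  have h0y := hb_nonneg (G := G) S y
  have h0z := hb_nonneg (G := G) S z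
  have hyn : ∀ q, q ∉ S ∪ {x, y, z} → ¬ G.Adj q y := by
    intro q hq hh
    rw [nmem3] at hq
    rcases hn q hq.1 hh.symm with e | e
    · exact hq.2.1 e
    · exact hq.2.2.2 e
  by_cases hcm : ∃ t, t ∉ S ∪ {x, y, z} ∧ G.Adj t x ∧ G.Adj t z
  · obtain ⟨t, t0, tx, tz⟩ := hcm
    have t0' := nmem3.1 t0
    have := gain_out1 ht hxy.ne hxz hyz.ne hx hy hz hwd.1 hwd.2.1 hwd.2.2 {w} hR t 5 (by norm_num)
      ∅ (by simp) (by
      intro q hq ho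
      have ho' : G.Adj q x ∨ G.Adj q z := by
        rcases ho with ho | ho | ho
        · exact Or.inl ho
        · exact absurd ho (hyn q hq)
        · exact Or.inr ho
      have g1 := hP.out ht h3 {x, y, z} hq ho'
      have g2 := hb_nonneg (G := G) S q
      refine ⟨?_, by linarith⟩
      have hq' := nmem3.1 hq
      rcases ho' with ho | ho
      · obtain ⟨p, hp⟩ := other' (h3.1 x hx) hy hxy
        rcases hp q hq'.1 ho.symm with e | e
        · exact absurd e hq'.2.2.1
        rcases hp t t0'.1 tx.symm with f | f
        · exact absurd f t0'.2.2.1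
        rw [e, f]
      · obtain ⟨p, hp⟩ := other' (h3.1 z hz) hy hyz.symm
        rcases hp q hq'.1 ho.symm with e | e
        · exact absurd e hq'.2.2.1
        rcases hp t t0'.1 tz.symm with f | f
        · exact absurd f t0'.2.2.1
        rw [e, f])
    apply win45 ht h3 (v := y) ⟨y, by rw [hP.nw_eq]; simp⟩
    rw [hP.nw_eq]
    simp only [Finset.card_singleton, Finset.card_empty] at this
    push_cast at this
    linarith
  · push Not at hcm
    have hg := play_mid_gain ht h3 hP {w} hR 4 (by norm_num) (by
      intro q hq ho
      apply dl_m4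
      have q0 := (nmem3.1 hq).1
      have hq2 : (wn G S q).card = 2 := by
        rcases ho with ho | ho
        · exact e2 q x q0 hx ho hd.1
        · exact e2 q z q0 hz ho hd.2.2
      by_cases hqx : G.Adj q x
      · refine drop_one x (fun b hbA hqb => ?_) hq2.ge
        simp only [Finset.mem_insert, Finset.mem_singleton] at hbA
        rcases hbA with rfl | rfl | rfl
        · rfl
        · exact absurd hqb (hyn q hq)
        · exact absurd hqb (hcm q hq hqx)
      · refine drop_one z (fun b hbA hqb => ?_) hq2.ge
        simp only [Finset.mem_insert, Finset.mem_singleton] at hbA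
        rcases hbA with rfl | rfl | rfl
        · exact absurd hqb hqx
        · exact absurd hqb (hyn q hq)
        · rfl)
    refine win_new ht h3 nm hP.nw_eq ⟨y, by simp⟩ ?_ ?_
    · have := hg ∅ (by simp)
      simp only [Finset.card_singleton, Finset.card_empty] at this
      push_cast at this
      linarith
    · intro u hu _ hc
      have := hg {u} (by
        intro t htt
        rw [Finset.mem_singleton] at htt; subst htt; exact hu.u3 hc)
      simp only [Finset.card_singleton] at this
      push_cast at this
      linarith

lemma L3_side (ht : TR G) {S : Finset V} (h3 : H3 G S)
    (nm : ∀ y, y ∉ S → (wn G S y).card = 2 → ¬ mk G S y)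
    (e2 : ∀ a b, a ∉ S → b ∉ S → G.Adj a b → (wn G S b).card = 2 → (wn G S a).card = 2)
    {x y z : V} (h : P3 G S x y z) (hxz' : ¬ G.Adj x z) :
    Win G S ∨ ∃ w s, BT G S w x y s ∧ s ≠ z ∧ ¬ G.Adj s x ∧ 1 ≤ (wn G S s).card := by
  obtain ⟨w, hw, hwx, hwy⟩ := h.blue ht hxz'
  have hP := h
  obtain ⟨hx, hy, hz, hxz, hxy, hyz, hn⟩ := h
  have g1 := wn_ge2 hxy.ne hx hy hwx hwy
  rcases third h3 hw hxy.ne hx hy hwx hwy with t1 | ⟨s, a1, a2, a3, a4, a5⟩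
  · left
    exact L3_2 ht h3 nm e2 hP hw g1 (fun q h1 h2 => by rcases t1 q h1 h2 with e | e <;> tauto)
  by_cases e1 : s = z
  · subst e1; left
    exact L3_2 ht h3 nm e2 hP hw g1 a5
  by_cases f : G.Adj s x
  · left
    have hP' : P3 G S s x y := by
      refine ⟨a3, hx, hy, a2, f, hxy, fun q h1 h2 => ?_⟩
      obtain ⟨p, hp⟩ := other' (h3.1 x hx) hy hxy
      rcases hp q h1 h2 with e | e
      · exact Or.inr e
      · rcases hp s a3 f.symm with e' | e'
        · exact absurd e' a2
        · exact Or.inl (e.trans e'.symm)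
    exact L3_2 ht h3 nm e2 hP' hw g1 (fun q h1 h2 => by rcases a5 q h1 h2 with e | e | e <;> tauto)
  have hb : BT G S w x y s := ⟨hw, hwx, hwy, a3, a4, a1, a2, a5⟩
  by_cases g : (wn G S s).card = 0
  · left; exact L3_1 ht h3 nm e2 hP hxz' hb e1 g
  · right; exact ⟨w, s, hb, e1, f, by omega⟩

lemma L3_C6 (ht : TR G) {S : Finset V} (h3 : H3 G S)
    (nm : ∀ y, y ∉ S → (wn G S y).card = 2 → ¬ mk G S y)
    (e2 : ∀ a b, a ∉ S → b ∉ S → G.Adj a b → (wn G S b).card = 2 → (wn G S a).card = 2)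
    {x y z w1 s1 p1 pm : V} (h : P3 G S x y z) (hxz' : ¬ G.Adj x z) (b1 : BT G S w1 x y s1)
    (hsz : s1 ≠ z) (hs1 : 1 ≤ (wn G S s1).card)
    (p1y : p1 ≠ y) (p1S : p1 ∉ S) (xp1 : G.Adj x p1) (hp1 : ∀ q, q ∉ S → G.Adj x q → q = y ∨ q = p1)
    (pmS : pm ∉ S) (pmp : pm ≠ p1) (pmy : pm ≠ y) (zpm : G.Adj z pm) (s1p : G.Adj s1 p1)
    (s1pm : G.Adj s1 pm) : Win G S := by
  obtain ⟨c1, c2, c3, c4, c5, c6, c7, c8⟩ := b1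
  obtain ⟨hx, hy, hz, hxz, hxy, hyz, hn⟩ := h
  have p1z : p1 ≠ z := by rintro rfl; exact hxz' xp1
  have pmx : pm ≠ x := by rintro rfl; exact hxz' zpm.symm
  have p1ny : ¬ G.Adj p1 y := by
    intro hh
    rcases hn p1 p1S hh.symm with e | e
    · exact xp1.ne e.symm
    · exact p1z e
  have hP' : P3 G S p1 x y := by
    refine ⟨p1S, hx, hy, p1y, xp1.symm, hxy, fun q h1 h2 => ?_⟩
    exact (hp1 q h1 h2).symm
  rcases L3_side ht h3 nm e2 hP' p1ny with hw | ⟨w3, s3, b3, g1, g2, g3⟩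
  · exact hw
  have b2 : BT G S w1 y x s1 := ⟨c1, c3, c2, c4, c5, c7, c6, fun q h1 h2 => by
    rcases c8 q h1 h2 with e | e | e <;> tauto⟩
  have s1ny : ¬ G.Adj s1 y := by
    intro hh
    rcases hn s1 c4 hh.symm with e | e
    · exact c6 e
    · exact hsz e
  have hpm : pm ∉ S ∪ {p1, x, y} := nmem3.2 ⟨pmS, pmp, pmx, pmy⟩
  have := b3_gain ht h3 hP' b3 b2 g1 s1p.ne g2 s1ny g3 hs1 s1 z 0 4 le_rfl (by norm_num) (by
    intro q hq ho
    have hq' := nmem3.1 hq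
    rcases ho with ho | ho
    · left
      have : q = s1 := by
        obtain ⟨p, hp⟩ := other' (h3.1 p1 p1S) hx xp1.symm
        rcases hp q hq'.1 ho.symm with e | e
        · exact absurd e hq'.2.2.1
        rcases hp s1 c4 s1p.symm with f | f
        · exact absurd f c6
        rw [e, f]
      refine ⟨this, Or.inr (Or.inr ⟨Or.inr this, ?_⟩)⟩
      rw [this]
      exact wd_pos_of hpm s1pm
    · right
      have : q = z := by
        rcases hn q hq'.1 ho.symm with e | e
        · exact absurd e hq'.2.2.1
        · exact e
      refine ⟨this, Or.inr (Or.inl ⟨le_rfl, Or.inl ?_⟩)⟩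
      rw [this]
      exact wd_pos_of hpm zpm) ∅ 0 le_rfl (by norm_num) (by simp)
  have i1 := hb_nonneg (G := G) S x
  have i2 := hb_nonneg (G := G) S y
  have i3 := hb_nonneg (G := G) S p1
  apply win45 ht h3 (v := x) ⟨x, by rw [hP'.nw_eq]; simp⟩
  rw [hP'.nw_eq]
  simp only [Finset.card_empty] at this
  push_cast at this
  linarith

set_option maxHeartbeats 1000000 in
/-- all degree two component -/
lemma L3 (ht : TR G) {S : Finset V} (h3 : H3 G S)
    (nm : ∀ y, y ∉ S → (wn G S y).card = 2 → ¬ mk G S y)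
    (e2 : ∀ a b, a ∉ S → b ∉ S → G.Adj a b → (wn G S b).card = 2 → (wn G S a).card = 2)
    {x y z : V} (h : P3 G S x y z) : Win G S := by
  by_cases hxz' : G.Adj x z
  · exact K3_win ht h3 h hxz'
  have hzx' : ¬ G.Adj z x := fun h => hxz' h.symm
  rcases L3_side ht h3 nm e2 h hxz' with hw | ⟨w1, s1, b1, b11, b12, b13⟩
  · exact hw
  rcases L3_side ht h3 nm e2 h.symm hzx' with hw | ⟨w2, s2, b2, b21, b22, b23⟩
  · exact hw
  have hd := h.deg h3 e2
  have hP := h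
  obtain ⟨hx, hy, hz, hxz, hxy, hyz, hn⟩ := h
  have bb := b3_gain ht h3 hP b1 b2 b11 b21 b12 b22 b13 b23
  have i1 := hb_nonneg (G := G) S x
  have i2 := hb_nonneg (G := G) S y
  have i3 := hb_nonneg (G := G) S z
  have hlen : ∀ a, (wn G S a).card = 2 → ¬ (∀ q, q ∉ S → G.Adj a q → q = y) := by
    intro a ha hh
    have : wn G S a ⊆ {y} := by
      intro t htt
      rw [mem_wn] at htt
      exact Finset.mem_singleton.2 (hh t htt.1 htt.2)
    have := Finset.card_le_card this
    rw [Finset.card_singleton] at this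
    omega
  rcases other (h3.1 x hx) hy hxy with h1 | ⟨p1, p1y, p1S, xp1, hp1⟩
  · exact absurd h1 (hlen x hd.1)
  rcases other (h3.1 z hz) hy hyz.symm with h1 | ⟨pm, pmy, pmS, zpm, hpm⟩
  · exact absurd h1 (hlen z hd.2.2)
  have p1z : p1 ≠ z := by rintro rfl; exact hxz' xp1
  have pmx : pm ≠ x := by rintro rfl; exact hzx' zpm
  have hyn : ∀ q, q ∉ S ∪ {x, y, z} → ¬ G.Adj q y := by
    intro q hq hh
    rw [nmem3] at hq
    rcases hn q hq.1 hh.symm with e | e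
    · exact hq.2.1 e
    · exact hq.2.2.2 e
  have ho1 : ∀ q, q ∉ S ∪ {x, y, z} → G.Adj q x → q = p1 := by
    intro q hq hh
    rw [nmem3] at hq
    rcases hp1 q hq.1 hh.symm with e | e
    · exact absurd e hq.2.2.1
    · exact e
  have hom : ∀ q, q ∉ S ∪ {x, y, z} → G.Adj q z → q = pm := by
    intro q hq hh
    rw [nmem3] at hq
    rcases hpm q hq.1 hh.symm with e | e
    · exact absurd e hq.2.2.1
    · exact e
  by_cases hpp : pm = p1
  · subst hpp
    have := bb pm pm 5 0 (by norm_num) (by norm_num) (by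
      intro q hq ho
      left
      exact ⟨ho.elim (ho1 q hq) (hom q hq), Or.inl le_rfl⟩) ∅ 0 le_rfl (by norm_num) (by simp)
    apply win45 ht h3 (v := y) ⟨y, by rw [hP.nw_eq]; simp⟩
    rw [hP.nw_eq]
    simp only [Finset.card_empty] at this
    push_cast at this
    linarith
  by_cases C1 : G.Adj s1 p1 ∧ G.Adj s1 pm
  · exact L3_C6 ht h3 nm e2 hP hxz' b1 b11 b13 p1y p1S xp1 hp1 pmS hpp pmy zpm C1.1 C1.2
  by_cases C2 : G.Adj s2 p1 ∧ G.Adj s2 pm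
  · exact L3_C6 ht h3 nm e2 hP.symm hzx' b2 b21 b23 pmy pmS zpm hpm p1S (Ne.symm hpp) p1y xp1
      C2.2 C2.1
  have hg := bb p1 pm 4 4 (by norm_num) (by norm_num) (by
    intro q hq ho
    have q0 := (nmem3.1 hq).1
    rcases ho with ho | ho
    · left
      refine ⟨ho1 q hq ho, Or.inr (Or.inl ⟨le_rfl, Or.inl ?_⟩)⟩
      refine drop_one x (fun b hbA hqb => ?_) (e2 q x q0 hx ho hd.1).ge
      simp only [Finset.mem_insert, Finset.mem_singleton] at hbA
      rcases hbA with rfl | rfl | rfl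
      · rfl
      · exact absurd hqb (hyn q hq)
      · exact absurd ((hom q hq hqb).symm.trans (ho1 q hq ho)) hpp
    · right
      refine ⟨hom q hq ho, Or.inr (Or.inl ⟨le_rfl, Or.inl ?_⟩)⟩
      refine drop_one z (fun b hbA hqb => ?_) (e2 q z q0 hz ho hd.2.2).ge
      simp only [Finset.mem_insert, Finset.mem_singleton] at hbA
      rcases hbA with rfl | rfl | rfl
      · exact absurd ((hom q hq ho).symm.trans (ho1 q hq hqb)) hpp
      · exact absurd hqb (hyn q hq)
      · rfl)
  refine win_of ht h3 (v := y) ⟨y, by rw [hP.nw_eq]; simp⟩ ?_ ?_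
  · rw [hP.nw_eq]
    have := hg ∅ 0 le_rfl (by norm_num) (by simp)
    simp only [Finset.card_empty] at this
    push_cast at this
    linarith
  · intro u hu hm hc
    rw [hP.nw_eq] at hu hm hc ⊢
    have hnu := new2 h3 nm hu (not_mem_S3 hP) hm hc
    set K := (wn G (S ∪ {x, y, z}) u).filter (fun q => mk G (S ∪ {x, y, z}) q) with hK
    by_cases hup : G.Adj u p1 ∧ G.Adj u pm
    · have := hg {u} 4 (by norm_num) (Or.inr ⟨le_rfl, by
          rw [Finset.mem_singleton]; rintro rfl; exact C1 hup, by
          rw [Finset.mem_singleton]; rintro rfl; exact C2 hup⟩) (by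
          intro t htt
          rw [Finset.mem_singleton] at htt; subst htt; exact hnu.1.u3 hc)
      have h4 := Finset.card_filter_le (wn G (S ∪ {x, y, z}) u) (fun q => mk G (S ∪ {x, y, z}) q)
      rw [hc, ← hK] at h4
      have h5 : (K.card : ℤ) ≤ 2 := by exact_mod_cast h4
      simp only [Finset.card_singleton] at this
      push_cast at this
      linarith
    · have hKu : ∀ q ∈ K, G.Adj u q ∧ q ∉ S ∪ {x, y, z} ∧ mk G (S ∪ {x, y, z}) q := by
        intro q hq
        rw [hK, Finset.mem_filter, mem_wn] at hq
        exact ⟨hq.1.2, hq.1.1, hq.2⟩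
      have hu0 := (nmem3.1 hu).1
      have ht' : ∃ t, ∀ q ∈ K, q = p1 ∨ q = pm → q = t := by
        by_cases hu1 : G.Adj u p1
        · refine ⟨p1, fun q hq ho => ho.elim id fun e => ?_⟩
          exact absurd ⟨hu1, e ▸ (hKu q hq).1⟩ hup
        · refine ⟨pm, fun q hq ho => ho.elim (fun e => ?_) id⟩
          exact absurd (e ▸ (hKu q hq).1) hu1
      obtain ⟨t, htK⟩ := ht'
      have huK : u ∉ K.erase t := by
        intro hh
        exact (hKu u (Finset.mem_of_mem_erase hh)).1.ne rfl
      have hgg := hg (insert u (K.erase t)) 1 (by norm_num) (Or.inl le_rfl) (by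
        intro q hq
        rcases Finset.mem_insert.1 hq with rfl | hq
        · exact hnu.1.u3 hc
        · rw [Finset.mem_erase] at hq
          obtain ⟨k1, k2, k3⟩ := hKu q hq.2
          have q0 := (nmem3.1 k2).1
          have hq2 := e2 q u q0 hu0 k1.symm hnu.2
          have n1 : ¬ G.Adj q x := fun hh => hq.1 (htK q hq.2 (Or.inl (ho1 q k2 hh)))
          have n2 := hyn q k2
          have n3 : ¬ G.Adj q z := fun hh => hq.1 (htK q hq.2 (Or.inr (hom q k2 hh)))
          refine ⟨k2, nm q q0 hq2, k3, ?_, n1, n2, n3⟩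
          rw [wn_same (no_adj3 (by tauto)), hq2])
      rw [Finset.card_insert_of_notMem huK] at hgg
      have e := Finset.pred_card_le_card_erase (s := K) (a := t)
      have e' : (K.card : ℤ) - 1 ≤ (K.erase t).card := by omega
      push_cast at hgg
      linarith

/-- a white vertex of white degree two exists -/
lemma win_deg2 (ht : TR G) {S : Finset V} (h3 : H3 G S) {y : V} (hy : y ∉ S)
    (hc : (wn G S y).card = 2) : Win G S := by
  by_cases n1 : ∃ y, y ∉ S ∧ (wn G S y).card = 2 ∧ mk G S y
  · obtain ⟨y, h1, h2, hm⟩ := n1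
    exact L1 ht h3 h1 hm h2
  have nm : ∀ y, y ∉ S → (wn G S y).card = 2 → ¬ mk G S y := fun y h1 h2 hm => n1 ⟨y, h1, h2, hm⟩
  have key : ∀ a b, a ∉ S → b ∉ S → G.Adj a b → (wn G S a).card = 1 → (wn G S b).card = 2 →
      ∃ z, P3 G S a b z := by
    intro a b ha hb' hab h1 h2
    obtain ⟨x, z, h⟩ := exists_P3 hb' h2
    rcases h.2.2.2.2.2.2 a ha hab.symm with rfl | rfl
    · exact ⟨z, h⟩
    · exact ⟨x, h.symm⟩
  by_cases n2 : ∃ a b, a ∉ S ∧ b ∉ S ∧ G.Adj a b ∧ (wn G S a).card = 1 ∧ (wn G S b).card = 2 ∧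
      mk G S a
  · obtain ⟨a, b, ha, hb', hab, h1, h2, hm⟩ := n2
    obtain ⟨z, h⟩ := key a b ha hb' hab h1 h2
    exact L2 ht h3 nm h h1 (Or.inl hm)
  by_cases n3 : ∃ a b, a ∉ S ∧ b ∉ S ∧ G.Adj a b ∧ (wn G S a).card = 1 ∧ (wn G S b).card = 2
  · obtain ⟨a, b, ha, hb', hab, h1, h2⟩ := n3
    obtain ⟨z, h⟩ := key a b ha hb' hab h1 h2
    exact L2 ht h3 nm h h1 (Or.inr fun a b ha hb' hab h1 h2 hm => n2 ⟨a, b, ha, hb', hab, h1, h2, hm⟩)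
  obtain ⟨x, z, h⟩ := exists_P3 hy hc
  refine L3 ht h3 nm (fun a b ha hb' hab h2 => ?_) h
  have g1 := wn_pos hb' hab.symm
  have g2 := h3.1 a ha
  by_contra hne
  exact n3 ⟨a, b, ha, hb', hab, by omega, h2⟩

lemma gain_iso (ht : TR G) {S A : Finset V} (hA : Disjoint A S)
    (hout : ∀ q, q ∉ S ∪ A → ∀ a ∈ A, ¬ G.Adj q a) (R : Finset V)
    (hR : ∀ r ∈ R, r ∈ S ∧ 2 ≤ (wn G S r).card ∧ (wn G (S ∪ A) r).card = 0)
    (U : Finset V) (e : ℤ) (hU : ∀ u ∈ U, u ∉ S ∪ A ∧ e ≤ dl G S A u) :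
    (∑ a ∈ A, (15 + hb G S a)) + 7 * (R.card : ℤ) + e * U.card ≤ Ph G S - Ph G (S ∪ A) := by
  have := gain_w hA (by
    intro a ha
    have : (wn G (S ∪ A) a).card = 0 := by
      rw [Finset.card_eq_zero, Finset.eq_empty_iff_forall_notMem]
      intro q hq
      rw [mem_wn] at hq
      exact hout q hq.1 a ha hq.2.symm
    omega) R hR [] (by simp) U e (fun u hu => (hU u hu).1) (by
    intro q hq
    simp only [List.map_nil, List.sum_nil, zero_add]
    split_ifs with h
    · exact (hU q h).2
    · exact dl_g1 ht hq (hout q hq))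
  simpa using this

lemma wn_sub_of {S : Finset V} {v x y : V} (h : (wn G S v).card = 2) (hxy : x ≠ y)
    (hx : x ∉ S) (hy : y ∉ S) (hvx : G.Adj x v) (hvy : G.Adj y v) : wn G S v = {x, y} := by
  symm
  apply Finset.eq_of_subset_of_card_le
  · intro t htt
    simp only [Finset.mem_insert, Finset.mem_singleton] at htt
    rcases htt with rfl | rfl
    · exact mem_wn.2 ⟨hx, hvx.symm⟩
    · exact mem_wn.2 ⟨hy, hvy.symm⟩
  · rw [h, Finset.card_pair hxy]

lemma winN40 (ht : TR G) {S : Finset V} (h3 : H3 G S) (nd : ∀ v, v ∉ S → (wn G S v).card ≤ 1)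
    {v : V} {A : Finset V} (hA : nw G S v = A) (hne : A.Nonempty)
    (h40 : 40 ≤ Ph G S - Ph G (S ∪ A)) : Win G S := by
  subst hA
  refine win_of ht h3 hne h40 fun u hu _ hc => ?_
  have h1 := wn_card_le (G := G) S (nw G S v) u
  have h2 := nd u (fun h => hu (Finset.mem_union_left _ h))
  omega

lemma N1 (ht : TR G) {S : Finset V} (h3 : H3 G S) (nd : ∀ v, v ∉ S → (wn G S v).card ≤ 1)
    {v a b c z p : V} (hv : v ∈ S) (hab : a ≠ b) (hac : a ≠ c) (hbc : b ≠ c)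
    (hw : wn G S v = {a, b, c})
    (hout : ∀ q, q ∉ S ∪ {a, b, c} → (G.Adj q a ∨ G.Adj q b ∨ G.Adj q c) → q = z ∨ q = p) :
    Win G S := by
  have hm : ∀ t ∈ ({a, b, c} : Finset V), t ∉ S := by
    intro t htt; rw [← hw, mem_wn] at htt; exact htt.1
  have ha := hm a (by simp)
  have hb' := hm b (by simp)
  have hc := hm c (by simp)
  have hle : ∀ t, t ∉ S → (wn G (S ∪ {a, b, c}) t).card ≤ 1 := fun t htt =>
    (wn_card_le _ _ _).trans (nd t htt)
  have hv3 : (wn G S v).card = 3 := by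
    rw [hw]; exact Finset.card_eq_three.2 ⟨a, b, c, hab, hac, hbc, rfl⟩
  have := gain_out2 ht hab hac hbc ha hb' hc (hle a ha) (hle b hb') (hle c hc) {v} (by
    intro r hr
    rw [Finset.mem_singleton] at hr; subst hr
    refine ⟨hv, by omega, wd0_of fun q h1 h2 => ?_⟩
    rw [← hw]; exact mem_wn.2 ⟨h1, h2⟩) z p 5 (by norm_num) ∅ (by simp) (by
    intro q hq ho
    refine ⟨hout q hq ho, ?_⟩
    have q0 := (nmem3.1 hq).1
    have h0 := hb_nonneg (G := G) S q
    have key : ∀ t, t ∉ S → G.Adj q t → -5 ≤ dl G S {a, b, c} q := by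
      intro t htt hqt
      have h1 := nd q q0
      have h2 := wn_pos htt hqt.symm
      have := dl_nb1 ht (A := {a, b, c}) q0 htt hqt (by omega)
      linarith
    rcases ho with ho | ho | ho
    · exact key a ha ho
    · exact key b hb' ho
    · exact key c hc ho)
  refine winN40 ht h3 nd (v := v) (A := {a, b, c}) (by rw [nw_blue hv, hw]) ⟨a, by simp⟩ ?_
  have i1 := hb_nonneg (G := G) S a
  have i2 := hb_nonneg (G := G) S b
  have i3 := hb_nonneg (G := G) S c
  simp only [Finset.card_singleton, Finset.card_empty] at this
  push_cast at this
  linarith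

lemma uniq1 {S : Finset V} (nd : ∀ v, v ∉ S → (wn G S v).card ≤ 1) {x y q : V} (hx : x ∉ S)
    (hy : y ∉ S) (hq : q ∉ S) (h1 : G.Adj x y) (h2 : G.Adj x q) : q = y :=
  Finset.card_le_one.1 (nd x hx) q (mem_wn.2 ⟨hq, h2⟩) y (mem_wn.2 ⟨hy, h1⟩)

lemma partner {S : Finset V} (nd : ∀ v, v ∉ S → (wn G S v).card ≤ 1) {x : V} (hx : x ∉ S) :
    ∃ p, ∀ q, q ∉ S → G.Adj q x → q = p := by
  by_cases h : ∃ p, p ∉ S ∧ G.Adj x p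
  · obtain ⟨p, h1, h2⟩ := h
    exact ⟨p, fun q h3 h4 => uniq1 nd hx h1 h3 h2 h4.symm⟩
  · exact ⟨x, fun q h3 h4 => absurd ⟨q, h3, h4.symm⟩ h⟩

/-- N1, isolated white -/
lemma N1a (ht : TR G) {S : Finset V} (h3 : H3 G S) (nd : ∀ v, v ∉ S → (wn G S v).card ≤ 1)
    {v a : V} (hv : v ∈ S) (hv3 : (wn G S v).card = 3) (ha : a ∉ S) (hav : G.Adj a v)
    (ha0 : (wn G S a).card = 0) : Win G S := by
  have ham : a ∈ wn G S v := mem_wn.2 ⟨ha, hav.symm⟩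
  have h2 : ((wn G S v).erase a).card = 2 := by rw [Finset.card_erase_of_mem ham]; omega
  obtain ⟨b, c, hbc, hw⟩ := Finset.card_eq_two.1 h2
  have hw' : wn G S v = {a, b, c} := by rw [← hw, Finset.insert_erase ham]
  have hb1 : b ∈ (wn G S v).erase a := by rw [hw]; simp
  have hc1 : c ∈ (wn G S v).erase a := by rw [hw]; simp
  rw [Finset.mem_erase, mem_wn] at hb1 hc1
  obtain ⟨z, hz⟩ := partner nd hb1.2.1
  obtain ⟨p, hp⟩ := partner nd hc1.2.1
  refine N1 ht h3 nd hv hb1.1.symm hc1.1.symm hbc hw' (z := z) (p := p) ?_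
  intro q hq ho
  have q0 := (nmem3.1 hq).1
  rcases ho with ho | ho | ho
  · have := wn_pos q0 ho
    omega
  · exact Or.inl (hz q q0 ho)
  · exact Or.inr (hp q q0 ho)

/-- N1, both ends of a K2 -/
lemma N1b (ht : TR G) {S : Finset V} (h3 : H3 G S) (nd : ∀ v, v ∉ S → (wn G S v).card ≤ 1)
    {v b c : V} (hv : v ∈ S) (hv3 : (wn G S v).card = 3) (hb' : b ∉ S) (hc : c ∉ S)
    (hbc : G.Adj b c) (hbv : G.Adj b v) (hcv : G.Adj c v) : Win G S := by
  have hbm : b ∈ wn G S v := mem_wn.2 ⟨hb', hbv.symm⟩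
  have hcm : c ∈ (wn G S v).erase b := Finset.mem_erase.2 ⟨hbc.ne', mem_wn.2 ⟨hc, hcv.symm⟩⟩
  have h2 : (((wn G S v).erase b).erase c).card = 1 := by
    rw [Finset.card_erase_of_mem hcm, Finset.card_erase_of_mem hbm]; omega
  obtain ⟨a, hw⟩ := Finset.card_eq_one.1 h2
  have hw' : wn G S v = {b, c, a} := by
    rw [← Finset.insert_erase hbm, ← Finset.insert_erase hcm, hw]
  have ha1 : a ∈ ((wn G S v).erase b).erase c := by rw [hw]; simp
  simp only [Finset.mem_erase, mem_wn] at ha1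
  obtain ⟨p, hp⟩ := partner nd ha1.2.2.1
  refine N1 ht h3 nd hv hbc.ne ha1.2.1.symm ha1.1.symm hw' (z := p) (p := p) ?_
  intro q hq ho
  obtain ⟨q0, q1, q2, q3⟩ := nmem3.1 hq
  rcases ho with ho | ho | ho
  · exact absurd (uniq1 nd hb' hc q0 hbc ho.symm) q2
  · exact absurd (uniq1 nd hc hb' q0 hbc.symm ho.symm) q1
  · exact Or.inl (hp q q0 ho)

lemma not_mem2 {S : Finset V} {q a b : V} : q ∉ S ∪ {a, b} ↔ q ∉ S ∧ q ≠ a ∧ q ≠ b := by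
  simp only [Finset.mem_union, Finset.mem_insert, Finset.mem_singleton, not_or, ne_eq]

/-- gain of playing a K2 -/
lemma K2_gain (ht : TR G) {S : Finset V} (h3 : H3 G S) (nd : ∀ v, v ∉ S → (wn G S v).card ≤ 1)
    {x y : V} (hx : x ∉ S) (hy : y ∉ S) (hxy : G.Adj x y) :
    Win G S ∨ (nw G S x = {x, y} ∧ (∀ q, q ∉ S ∪ {x, y} → ∀ a ∈ ({x, y} : Finset V), ¬ G.Adj q a) ∧
      ∀ (U : Finset V) (e : ℤ), (∀ u ∈ U, u ∉ S ∪ {x, y} ∧ e ≤ dl G S {x, y} u) →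
      37 + hb G S x + hb G S y + e * U.card ≤ Ph G S - Ph G (S ∪ {x, y})) := by
  obtain ⟨w, hw1, hw2⟩ := ht x y hxy
  have hwS : w ∈ S := by
    by_contra hwS
    exact hw2.ne (uniq1 nd hx hy hwS hxy hw1).symm
  have hg := wn_ge2 hxy.ne hx hy hw1 hw2
  have hl := h3.2 w hwS
  by_cases hw3 : (wn G S w).card = 3
  · left; exact N1b ht h3 nd hwS hw3 hx hy hxy hw1 hw2
  right
  have hww := wn_sub_of (by omega) hxy.ne hx hy hw1 hw2
  have hout : ∀ q, q ∉ S ∪ {x, y} → ∀ a ∈ ({x, y} : Finset V), ¬ G.Adj q a := by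
    intro q hq a ha hqa
    rw [not_mem2] at hq
    simp only [Finset.mem_insert, Finset.mem_singleton] at ha
    rcases ha with rfl | rfl
    · exact hq.2.2 (uniq1 nd hx hy hq.1 hxy hqa.symm)
    · exact hq.2.1 (uniq1 nd hy hx hq.1 hxy.symm hqa.symm)
  refine ⟨?_, hout, ?_⟩
  · ext t
    rw [mem_nw, Finset.mem_insert, Finset.mem_singleton]
    constructor
    · rintro ⟨h1, h2 | h2⟩
      · exact Or.inl h2
      · exact Or.inr (uniq1 nd hx hy h1 hxy h2)
    · rintro (rfl | rfl)
      · exact ⟨hx, Or.inl rfl⟩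
      · exact ⟨hy, Or.inr hxy⟩
  · intro U e hU
    have := gain_iso ht (S := S) (A := {x, y}) (by
      rw [Finset.disjoint_left]
      intro t htt
      simp only [Finset.mem_insert, Finset.mem_singleton] at htt
      rcases htt with rfl | rfl
      · exact hx
      · exact hy) hout {w} (by
      intro r hr
      rw [Finset.mem_singleton] at hr; subst hr
      refine ⟨hwS, hg, wd0_of fun q h1 h2 => ?_⟩
      rw [← hww]; exact mem_wn.2 ⟨h1, h2⟩) U e hU
    rw [Finset.sum_pair hxy.ne, Finset.card_singleton] at this
    push_cast at this
    linarith

lemma N2 (ht : TR G) {S : Finset V} (h3 : H3 G S) (nd : ∀ v, v ∉ S → (wn G S v).card ≤ 1)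
    {x : V} (hx : x ∉ S) (h1 : (wn G S x).card = 1) (hm : mk G S x) : Win G S := by
  obtain ⟨y, hy⟩ := Finset.card_pos.1 (by omega : 0 < (wn G S x).card)
  rw [mem_wn] at hy
  rcases K2_gain ht h3 nd hx hy.1 hy.2 with h | ⟨g1, g2, g3⟩
  · exact h
  refine winN40 ht h3 nd g1 ⟨x, by simp⟩ ?_
  have := g3 ∅ 0 (by simp)
  have i1 := hb_mk1 hm h1
  have i2 := hb_nonneg (G := G) S y
  simp only [Finset.card_empty] at this
  push_cast at this
  linarith

/-- gain of playing a blue vertex at two isolated whites -/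
lemma I2_gain (ht : TR G) {S : Finset V} {v x y : V} (hv : v ∈ S)
    (hxy : x ≠ y) (hw : wn G S v = {x, y}) (hx0 : (wn G S x).card = 0)
    (hy0 : (wn G S y).card = 0) (R : Finset V) (hvR : v ∉ R)
    (hR : ∀ r ∈ R, r ∈ S ∧ wn G S r = {x, y}) (U : Finset V) (e : ℤ)
    (hU : ∀ u ∈ U, u ∉ S ∪ {x, y} ∧ e ≤ dl G S {x, y} u) :
    37 + hb G S x + hb G S y + 7 * (R.card : ℤ) + e * U.card ≤ Ph G S - Ph G (S ∪ {x, y}) := by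
  have hS : ∀ t ∈ ({x, y} : Finset V), t ∉ S := by
    intro t htt; rw [← hw, mem_wn] at htt; exact htt.1
  have := gain_iso ht (S := S) (A := {x, y}) (by
    rw [Finset.disjoint_left]; exact fun t htt => hS t htt) (by
    intro q hq a ha hqa
    have h1 := wn_pos (not_mem2.1 hq).1 hqa
    simp only [Finset.mem_insert, Finset.mem_singleton] at ha
    rcases ha with rfl | rfl <;> omega) (insert v R) (by
    intro r hr
    have hr' : r ∈ S ∧ wn G S r = {x, y} := by
      rcases Finset.mem_insert.1 hr with rfl | hr
      · exact ⟨hv, hw⟩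
      · exact hR r hr
    refine ⟨hr'.1, by rw [hr'.2, Finset.card_pair hxy], wd0_of fun q h1 h2 => ?_⟩
    rw [← hr'.2]; exact mem_wn.2 ⟨h1, h2⟩) U e hU
  rw [Finset.sum_pair hxy, Finset.card_insert_of_notMem hvR] at this
  push_cast at this
  linarith

lemma N3 (ht : TR G) {S : Finset V} (h3 : H3 G S) (nd : ∀ v, v ∉ S → (wn G S v).card ≤ 1)
    {v x y : V} (hv : v ∈ S) (hxy : x ≠ y) (hw : wn G S v = {x, y}) (hx0 : (wn G S x).card = 0)
    (hy0 : (wn G S y).card = 0) (hm : mk G S x) : Win G S := by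
  have := I2_gain ht hv hxy hw hx0 hy0 ∅ (by simp) (by simp) ∅ 0 (by simp)
  refine winN40 ht h3 nd (v := v) (A := {x, y}) (by rw [nw_blue hv, hw]) ⟨x, by simp⟩ ?_
  have i1 := hb_mk0 hm hx0
  have i2 := hb_nonneg (G := G) S y
  simp only [Finset.card_empty] at this
  push_cast at this
  linarith

lemma singleN (ht : TR G) {S : Finset V} (nd : ∀ v, v ∉ S → (wn G S v).card ≤ 1) {u : V}
    (hu : u ∉ S) : 10 ≤ Ph G S - Ph G (S ∪ {u}) ∧ (mk G S u → 14 ≤ Ph G S - Ph G (S ∪ {u})) := by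
  have h0 := hb_nonneg (G := G) S u
  by_cases hc : (wn G S u).card = 0
  · have := single0 ht hu hc
    refine ⟨by linarith, fun _ => by linarith⟩
  · have h1 : (wn G S u).card = 1 := by have := nd u hu; omega
    have := single1 ht hu h1
    refine ⟨by linarith, fun hm => ?_⟩
    rw [hb_mk1 hm h1] at this
    linarith

lemma nd_union {S : Finset V} (nd : ∀ v, v ∉ S → (wn G S v).card ≤ 1) (A : Finset V) :
    ∀ v, v ∉ S ∪ A → (wn G (S ∪ A) v).card ≤ 1 := fun v hv =>
  (wn_card_le _ _ _).trans (nd v fun h => hv (Finset.mem_union_left _ h))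

/-- replies dominating at least two vertices -/
lemma reply2 (ht : TR G) {S : Finset V} (h3 : H3 G S) (nd : ∀ v, v ∉ S → (wn G S v).card ≤ 1)
    {v : V} (h2 : 2 ≤ (nw G S v).card) : 24 ≤ Ph G S - Ph G (S ∪ nw G S v) := by
  by_cases hv : v ∈ S
  · rw [nw_blue hv] at h2 ⊢
    obtain ⟨a, ha, b, hb', hab⟩ := Finset.one_lt_card.1 (by omega : 1 < (wn G S v).card)
    have hbe : b ∈ (wn G S v).erase a := Finset.mem_erase.2 ⟨hab.symm, hb'⟩
    have h1 := gain_first ht h3 hbe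
    have h4 := (singleN ht nd (mem_wn.1 hb').1).1
    have h5 := last_blue hv ha
    have h6 := (singleN ht (nd_union nd ((wn G S v).erase a)) (u := a) (by
      rw [Finset.mem_union, not_or]
      exact ⟨(mem_wn.1 ha).1, by simp⟩)).2 h5
    rw [← union_split ha] at h6
    linarith
  · have h1 := last_white ht (S := S) hv
    rw [nw_white hv, Finset.card_insert_of_notMem wn_self_notin] at h2
    obtain ⟨a, ha⟩ := Finset.card_pos.1 (by omega : 0 < (wn G S v).card)
    have h4 := gain_first ht h3 ha
    have h5 := (singleN ht nd (mem_wn.1 ha).1).1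
    linarith

lemma N4 (ht : TR G) {S : Finset V} (h3 : H3 G S) (nd : ∀ v, v ∉ S → (wn G S v).card ≤ 1)
    (hisol : ∀ v : V, ∃ u : V, G.Adj u v)
    {x y : V} (hx : x ∉ S) (hy : y ∉ S) (hxy : G.Adj x y) : Win G S := by
  by_contra hW
  rcases K2_gain ht h3 nd hx hy hxy with h | ⟨g1, hout, g3⟩
  · exact hW h
  have ix := hb_nonneg (G := G) S x
  have iy := hb_nonneg (G := G) S y
  have g37 : 37 ≤ Ph G S - Ph G (S ∪ {x, y}) := by
    have := g3 ∅ 0 (by simp)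
    simp only [Finset.card_empty] at this
    push_cast at this
    linarith
  apply hW
  refine ⟨x, by rw [g1]; exact ⟨x, by simp⟩, by rw [g1]; linarith, ?_⟩
  rw [g1]
  intro v2 hv2
  have h3' := H3_union h3 {x, y}
  have nd' := nd_union nd {x, y}
  by_cases hc2 : 2 ≤ (nw G (S ∪ {x, y}) v2).card
  · have := reply2 ht h3' nd' hc2
    linarith
  have hc1 : (nw G (S ∪ {x, y}) v2).card = 1 := by
    have := Finset.card_pos.2 hv2; omega
  obtain ⟨u, hu⟩ := Finset.card_eq_one.1 hc1
  have hum : u ∈ nw G (S ∪ {x, y}) v2 := by rw [hu]; simp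
  rw [hu]
  obtain ⟨huS, huv⟩ := mem_nw.1 hum
  have hu0 := (not_mem2.1 huS).1
  have hsame : wn G (S ∪ {x, y}) u = wn G S u := wn_same (hout u huS)
  by_cases hd : (wn G (S ∪ {x, y}) u).card = 0
  · have hs := single0 ht huS hd
    by_cases hm : mk G (S ∪ {x, y}) u
    · have := hb_mk0 hm hd
      linarith
    have hum' : ¬ mk G S u := fun h => hm (mk_mono huS h)
    rw [hb_nmk hm] at hs
    have hd0 : (wn G S u).card = 0 := by rw [← hsame]; exact hd
    -- a blue neighbour
    obtain ⟨r, hr⟩ := hisol u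
    have hrS : r ∈ S := by
      by_contra hrS
      have := wn_pos hrS hr
      omega
    have hr1 := wn_pos huS hr.symm
    have hr2 : (wn G (S ∪ {x, y}) r).card ≠ 1 := fun h =>
      hm ⟨r, Finset.mem_union_left _ hrS, hr.symm, h⟩
    have hr3 := h3.2 r hrS
    have hr4 := wn_card_le (G := G) S {x, y} r
    have hr5 : (wn G S r).card ≠ 3 := fun h => hW (N1a ht h3 nd hrS h hu0 hr.symm hd0)
    have hwr : wn G (S ∪ {x, y}) r = wn G S r := by
      apply Finset.eq_of_subset_of_card_le
      · rw [wn_union]; exact Finset.sdiff_subset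
      · omega
    obtain ⟨q, hq, hqu⟩ := Finset.exists_mem_ne (by omega : 1 < (wn G (S ∪ {x, y}) r).card) u
    obtain ⟨hqS, hqr⟩ := mem_wn.1 hq
    have hq0 := (not_mem2.1 hqS).1
    have hwr2 : wn G S r = {u, q} :=
      wn_sub_of (by omega) hqu.symm hu0 hq0 hr.symm hqr.symm
    have hqsame : wn G (S ∪ {x, y}) q = wn G S q := wn_same (hout q hqS)
    have hqu' : q ∉ (S ∪ {x, y}) ∪ {u} := by
      rw [Finset.mem_union, not_or]; exact ⟨hqS, by simpa using hqu⟩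
    have hnp : 1 ≤ np G (S ∪ {x, y}) {u} q := by
      refine np_pos (r := r) (Finset.mem_union_left _ hrS) hqr.symm (by omega) ?_
      refine wd_pend hqu' hqr.symm fun t h1 h2 => ?_
      have : t ∈ wn G S r := by rw [← hwr]; exact mem_wn.2 ⟨h1, h2⟩
      rw [hwr2] at this
      simpa using this
    have hnp' : (1 : ℤ) ≤ np G (S ∪ {x, y}) {u} q := by exact_mod_cast hnp
    have hnadj : ∀ t, t ∉ (S ∪ {x, y}) ∪ {u} → ∀ a ∈ ({u} : Finset V), ¬ G.Adj t a := by
      intro t htt a ha hta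
      rw [Finset.mem_singleton] at ha; subst ha
      have := wn_pos (fun h => htt (Finset.mem_union_left _ h)) hta
      omega
    have hrep : 2 ≤ dl G (S ∪ {x, y}) {u} q →
        17 ≤ Ph G (S ∪ {x, y}) - Ph G (S ∪ {x, y} ∪ {u}) := by
      intro hdl
      have := gain_iso ht (S := S ∪ {x, y}) (A := {u})
        (by rw [Finset.disjoint_singleton_left]; exact huS) hnadj ∅ (by simp) {q} 2 (by
        intro t htt
        rw [Finset.mem_singleton] at htt; subst htt; exact ⟨hqu', hdl⟩)
      rw [Finset.sum_singleton, Finset.card_singleton, Finset.card_empty] at this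
      have := hb_nonneg (G := G) (S ∪ {x, y}) u
      push_cast at *
      linarith
    by_cases hqd : (wn G (S ∪ {x, y}) q).card = 0
    · by_cases hqm : mk G (S ∪ {x, y}) q
      · by_cases hqm0 : mk G S q
        · exact absurd (N3 ht h3 nd hrS hqu (by rw [hwr2, Finset.pair_comm])
            (by rw [← hqsame]; exact hqd) hd0 hqm0) hW
        · have hdl := dl_g1_iso ht hqS (by rw [← hqsame]; exact hqd) hqm0
            (np_new (hout q hqS) hqm0 hqm)
          have := g3 {q} 2 (by
            intro t htt
            rw [Finset.mem_singleton] at htt; subst htt; exact ⟨hqS, hdl⟩)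
          rw [Finset.card_singleton] at this
          push_cast at this
          linarith
      · have := hrep (dl_g1_iso ht hqu' hqd hqm hnp)
        linarith
    · have := hrep (by
        have h1 := dl4 (G := G) (S := S ∪ {x, y}) (A := {u}) (q := q) (by
          rw [wn_same (hnadj q hqu')]; omega)
        have := hb_nonneg (G := G) (S ∪ {x, y}) q
        linarith)
      linarith
  · have hd1 : (wn G (S ∪ {x, y}) u).card = 1 := by have := nd' u huS; omega
    have hvS : v2 ∈ S ∪ {x, y} := by
      by_contra hvS
      have hvm : v2 ∈ nw G (S ∪ {x, y}) v2 := mem_nw.2 ⟨hvS, Or.inl rfl⟩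
      rw [hu, Finset.mem_singleton] at hvm
      subst hvm
      obtain ⟨t, htt⟩ := Finset.card_pos.1 (by omega : 0 < (wn G (S ∪ {x, y}) v2).card)
      have h2 : t ∈ nw G (S ∪ {x, y}) v2 := mem_nw.2 ⟨(mem_wn.1 htt).1, Or.inr (mem_wn.1 htt).2⟩
      rw [hu, Finset.mem_singleton] at h2
      subst h2
      exact wn_self_notin htt
    rw [nw_blue hvS] at hu
    have hm : mk G (S ∪ {x, y}) u := by
      refine ⟨v2, hvS, ?_, by rw [hu]; simp⟩
      rcases huv with rfl | huv
      · exact absurd hvS huS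
      · exact huv.symm
    have hs := single1 ht huS hd1
    rw [hb_mk1 hm hd1] at hs
    by_cases hm0 : mk G S u
    · exact absurd (N2 ht h3 nd hu0 (by rw [← hsame]; exact hd1) hm0) hW
    · have := g3 {u} 3 (by
        intro t htt
        rw [Finset.mem_singleton] at htt; subst htt
        exact ⟨huS, dl_new1 (hout t huS) hm0 hm hd1.ge⟩)
      rw [Finset.card_singleton] at this
      push_cast at this
      linarith

lemma N5 (ht : TR G) {S : Finset V} (h3 : H3 G S) (nd : ∀ v, v ∉ S → (wn G S v).card = 0)
    {v : V} (hv : v ∈ S) (hv2 : 2 ≤ (wn G S v).card) : Win G S := by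
  by_contra hW
  have nd1 : ∀ v, v ∉ S → (wn G S v).card ≤ 1 := fun v h => by rw [nd v h]; omega
  have hno3 : ∀ r, r ∈ S → (wn G S r).card ≠ 3 := by
    intro r hr h
    obtain ⟨a, ha⟩ := Finset.card_pos.1 (by omega : 0 < (wn G S r).card)
    rw [mem_wn] at ha
    exact hW (N1a ht h3 nd1 hr h ha.1 ha.2.symm (nd a ha.1))
  have hv2' : (wn G S v).card = 2 := by
    have := h3.2 v hv
    have := hno3 v hv
    omega
  obtain ⟨x, y, hxy, hw⟩ := Finset.card_eq_two.1 hv2'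
  have hxm : x ∈ wn G S v := by rw [hw]; simp
  have hym : y ∈ wn G S v := by rw [hw]; simp
  rw [mem_wn] at hxm hym
  have hx0 := nd x hxm.1
  have hy0 := nd y hym.1
  have ix := hb_nonneg (G := G) S x
  have iy := hb_nonneg (G := G) S y
  have hmx : ¬ mk G S x := fun h => hW (N3 ht h3 nd1 hv hxy hw hx0 hy0 h)
  have hgain := I2_gain ht hv hxy hw hx0 hy0
  have g39 : 39 ≤ Ph G S - Ph G (S ∪ {x, y}) := by
    obtain ⟨r, hrv, hxr⟩ := deg2 ht hxm.2.symm
    have hrS : r ∈ S := by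
      by_contra hrS
      have := wn_pos hrS hxr.symm
      omega
    have hr1 := wn_pos hxm.1 hxr
    have hr2 : (wn G S r).card ≠ 1 := fun h => hmx ⟨r, hrS, hxr, h⟩
    have hr3 := h3.2 r hrS
    have hr4 := hno3 r hrS
    obtain ⟨q, hq, hqx⟩ := Finset.exists_mem_ne (by omega : 1 < (wn G S r).card) x
    obtain ⟨hq0, hqr⟩ := mem_wn.1 hq
    have hwr : wn G S r = {x, q} := wn_sub_of (by omega) hqx.symm hxm.1 hq0 hxr hqr.symm
    by_cases hqy : q = y
    · subst hqy
      have := hgain {r} (by simpa using hrv.symm) (by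
        intro t htt
        rw [Finset.mem_singleton] at htt; subst htt; exact ⟨hrS, hwr⟩) ∅ 0 (by simp)
      simp only [Finset.card_singleton, Finset.card_empty] at this
      push_cast at this
      linarith
    · have hqS : q ∉ S ∪ {x, y} := not_mem2.2 ⟨hq0, hqx, hqy⟩
      have hmq : ¬ mk G S q := fun h =>
        hW (N3 ht h3 nd1 hrS hqx (by rw [hwr, Finset.pair_comm]) (nd q hq0) hx0 h)
      have hdl := dl_g1_iso ht (A := {x, y}) hqS (nd q hq0) hmq
        (np_pos (r := r) hrS hqr.symm (by omega) (wd_pend hqS hqr.symm fun t h1 h2 => by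
          have : t ∈ wn G S r := mem_wn.2 ⟨h1, h2⟩
          rw [hwr] at this
          simp only [Finset.mem_insert, Finset.mem_singleton] at this ⊢
          tauto))
      have := hgain ∅ (by simp) (by simp) {q} 2 (by
        intro t htt
        rw [Finset.mem_singleton] at htt; subst htt; exact ⟨hqS, hdl⟩)
      simp only [Finset.card_singleton, Finset.card_empty] at this
      push_cast at this
      linarith
  apply hW
  have hnw : nw G S v = {x, y} := by rw [nw_blue hv, hw]
  refine ⟨v, by rw [hnw]; exact ⟨x, by simp⟩, by rw [hnw]; linarith, ?_⟩
  rw [hnw]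
  intro v2 hv2
  rcases S_lemma ht (H3_union h3 {x, y}) hv2 with h | ⟨u, hu, huS, hm, h | h⟩
  · linarith
  all_goals
    have h1 := wn_card_le (G := G) S {x, y} u
    have h2 := nd u (not_mem2.1 huS).1
    omega

lemma fin27 (ht : TR G) {S : Finset V} (hisol : ∀ v : V, ∃ u : V, G.Adj u v)
    (nd : ∀ v, v ∉ S → (wn G S v).card = 0)
    (nb : ∀ v, v ∈ S → (wn G S v).card ≤ 1) {v : V} (hv : (nw G S v).Nonempty) :
    27 ≤ Ph G S - Ph G (S ∪ nw G S v) := by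
  have h1 : ∃ u, nw G S v = {u} := by
    by_cases hvS : v ∈ S
    · rw [nw_blue hvS] at hv ⊢
      apply Finset.card_eq_one.1
      have := nb v hvS
      have := Finset.card_pos.2 hv
      omega
    · refine ⟨v, ?_⟩
      rw [nw_white hvS, Finset.card_eq_zero.1 (nd v hvS)]
      rfl
  obtain ⟨u, hu⟩ := h1
  have hum : u ∈ nw G S v := by rw [hu]; simp
  have huS := (mem_nw.1 hum).1
  rw [hu]
  have hs := single0 ht huS (nd u huS)
  have hfn : fn G S u := by
    intro r hr
    have h1 := wn_pos huS hr
    have hrS : r ∈ S := by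
      by_contra hrS
      have := nd r hrS
      omega
    have := nb r hrS
    omega
  obtain ⟨r, hr⟩ := hisol u
  have hmk : mk G S u := by
    refine ⟨r, ?_, hr.symm, hfn r hr.symm⟩
    by_contra hrS
    have := nd r hrS
    have := wn_pos huS hr.symm
    omega
  have : hb G S u = 12 := by
    unfold hb
    rw [if_pos hmk, if_pos (nd u huS), if_pos hfn]
  linarith

lemma N6 (ht : TR G) {S : Finset V} (hisol : ∀ v : V, ∃ u : V, G.Adj u v)
    (nd : ∀ v, v ∉ S → (wn G S v).card = 0)
    (nb : ∀ v, v ∈ S → (wn G S v).card ≤ 1) {u : V} (hu : u ∉ S) : Win G S := by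
  have hne : (nw G S u).Nonempty := ⟨u, mem_nw.2 ⟨hu, Or.inl rfl⟩⟩
  have h1 := fin27 ht hisol nd nb hne
  refine ⟨u, hne, h1, fun v2 hv2 => ?_⟩
  have := fin27 ht hisol (S := S ∪ nw G S u) (by
    intro v hv
    have h1 := wn_card_le (G := G) S (nw G S u) v
    have h2 := nd v (fun h => hv (Finset.mem_union_left _ h))
    omega) (by
    intro v hv
    have h1 := wn_card_le (G := G) S (nw G S u) v
    by_cases hvS : v ∈ S
    · have := nb v hvS; omega
    · have := nd v hvS; omega) hv2
  linarith

/-- Dominator always has a good move in phase 3 -/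
lemma win_all (ht : TR G) (hisol : ∀ v : V, ∃ u : V, G.Adj u v) {S : Finset V} (h3 : H3 G S)
    {u : V} (hu : u ∉ S) : Win G S := by
  by_cases h2 : ∃ y, y ∉ S ∧ (wn G S y).card = 2
  · obtain ⟨y, hy, hc⟩ := h2
    exact win_deg2 ht h3 hy hc
  have nd : ∀ v, v ∉ S → (wn G S v).card ≤ 1 := by
    intro v hv
    have := h3.1 v hv
    by_contra hcon
    exact h2 ⟨v, hv, by omega⟩
  by_cases h1 : ∃ x, x ∉ S ∧ (wn G S x).card ≠ 0
  · obtain ⟨x, hx, hc⟩ := h1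
    obtain ⟨y, hy⟩ := Finset.card_pos.1 (by omega : 0 < (wn G S x).card)
    rw [mem_wn] at hy
    exact N4 ht h3 nd hisol hx hy.1 hy.2
  push Not at h1
  by_cases hb2 : ∃ v, v ∈ S ∧ 2 ≤ (wn G S v).card
  · obtain ⟨v, hv, hc⟩ := hb2
    exact N5 ht h3 h1 hv hc
  push Not at hb2
  exact N6 ht hisol h1 (fun v hv => by have := hb2 v hv; omega) hu

noncomputable def fF (G : SimpleGraph V) (S : Finset V) (v : V) : ℤ :=
  if v ∈ S then (if 1 ≤ (wn G S v).card then 7 else 0) else 15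

noncomputable def FF (G : SimpleGraph V) (S : Finset V) : ℤ := ∑ v, fF G S v

lemma fF_nonneg (S : Finset V) (v : V) : 0 ≤ fF G S v := by
  unfold fF; split_ifs <;> norm_num

lemma FF_nonneg (S : Finset V) : 0 ≤ FF G S := Finset.sum_nonneg fun v _ => fF_nonneg S v

lemma fF_mono (S A : Finset V) (v : V) : fF G (S ∪ A) v ≤ fF G S v := by
  have := wn_card_le (G := G) S A v
  unfold fF
  by_cases h : v ∈ S
  · rw [if_pos h, if_pos (Finset.mem_union_left _ h)]
    split_ifs <;> omega
  · rw [if_neg h]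
    split_ifs <;> norm_num

lemma wn_nw_zero (S : Finset V) (v : V) : (wn G (S ∪ nw G S v) v).card = 0 := by
  apply wd0_of
  intro q h1 h2
  exact mem_nw.2 ⟨h1, Or.inr h2⟩

lemma FF_gain {S : Finset V} {v : V} (hv : (nw G S v).Nonempty) :
    8 * ((nw G S v).card : ℤ) + 7 ≤ FF G S - FF G (S ∪ nw G S v) := by
  have e : FF G S - FF G (S ∪ nw G S v) = ∑ t, (fF G S t - fF G (S ∪ nw G S v) t) := by
    unfold FF; rw [Finset.sum_sub_distrib]
  have h1 : ∀ t, (if t ∈ nw G S v then (8 : ℤ) else 0) + (if t = v then 7 else 0) ≤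
      fF G S t - fF G (S ∪ nw G S v) t := by
    intro t
    have hm := fF_mono (G := G) S (nw G S v) t
    have h0 := wn_nw_zero (G := G) S v
    by_cases htv : t = v
    · subst htv
      have hz : fF G (S ∪ nw G S t) t = 0 := by
        unfold fF
        rw [h0, if_pos, if_neg (by norm_num)]
        by_cases h : t ∈ S
        · exact Finset.mem_union_left _ h
        · exact Finset.mem_union_right _ (mem_nw.2 ⟨h, Or.inl rfl⟩)
      rw [hz, if_pos rfl]
      by_cases h : t ∈ S
      · have h4 : 1 ≤ (wn G S t).card := by
          rw [← nw_blue h]; exact Finset.card_pos.2 hv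
        rw [if_neg (fun hh => (mem_nw.1 hh).1 h)]
        unfold fF; rw [if_pos h, if_pos h4]; norm_num
      · unfold fF; rw [if_neg h]; split_ifs <;> norm_num
    · rw [if_neg htv]
      split_ifs with h
      · have h5 := (mem_nw.1 h).1
        have h6 : fF G (S ∪ nw G S v) t ≤ 7 := by
          unfold fF; rw [if_pos (Finset.mem_union_right _ h)]; split_ifs <;> norm_num
        have h7 : fF G S t = 15 := by unfold fF; rw [if_neg h5]
        linarith
      · linarith
  have h2 := Finset.sum_le_sum (s := Finset.univ) (fun t _ => h1 t)
  rw [e]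
  refine le_trans (le_of_eq ?_) h2
  rw [Finset.sum_add_distrib, Finset.sum_ite_eq' Finset.univ v (fun _ => (7 : ℤ)),
    if_pos (Finset.mem_univ v), ← Finset.sum_filter, Finset.sum_const, nsmul_eq_mul,
    Finset.filter_mem_eq_inter, Finset.univ_inter]
  ring

lemma Ph_le_FF (ht : TR G) (hisol : ∀ v : V, ∃ u : V, G.Adj u v) (S : Finset V) :
    Ph G S ≤ FF G S := by
  set P := S.filter (fun r => (wn G S r).card = 1) with hP
  have h1 : ∀ v, ph G S v + (if v ∈ P then (7 : ℤ) else 0) ≤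
      fF G S v + (if v ∉ S then 7 * ((P.filter (fun r => G.Adj v r)).card : ℤ) else 0) := by
    intro v
    unfold ph fF
    by_cases hv : v ∈ S
    · have hvP : v ∈ P ↔ (wn G S v).card = 1 := by rw [hP, Finset.mem_filter]; tauto
      simp only [hv, hvP, if_true, not_true, if_false]
      split_ifs <;> omega
    · have hvP : v ∉ P := fun h => hv (Finset.mem_filter.1 h).1
      simp only [hv, hvP, if_false, not_false_iff, if_true, add_zero]
      by_cases hm : mk G S v
      · obtain ⟨r, hr, har, hc⟩ := hm
        have hrm : r ∈ P.filter (fun r => G.Adj v r) := by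
          rw [Finset.mem_filter, hP, Finset.mem_filter]; exact ⟨⟨hr, hc⟩, har⟩
        have hp1 : (1 : ℤ) ≤ ((P.filter (fun r => G.Adj v r)).card : ℤ) := by
          exact_mod_cast Finset.card_pos.2 ⟨r, hrm⟩
        by_cases hf : fn G S v ∧ (wn G S v).card = 0
        · obtain ⟨w, hwr, hvw⟩ := deg2 ht har
          have hwm : w ∈ P.filter (fun r => G.Adj v r) := by
            rw [Finset.mem_filter, hP, Finset.mem_filter]
            refine ⟨⟨?_, hf.1 w hvw⟩, hvw⟩
            by_contra hwS
            have := wn_pos hwS hvw.symm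
            omega
          have hp2 : (2 : ℤ) ≤ ((P.filter (fun r => G.Adj v r)).card : ℤ) := by
            have : 1 < (P.filter (fun r => G.Adj v r)).card :=
              Finset.one_lt_card.2 ⟨w, hwm, r, hrm, hwr⟩
            exact_mod_cast this
          have := hb_le (G := G) S v
          linarith
        · have : hb G S v ≤ 5 := by
            by_cases hf1 : fn G S v
            · have := hb_le4 (G := G) (S := S) (q := v) (by
                have : (wn G S v).card ≠ 0 := fun h => hf ⟨hf1, h⟩
                omega)
              linarith
            · exact hb_le5 hf1
          linarith
      · rw [hb_nmk hm]
        have hp0 : (0 : ℤ) ≤ ((P.filter (fun r => G.Adj v r)).card : ℤ) := by positivity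
        linarith
  have h2 := Finset.sum_le_sum (s := Finset.univ) (fun t _ => h1 t)
  rw [Finset.sum_add_distrib, Finset.sum_add_distrib] at h2
  have e1 : ∑ v, (if v ∈ P then (7 : ℤ) else 0) = 7 * P.card := by
    rw [← Finset.sum_filter, Finset.sum_const, nsmul_eq_mul, Finset.filter_mem_eq_inter,
      Finset.univ_inter]
    ring
  have e2 : ∑ v, (if v ∉ S then 7 * ((P.filter (fun r => G.Adj v r)).card : ℤ) else 0)
      = 7 * P.card := by
    rw [← Finset.sum_filter, ← Finset.mul_sum]
    congr 1
    have : ∀ v, ((P.filter (fun r => G.Adj v r)).card : ℤ) = ∑ r ∈ P, if G.Adj v r then 1 else 0 := by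
      intro v; rw [Finset.sum_boole]
    simp only [this]
    rw [Finset.sum_comm]
    have : ∀ r ∈ P, (∑ v ∈ Finset.univ.filter (fun v => v ∉ S), if G.Adj v r then (1 : ℤ) else 0)
        = 1 := by
      intro r hr
      rw [hP, Finset.mem_filter] at hr
      rw [Finset.sum_boole, Finset.filter_filter]
      have : (Finset.univ.filter (fun v => v ∉ S ∧ G.Adj v r)) = wn G S r := by
        ext t; rw [mem_wn]; simp [G.adj_comm]
      rw [this, hr.2]; norm_num
    rw [Finset.sum_congr rfl this]
    simp
  rw [e1, e2] at h2
  unfold Ph FF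
  linarith

lemma legal_iff {S : Finset V} {v : V} :
    v ∈ (Finset.univ.filter fun v => ¬ gClosedNbhd G v ⊆ S) ↔ (nw G S v).Nonempty := by
  unfold nw
  rw [Finset.mem_filter, Finset.sdiff_nonempty]
  simp

lemma union_nw (S : Finset V) (v : V) : S ∪ gClosedNbhd G v = S ∪ nw G S v := by
  unfold nw
  exact (Finset.union_sdiff_self_eq_union).symm

lemma val_step {S : Finset V} {c : ℤ} {v : V} (hv : (nw G S v).Nonempty) (h27 : 27 ≤ c)
    (h : ∀ v2, (nw G (S ∪ nw G S v) v2).Nonempty →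
      27 * (gDomGameVal G true (S ∪ nw G S v ∪ nw G (S ∪ nw G S v) v2) : ℤ) + 54 ≤ c) :
    27 * (gDomGameVal G true S : ℤ) ≤ c := by
  have hv' := legal_iff.2 hv
  have h1 : gDomGameVal G true S ≤ 1 + gDomGameVal G false (S ∪ nw G S v) := by
    rw [gDomGameVal, dif_pos ⟨v, hv'⟩, if_pos rfl, ← union_nw]
    apply Nat.add_le_add_left
    exact Finset.inf'_le (s := (Finset.univ.filter fun v => ¬ gClosedNbhd G v ⊆ S).attach)
      (fun v => gDomGameVal G false (S ∪ gClosedNbhd G v.1)) (Finset.mem_attach _ ⟨v, hv'⟩)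
  set S1 := S ∪ nw G S v with hS1
  by_cases hne : (Finset.univ.filter fun v => ¬ gClosedNbhd G v ⊆ S1).Nonempty
  · have h2 : ∃ v2, (nw G S1 v2).Nonempty ∧ gDomGameVal G false S1 ≤
        1 + gDomGameVal G true (S1 ∪ nw G S1 v2) := by
      obtain ⟨b, _, hb2⟩ := Finset.exists_mem_eq_sup' (Finset.attach_nonempty_iff.mpr hne)
        (fun v => gDomGameVal G true (S1 ∪ gClosedNbhd G v.1))
      refine ⟨b.1, legal_iff.1 b.2, ?_⟩
      rw [gDomGameVal, dif_pos hne, if_neg (by simp), hb2, union_nw]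
    obtain ⟨v2, h3, h4⟩ := h2
    have := h v2 h3
    have h5 : gDomGameVal G true S ≤ 2 + gDomGameVal G true (S1 ∪ nw G S1 v2) := by omega
    have h6 : (gDomGameVal G true S : ℤ) ≤ 2 + gDomGameVal G true (S1 ∪ nw G S1 v2) := by
      exact_mod_cast h5
    linarith
  · have h2 : gDomGameVal G false S1 = 0 := by
      rw [gDomGameVal, dif_neg hne]
    rw [h2] at h1
    have h6 : (gDomGameVal G true S : ℤ) ≤ 1 := by exact_mod_cast h1
    linarith

lemma val_zero {S : Finset V} (h : ∀ u, u ∈ S) : gDomGameVal G true S = 0 := by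
  rw [gDomGameVal, dif_neg]
  rintro ⟨v, hv⟩
  rw [legal_iff] at hv
  obtain ⟨t, htt⟩ := hv
  exact (mem_nw.1 htt).1 (h t)

lemma compl_nw_lt {S A : Finset V} {v : V} (hv : (nw G S v).Nonempty) :
    ((S ∪ nw G S v ∪ A)ᶜ).card < (Sᶜ).card := by
  obtain ⟨t, htt⟩ := hv
  apply Finset.card_lt_card
  rw [Finset.ssubset_iff_of_subset]
  · refine ⟨t, by simpa using (mem_nw.1 htt).1, by simp [htt]⟩
  · intro s hs
    simp only [Finset.mem_compl, Finset.mem_union, not_or] at hs ⊢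
    exact hs.1.1

lemma val_main (ht : TR G) (hisol : ∀ v : V, ∃ u : V, G.Adj u v) :
    ∀ n (S : Finset V), (Sᶜ).card = n →
      27 * (gDomGameVal G true S : ℤ) ≤ FF G S ∧
      (H3 G S → 27 * (gDomGameVal G true S : ℤ) ≤ Ph G S) := by
  intro n
  induction n using Nat.strong_induction_on with
  | _ n ih =>
    intro S hS
    have hH : H3 G S → 27 * (gDomGameVal G true S : ℤ) ≤ Ph G S := by
      intro h3
      by_cases hall : ∀ u, u ∈ S
      · rw [val_zero hall]
        have := Ph_nonneg (G := G) S
        push_cast; linarith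
      · push Not at hall
        obtain ⟨u, hu⟩ := hall
        obtain ⟨v, hv, h27, h54⟩ := win_all ht hisol h3 hu
        refine val_step hv ?_ ?_
        · have := Ph_nonneg (G := G) (S ∪ nw G S v)
          linarith
        · intro v2 hv2
          have := (ih _ (by rw [← hS]; exact compl_nw_lt hv) _ rfl).2
            (H3_union (H3_union h3 (nw G S v)) (nw G (S ∪ nw G S v) v2))
          have := h54 v2 hv2
          linarith
    refine ⟨?_, hH⟩
    by_cases h3 : H3 G S
    · exact (hH h3).trans (Ph_le_FF ht hisol S)
    · have h4 : ∃ v, 4 ≤ (nw G S v).card := by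
        unfold H3 at h3
        rw [not_and_or] at h3
        push Not at h3
        rcases h3 with ⟨v, hv, hc⟩ | ⟨v, hv, hc⟩
        · refine ⟨v, ?_⟩
          rw [nw_white hv, Finset.card_insert_of_notMem wn_self_notin]
          omega
        · refine ⟨v, ?_⟩
          rw [nw_blue hv]; omega
      obtain ⟨v, hv4⟩ := h4
      have hv : (nw G S v).Nonempty := Finset.card_pos.1 (by omega)
      have hg := FF_gain hv
      have hv4' : (4 : ℤ) ≤ (nw G S v).card := by exact_mod_cast hv4
      refine val_step hv ?_ ?_
      · have := FF_nonneg (G := G) (S ∪ nw G S v)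
        linarith
      · intro v2 hv2
        have hg2 := FF_gain hv2
        have : (1 : ℤ) ≤ (nw G (S ∪ nw G S v) v2).card := by
          exact_mod_cast Finset.card_pos.2 hv2
        have h9 := (ih _ (by rw [← hS]; exact compl_nw_lt (A := nw G (S ∪ nw G S v) v2) hv) _ rfl).1
        linarith


end helpers

/-- if `G` is a graph on `n` vertices with no isolated vertices in which
every edge belongs to a triangle, then `γ_g(G) ≤ (5/9) n`. -/
theorem stmt_10 (V : Type) [Fintype V] (G : SimpleGraph V)
    (hisol : ∀ v : V, ∃ u : V, G.Adj u v)
    (htri : ∀ u v : V, G.Adj u v → ∃ w : V, G.Adj u w ∧ G.Adj v w) :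
    (gGammaGame G : ℝ) ≤ 5 / 9 * Fintype.card V := by
  have h := (val_main (G := G) htri hisol _ ∅ rfl).1
  have h0 : FF G (∅ : Finset V) = 15 * (Fintype.card V : ℤ) := by
    unfold FF fF
    simp [mul_comm]
  rw [h0] at h
  have h' : 27 * (gGammaGame G : ℝ) ≤ 15 * (Fintype.card V : ℝ) := by
    unfold gGammaGame
    exact_mod_cast h
  linarith
end

section
/- The 3-uniform hypergraph H with vertex set {1,2,…,9} and edge set {{1,2,3},{4,5,6},{1,4,7},{2,5,8},{3,6,9}} satisfies γ_g(H) = γ_g'(H) = 4 = (4/9)·|V(H)|. -/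
attribute [local instance 10] Classical.propDecidable

variable {V : Type}

/-- The closed neighborhood of a vertex in a hypergraph given by its edge set. -/
noncomputable def closedNbhd [Fintype V] (H : Finset (Finset V)) (v : V) : Finset V :=
  Finset.univ.filter (fun u => u = v ∨ ∃ e ∈ H, u ∈ e ∧ v ∈ e)

/-- Value of the domination game on a hypergraph: `S` is the set of vertices already
dominated, `dom = true` iff Dominator is the next player to move.  A legal move is a vertex
dominating at least one new vertex; Dominator minimizes, Staller maximizes the total
number of moves, and both play optimally. -/
noncomputable def domGameVal [Fintype V] (H : Finset (Finset V)) (dom : Bool) (S : Finset V) :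
    ℕ :=
  if h : (Finset.univ.filter fun v => ¬ closedNbhd H v ⊆ S).Nonempty then
    1 + (if dom then
        (Finset.univ.filter fun v => ¬ closedNbhd H v ⊆ S).attach.inf'
          (Finset.attach_nonempty_iff.mpr h)
          (fun v => domGameVal H false (S ∪ closedNbhd H v.1))
      else
        (Finset.univ.filter fun v => ¬ closedNbhd H v ⊆ S).attach.sup'
          (Finset.attach_nonempty_iff.mpr h)
          (fun v => domGameVal H true (S ∪ closedNbhd H v.1)))
  else 0
termination_by (Finset.univ \ S).card
decreasing_by
  · exact card_sdiff_union_lt (Finset.mem_filter.mp v.2).2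
  · exact card_sdiff_union_lt (Finset.mem_filter.mp v.2).2

/-- The game domination number (Dominator starts). -/
noncomputable def gammaGame [Fintype V] (H : Finset (Finset V)) : ℕ :=
  domGameVal H true ∅

/-- The Staller-start game domination number. -/
noncomputable def gammaGame' [Fintype V] (H : Finset (Finset V)) : ℕ :=
  domGameVal H false ∅

/-- The 3-uniform hypergraph on vertices `1,…,9` (encoded as `Fin 9`, with vertex `i`
encoded as `i - 1`) with edges `{1,2,3}, {4,5,6}, {1,4,7}, {2,5,8}, {3,6,9}`. -/
noncomputable def gridHypergraph : Finset (Finset (Fin 9)) :=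
  {({0, 1, 2} : Finset (Fin 9)), {3, 4, 5}, {0, 3, 6}, {1, 4, 7}, {2, 5, 8}}

def gNb (v : Fin 9) : ℕ :=
  [0x4f, 0x97, 0x127, 0x79, 0xba, 0x13c, 0x49, 0x92, 0x124].getD v.1 0

def gSet (m : ℕ) : Finset (Fin 9) := Finset.univ.filter (fun u => m.testBit u.1 = true)

def gIll (m : ℕ) (v : Fin 9) : Bool := Nat.beq (Nat.land (gNb v) m) (gNb v)

def gLe : ℕ → Bool → ℕ → Bool
  | 0, _, m => (List.finRange 9).all (fun v => gIll m v)
  | k+1, true, m => (List.finRange 9).all (fun v => gIll m v) ||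
      (List.finRange 9).any (fun v => !(gIll m v) && gLe k false (Nat.lor m (gNb v)))
  | k+1, false, m => (List.finRange 9).all (fun v => gIll m v || gLe k true (Nat.lor m (gNb v)))

lemma gNb_lt (v : Fin 9) : gNb v < 2 ^ 9 := by revert v; decide

lemma closedNbhd_grid (v : Fin 9) : closedNbhd gridHypergraph v = gSet (gNb v) := by
  have key : ∀ u v : Fin 9, (u = v ∨ ∃ e ∈ ({({0, 1, 2} : Finset (Fin 9)), {3, 4, 5}, {0, 3, 6},
      {1, 4, 7}, {2, 5, 8}} : Finset (Finset (Fin 9))), u ∈ e ∧ v ∈ e) ↔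
      (gNb v).testBit u.1 = true := by decide +kernel
  ext u
  simp only [closedNbhd, gSet, Finset.mem_filter, Finset.mem_univ, true_and]
  exact key u v

lemma gIll_iff (m : ℕ) (v : Fin 9) :
    gIll m v = true ↔ closedNbhd gridHypergraph v ⊆ gSet m := by
  rw [closedNbhd_grid]
  have h1 : gIll m v = true ↔ gNb v &&& m = gNb v := by simp only [gIll, Nat.beq_eq]; rfl
  rw [h1]
  constructor
  · intro h u hu
    simp only [gSet, Finset.mem_filter, Finset.mem_univ, true_and] at hu ⊢
    rw [← h, Nat.testBit_and] at hu
    simp at hu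
    exact hu.2
  · intro h
    apply Nat.eq_of_testBit_eq
    intro i
    rw [Nat.testBit_and]
    by_cases hi : i < 9
    · have := @h ⟨i, hi⟩
      simp only [gSet, Finset.mem_filter, Finset.mem_univ, true_and] at this
      cases hb : (gNb v).testBit i
      · simp
      · simp [this hb]
    · have : (gNb v).testBit i = false := Nat.testBit_lt_two_pow
        (lt_of_lt_of_le (gNb_lt v) (Nat.pow_le_pow_right (by norm_num) (by omega)))
      simp [this]

lemma gSet_union (m : ℕ) (v : Fin 9) :
    gSet m ∪ closedNbhd gridHypergraph v = gSet (Nat.lor m (gNb v)) := by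
  rw [closedNbhd_grid]
  ext u
  simp [gSet]

lemma gLe_iff (k : ℕ) : ∀ (b : Bool) (m : ℕ),
    gLe k b m = true ↔ domGameVal gridHypergraph b (gSet m) ≤ k := by
  have hall : ∀ m, (∀ v, gIll m v = true) ↔
      ¬ ∃ v, ¬ closedNbhd gridHypergraph v ⊆ gSet m := by
    intro m
    simp [gIll_iff]
  have hne : ∀ m (inst : DecidablePred fun v => ¬ closedNbhd gridHypergraph v ⊆ gSet m),
      (@Finset.filter _ (fun v => ¬ closedNbhd gridHypergraph v ⊆ gSet m) inst
        Finset.univ).Nonempty ↔ ∃ v, ¬ closedNbhd gridHypergraph v ⊆ gSet m := by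
    intro m inst
    simp [Finset.Nonempty]
  induction k with
  | zero =>
    intro b m
    rw [domGameVal]
    simp only [gLe, List.all_eq_true, List.mem_finRange, true_implies]
    rw [hall]
    split_ifs with h
    all_goals
      rw [hne m _] at h
      simp only [h]
      simp
  | succ k ih =>
    intro b m
    rw [domGameVal]
    split_ifs with h hb
    · have h' := h
      rw [hne m _] at h'
      subst hb
      simp only [gLe, List.all_eq_true, List.any_eq_true, List.mem_finRange, true_implies,
        Bool.or_eq_true, Bool.and_eq_true, Bool.not_eq_true', true_and]
      rw [hall, add_comm 1, Nat.add_le_add_iff_right, Finset.inf'_le_iff]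
      simp only [h', not_true_eq_false, false_or, ih, ← gSet_union, ← Bool.not_eq_true, gIll_iff]
      constructor
      · rintro ⟨v, hv, hle⟩
        exact ⟨⟨v, by simpa using hv⟩, Finset.mem_attach _ _, by convert hle <;> rfl⟩
      · rintro ⟨⟨v, hm⟩, -, hle⟩
        exact ⟨v, by simpa using hm, by convert hle <;> rfl⟩
    · have hb' : b = false := by simpa using hb
      subst hb'
      simp only [gLe, List.all_eq_true, List.mem_finRange, true_implies, Bool.or_eq_true, ih,
        ← gSet_union, gIll_iff]
      rw [add_comm 1, Nat.add_le_add_iff_right, Finset.sup'_le_iff]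
      constructor
      · rintro hv ⟨v, hm⟩ -
        have := (hv v).resolve_left (by simpa using hm)
        convert this <;> rfl
      · intro hv v
        by_cases hl : closedNbhd gridHypergraph v ⊆ gSet m
        · exact Or.inl hl
        · right
          have := hv ⟨v, by simpa using hl⟩ (Finset.mem_attach _ _)
          convert this <;> rfl
    · rw [hne m _] at h
      have h' := (hall m).2 h
      cases b <;> simp [gLe, h']

/-- the hypergraph above satisfies
`γ_g(H) = γ_g'(H) = 4 = (4/9) |V(H)|`. -/
theorem stmt_11 :
    gammaGame gridHypergraph = 4 ∧ gammaGame' gridHypergraph = 4 ∧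
    (4 : ℝ) = 4 / 9 * Fintype.card (Fin 9) := by
  have h0 : gSet 0 = ∅ := by simp [gSet]
  have key : ∀ b, domGameVal gridHypergraph b ∅ = 4 := by
    intro b
    have h1 : gLe 4 b 0 = true := by revert b; decide +kernel
    have h2 : ¬ gLe 3 b 0 = true := by revert b; decide +kernel
    rw [gLe_iff, h0] at h1 h2
    omega
  refine ⟨key true, key false, ?_⟩
  norm_num
end
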